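/- arXiv:1703.02848 — 2 statements merged into one kernel-verified Lean document; each statement's English description precedes it below -/
import Mathlib

section
/- Let n = 77 and let x, y ∈ S_77 be the permutations given in the context, with z = (x·y)⁻¹. Then (x, y, z) is a nice triple; the cycle types of x, y, z are 11^7, 2^28 and 4^16·2^6 respectively; and the subgroup ⟨x, y⟩ of S_77 has cardinality 887040 (the order of Aut(M_22)). -/
/-- `permInd s` = (sum of the cycle type of `s`) − (number of entries of the cycle type of `s`),
i.e. `n` minus the number of cycles of `s` when fixed points are counted as cycles. -/
def permInd {n : ℕ} (s : Equiv.Perm (Fin n)) : ℕ :=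
  s.cycleType.sum - Multiset.card s.cycleType

/-- A `MulAction` is preprimitive if it is pretransitive and every block is trivial. -/
def IsPreprimitive (G : Type*) (X : Type*) [Group G] [MulAction G X] : Prop :=
  MulAction.IsPretransitive G X ∧
    ∀ B : Set X, MulAction.IsBlock G B → MulAction.IsTrivialBlock B

/-- A triple `(x, y, z)` of permutations in `S_n` is *nice*:
(i) `x * y * z = 1`; (ii) `G = ⟨x, y⟩` is neither the alternating nor the symmetric group;
(iii) `G` acts primitively on `Fin n` and is almost simple; (iv) the triple has genus 0;
(v) the triple is rigid in `G`; (vi) `x`, `y`, `z` lie in rational conjugacy classes of `G`. -/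
def IsNice {n : ℕ} (x y z : Equiv.Perm (Fin n)) : Prop :=
  x * y * z = 1 ∧
  (Subgroup.closure {x, y} ≠ alternatingGroup (Fin n) ∧
    Subgroup.closure {x, y} ≠ ⊤) ∧
  IsPreprimitive (Subgroup.closure {x, y}) (Fin n) ∧
  (∃ S : Subgroup (Subgroup.closure {x, y}), S.Normal ∧ IsSimpleGroup S ∧
    (∃ a b : S, a * b ≠ b * a) ∧
    Subgroup.centralizer (S : Set (Subgroup.closure {x, y})) = ⊥) ∧
  permInd x + permInd y + permInd z = 2 * (n - 1) ∧
  (∀ x' y' z' : Equiv.Perm (Fin n),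
    x' * y' * z' = 1 →
    Subgroup.closure {x', y'} = Subgroup.closure {x, y} →
    (∃ g ∈ Subgroup.closure {x, y}, g * x * g⁻¹ = x') →
    (∃ g ∈ Subgroup.closure {x, y}, g * y * g⁻¹ = y') →
    (∃ g ∈ Subgroup.closure {x, y}, g * z * g⁻¹ = z') →
    ∃ g ∈ Subgroup.closure {x, y},
      g * x * g⁻¹ = x' ∧ g * y * g⁻¹ = y' ∧ g * z * g⁻¹ = z') ∧
  ∀ g ∈ ({x, y, z} : Set (Equiv.Perm (Fin n))), ∀ k : ℤ,
    Int.gcd k (orderOf g) = 1 →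
    ∃ h ∈ Subgroup.closure {x, y}, h * g * h⁻¹ = g ^ k

/-- The permutation given by a list of (disjoint) cycles, each written as a list of points. -/
def permOfCycles {n : ℕ} (cs : List (List (Fin n))) : Equiv.Perm (Fin n) :=
  (cs.map List.formPerm).prod

def x : Equiv.Perm (Fin 77) := permOfCycles [
  [1, 14, 3, 53, 31, 27, 71, 62, 10, 65, 61],
  [2, 50, 46, 29, 12, 7, 56, 19, 63, 28, 25],
  [4, 36, 38, 44, 17, 13, 66, 43, 39, 9, 72],
  [5, 49, 68, 51, 58, 59, 70, 15, 11, 23, 33],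
  [6, 55, 42, 67, 32, 21, 45, 64, 48, 77, 57],
  [8, 41, 60, 20, 26, 74, 76, 24, 69, 52, 40],
  [16, 22, 54, 35, 34, 37, 18, 73, 75, 30, 47]]

def y : Equiv.Perm (Fin 77) := permOfCycles [
  [1, 54],
  [2, 59],
  [3, 48],
  [4, 20],
  [6, 32],
  [7, 29],
  [11, 38],
  [13, 43],
  [14, 51],
  [15, 19],
  [18, 37],
  [21, 57],
  [22, 46],
  [24, 73],
  [30, 44],
  [31, 40],
  [33, 45],
  [34, 52],
  [35, 71],
  [36, 64],
  [39, 75],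
  [47, 56],
  [49, 77],
  [50, 58],
  [53, 60],
  [62, 65],
  [63, 70],
  [72, 76]]

/-!
The 77 points are the hexads of the Steiner system `S(3, 6, 22)`, and `x`, `y` generate `Aut(M₂₂)`.

The order of `G = ⟨x, y⟩` comes from a chain of pointwise stabilizers. Explicit elements bound each
orbit from below. The relation between two hexads (equal, disjoint, or meeting in two points) is
invariant under `G`, so it bounds the orbits from above and also shows that only the identity fixes
the whole base.

The subgroup `S = ⟨x, y * x * y⁻¹⟩` is normal because `y` is an involution, and it is primitive. A
nontrivial normal subgroup of a primitive group is transitive, so 11 divides its order. As 121 does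
not divide `|G|`, such a subgroup contains every element of order 11. Hence `S` is simple and its
centralizer in `G` is trivial.

For rigidity one may assume `x' = x`. The 330 conjugates `r` of `y` fall into 30 orbits under
conjugation by `⟨x⟩`, and only the orbit of `y` itself satisfies `(x * r) ^ 4 = 1`.
-/

namespace HexadTriple

open MulAction Pointwise

section CycleType

theorem cycleType_permOfCycles {n : ℕ} {cs : List (List (Fin n))} (hlen : ∀ c ∈ cs, 2 ≤ c.length)
    (hnodup : cs.flatten.Nodup) :
    (permOfCycles cs).cycleType = (cs.map List.length : List ℕ) := by
  obtain ⟨hcycle, hdisjoint⟩ := List.nodup_flatten.1 hnodup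
  rw [Equiv.Perm.cycleType_eq (σ := permOfCycles cs) (cs.map List.formPerm) rfl, List.map_map]
  · refine congrArg _ (List.map_congr_left fun c hc => ?_)
    have hne : ∀ a, c ≠ [a] := by
      rintro a rfl
      simpa using hlen _ hc
    rw [Function.comp_apply, Function.comp_apply,
      List.support_formPerm_of_nodup c (hcycle c hc) hne, List.toFinset_card_of_nodup (hcycle c hc)]
  · intro s hs
    obtain ⟨c, hc, rfl⟩ := List.mem_map.1 hs
    exact List.isCycle_formPerm (hcycle c hc) (hlen c hc)
  · rw [List.pairwise_map]
    refine hdisjoint.imp_of_mem fun {a b} ha hb hab => ?_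
    exact (List.formPerm_disjoint_iff (hcycle a ha) (hcycle b hb) (hlen a ha) (hlen b hb)).2 hab

end CycleType

section StabilizerChain

variable {Γ α γ W : Type*} [Group Γ] [MulAction Γ α]

theorem card_fixingSubgroup_eq_card_orbit_mul (s : Set α) (a : α) :
    Nat.card (fixingSubgroup Γ s) =
      Nat.card (orbit (fixingSubgroup Γ s) a) * Nat.card (fixingSubgroup Γ (insert a s)) := by
  have hle : fixingSubgroup Γ (insert a s) ≤ fixingSubgroup Γ s :=
    fixingSubgroup_antitone Γ α (Set.subset_insert a s)
  have hstab : stabilizer (fixingSubgroup Γ s) a =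
      (fixingSubgroup Γ (insert a s)).subgroupOf (fixingSubgroup Γ s) := by
    ext g
    have hg := (mem_fixingSubgroup_iff Γ).1 g.2
    simpa [Subgroup.mem_subgroupOf, mem_fixingSubgroup_iff, Subgroup.smul_def] using fun _ => hg
  rw [← Nat.card_congr (orbitProdStabilizerEquivGroup (fixingSubgroup Γ s) a), Nat.card_prod, hstab,
    Nat.card_congr (Subgroup.subgroupOfEquivOfLe hle).toEquiv]

/-- The colours of the pairs `(c, p)`, for `c` in `s`, under a colouring `κ` of ordered pairs. -/
def colourVector (κ : α → α → γ) (s : List α) (p : α) : List γ :=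
  s.map (κ · p)

theorem colourVector_smul {κ : α → α → γ} (hκ : ∀ (g : Γ) a b, κ (g • a) (g • b) = κ a b)
    {s : List α} {g : Γ} (hg : g ∈ fixingSubgroup Γ {c | c ∈ s}) (p : α) :
    colourVector κ s (g • p) = colourVector κ s p := by
  refine List.map_congr_left fun c hc => ?_
  have hinvariant := hκ g c p
  rwa [(mem_fixingSubgroup_iff Γ).1 hg c hc] at hinvariant

variable [Fintype α] [DecidableEq γ]

/-- The points with the same colour vector as `a`. For an invariant `κ` they include the orbit of
`a` under the pointwise stabilizer of `s`. -/
def colourClass (κ : α → α → γ) (s : List α) (a : α) : Finset α :=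
  {p | colourVector κ s p = colourVector κ s a}

theorem orbit_fixingSubgroup_eq_colourClass {κ : α → α → γ}
    (hκ : ∀ (g : Γ) a b, κ (g • a) (g • b) = κ a b) {s : List α} {a : α}
    (hs : ∀ p ∈ colourClass κ s a, ∃ g ∈ fixingSubgroup Γ {c | c ∈ s}, g • a = p) :
    orbit (fixingSubgroup Γ {c | c ∈ s}) a = colourClass κ s a := by
  refine Set.Subset.antisymm ?_ fun p hp => ?_
  · rintro _ ⟨g, rfl⟩
    exact Finset.mem_coe.2 (Finset.mem_filter_univ _ |>.2 (colourVector_smul hκ g.2 a))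
  · obtain ⟨g, hg, rfl⟩ := hs p hp
    exact ⟨⟨g, hg⟩, rfl⟩

/-- A list of pairs (base point, transversal) certifying a chain of pointwise stabilizers that
starts at the stabilizer of `s`. Each transversal fixes the earlier points and carries the base
point onto its whole colour class, and at the end the colour vector determines the point. Group
elements are represented by codes `w : W` with action `act w`. -/
def IsStabilizerChain (κ : α → α → γ) (act : W → α → α) : List α → List (α × List W) → Prop
  | s, [] => Function.Injective (colourVector κ s)
  | s, (a, T) :: l => (∀ w ∈ T, ∀ c ∈ s, act w c = c) ∧
      (∀ p ∈ colourClass κ s a, ∃ w ∈ T, act w a = p) ∧ IsStabilizerChain κ act (a :: s) l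

instance decidableIsStabilizerChain [DecidableEq α] (κ : α → α → γ) (act : W → α → α) :
    ∀ s l, Decidable (IsStabilizerChain κ act s l)
  | s, [] => inferInstanceAs (Decidable (Function.Injective (colourVector κ s)))
  | s, (a, T) :: l =>
    have := decidableIsStabilizerChain κ act (a :: s) l
    inferInstanceAs (Decidable ((∀ w ∈ T, ∀ c ∈ s, act w c = c) ∧
      (∀ p ∈ colourClass κ s a, ∃ w ∈ T, act w a = p) ∧ IsStabilizerChain κ act (a :: s) l))

theorem IsStabilizerChain.of_append {κ : α → α → γ} {act : W → α → α} {l' : List (α × List W)} :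
    ∀ {s : List α} {l : List (α × List W)}, IsStabilizerChain κ act s (l ++ l') →
      IsStabilizerChain κ act ((l.map Prod.fst).reverseAux s) l'
  | _, [], h => h
  | s, (a, _) :: l, h => of_append (s := a :: s) (l := l) h.2.2

/-- The product of the sizes of the colour classes along a stabilizer chain, which is the order of
the stabilizer of `s`. -/
def chainOrder (κ : α → α → γ) : List α → List (α × List W) → ℕ
  | _, [] => 1
  | s, (a, _) :: l => (colourClass κ s a).card * chainOrder κ (a :: s) l

theorem IsStabilizerChain.card_fixingSubgroup [FaithfulSMul Γ α] {κ : α → α → γ}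
    (hκ : ∀ (g : Γ) a b, κ (g • a) (g • b) = κ a b) {act : W → α → α}
    (hact : ∀ w, ∃ g : Γ, ∀ a, g • a = act w a) :
    ∀ {s : List α} {l : List (α × List W)}, IsStabilizerChain κ act s l →
      Nat.card (fixingSubgroup Γ {c | c ∈ s}) = chainOrder κ s l
  | s, [], h => by
    refine Subgroup.card_eq_one.2 ((Subgroup.eq_bot_iff_forall _).2 fun g hg => ?_)
    refine FaithfulSMul.eq_of_smul_eq_smul fun p : α => ?_
    rw [one_smul]
    exact h (colourVector_smul hκ hg p)
  | s, (a, T) :: l, ⟨hfix, htrans, htail⟩ => by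
    have horbit : orbit (fixingSubgroup Γ {c | c ∈ s}) a = colourClass κ s a := by
      refine orbit_fixingSubgroup_eq_colourClass hκ fun p hp => ?_
      obtain ⟨w, hw, rfl⟩ := htrans p hp
      obtain ⟨g, hg⟩ := hact w
      refine ⟨g, (mem_fixingSubgroup_iff Γ).2 fun c hc => ?_, hg a⟩
      rw [hg, hfix w hw c hc]
    have hinsert : insert a {c | c ∈ s} = {c | c ∈ a :: s} := by
      ext c
      simp
    rw [card_fixingSubgroup_eq_card_orbit_mul _ a, horbit, hinsert,
      htail.card_fixingSubgroup hκ hact, chainOrder]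
    simp

end StabilizerChain

section Primitive

variable {Γ α : Type*} [Group Γ] [MulAction Γ α]

theorem le_div_minFac_of_dvd_of_ne {d n : ℕ} (hn : n ≠ 0) (hdvd : d ∣ n) (hne : d ≠ n) :
    d ≤ n / n.minFac := by
  obtain ⟨e, rfl⟩ := hdvd
  have he : 2 ≤ e := by
    by_contra! h
    interval_cases e <;> simp_all
  rw [Nat.le_div_iff_mul_le (Nat.minFac_pos _)]
  exact Nat.mul_le_mul_left d (Nat.minFac_le_of_dvd he (dvd_mul_left e d))

/-- A block containing `a` and `b` contains the orbit of `b` under the stabilizer of `a`, and its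
size is a divisor of the degree. -/
theorem isPreprimitive_of_le_ncard_orbit_stabilizer [Finite α] [IsPretransitive Γ α] (a : α)
    (h : ∀ b ≠ a, Nat.card α / (Nat.card α).minFac ≤ (orbit (stabilizer Γ a) b).ncard) :
    MulAction.IsPreprimitive Γ α := by
  refine IsPreprimitive.of_isTrivialBlock_base a fun {B} haB hB => ?_
  refine or_iff_not_imp_left.2 fun hnontrivial => ?_
  obtain ⟨b, hbB, hba⟩ := (Set.not_subsingleton_iff.1 hnontrivial).exists_ne a
  have horbit : insert a (orbit (stabilizer Γ a) b) ⊆ B := by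
    refine Set.insert_subset haB ?_
    rintro _ ⟨⟨g, hg⟩, rfl⟩
    have hgB : g • B = B := hB.smul_eq_of_mem haB (by rwa [mem_stabilizer_iff.1 hg])
    exact hgB ▸ Set.smul_mem_smul_set hbB
  have ha : a ∉ orbit (stabilizer Γ a) b := by
    rintro ⟨⟨g, hg⟩, hgb⟩
    exact hba (smul_left_cancel g (hgb.trans (mem_stabilizer_iff.1 hg).symm))
  have hlt : Nat.card α / (Nat.card α).minFac < B.ncard := by
    have := Set.ncard_le_ncard horbit
    rw [Set.ncard_insert_of_notMem ha] at this
    exact (h b hba).trans_lt this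
  have : Nonempty α := ⟨a⟩
  by_contra hB_ne
  refine hlt.not_ge (le_div_minFac_of_dvd_of_ne Nat.card_pos.ne' (hB.ncard_dvd_card ⟨a, haB⟩) ?_)
  rwa [Ne, ← Set.eq_univ_iff_ncard]

theorem isPreprimitive_of_le {H K : Subgroup Γ} (hHK : H ≤ K) [MulAction.IsPreprimitive H α] :
    MulAction.IsPreprimitive K α := by
  let f : α →ₑ[Subgroup.inclusion hHK] α := ⟨id, fun _ _ => rfl⟩
  exact IsPreprimitive.of_surjective (f := f) Function.surjective_id

end Primitive

section NormalSubgroups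

variable {Γ α : Type*} [Group Γ] [MulAction Γ α] [FaithfulSMul Γ α]
  [IsQuasiPreprimitive Γ α] {p : ℕ}

/-- `N` is transitive, so `p` divides its order and hence not its index. -/
theorem mem_of_normal_of_pow_prime_eq_one (hp : p.Prime) (hα : p ∣ Nat.card α)
    (hΓ : ¬ p ^ 2 ∣ Nat.card Γ) {N : Subgroup Γ} [N.Normal] (hN : N ≠ ⊥) {g : Γ} (hg : g ^ p = 1) :
    g ∈ N := by
  have hfixed : fixedPoints N α ≠ Set.univ := by
    refine fun h => hN ((Subgroup.eq_bot_iff_forall N).2 fun n hn => ?_)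
    refine FaithfulSMul.eq_of_smul_eq_smul fun a : α => ?_
    rw [one_smul]
    exact Set.eq_univ_iff_forall.1 h a ⟨n, hn⟩
  have htrans : IsPretransitive N α := IsQuasiPreprimitive.isPretransitive_of_normal hfixed
  have hcardN : p ∣ Nat.card N := by
    obtain ⟨a, -⟩ := (Set.ne_univ_iff_exists_notMem _).1 hfixed
    rw [← Nat.card_congr (orbitProdStabilizerEquivGroup N a), Nat.card_prod, orbit_eq_univ,
      Nat.card_congr (Equiv.Set.univ α)]
    exact hα.mul_right _
  have hindex : ¬ p ∣ Nat.card (Γ ⧸ N) := fun h => hΓ <| by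
    rw [Subgroup.card_eq_card_quotient_mul_card_subgroup N, sq]
    exact mul_dvd_mul h hcardN
  have hpow : (g : Γ ⧸ N) ^ p = 1 := by
    rw [← QuotientGroup.mk_pow, hg, QuotientGroup.mk_one]
  rw [← QuotientGroup.eq_one_iff, ← orderOf_eq_one_iff]
  refine ((Nat.dvd_prime hp).1 (orderOf_dvd_of_pow_eq_one hpow)).resolve_right fun h => hindex ?_
  exact h ▸ orderOf_dvd_natCard (g : Γ ⧸ N)

theorem isSimpleGroup_of_closure_eq_top [Nontrivial Γ] (hp : p.Prime) (hα : p ∣ Nat.card α)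
    (hΓ : ¬ p ^ 2 ∣ Nat.card Γ) {T : Set Γ} (hT : Subgroup.closure T = ⊤)
    (hpow : ∀ g ∈ T, g ^ p = 1) : IsSimpleGroup Γ where
  eq_bot_or_eq_top_of_normal N _ := or_iff_not_imp_left.2 fun hN => by
    rw [eq_top_iff, ← hT, Subgroup.closure_le]
    exact fun g hg => mem_of_normal_of_pow_prime_eq_one hp hα hΓ hN (hpow g hg)

end NormalSubgroups

section TwoGenerators

variable {Γ α : Type*} [Group Γ] {a b : Γ}

/-- The product `(a ^ i₁ * b) * ⋯ * (a ^ iₖ * b)` encoded by the word `[i₁, …, iₖ]`. -/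
def syllableProd (a b : Γ) (w : List ℕ) : Γ :=
  (w.map fun i => a ^ i * b).prod

/-- The self-map `f^[i₁] ∘ g ∘ ⋯ ∘ f^[iₖ] ∘ g` encoded by the word `[i₁, …, iₖ]`. -/
def syllableMap (f g : α → α) (w : List ℕ) (k : α) : α :=
  w.foldr (fun i k => f^[i] (g k)) k

theorem syllableProd_apply (a b : Equiv.Perm α) (w : List ℕ) (k : α) :
    syllableProd a b w k = syllableMap a b w k := by
  induction w with
  | nil => rfl
  | cons i w ih =>
    simp only [syllableProd, List.map_cons, List.prod_cons, Equiv.Perm.mul_apply, syllableMap,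
      List.foldr_cons, Equiv.Perm.iterate_eq_pow] at ih ⊢
    rw [ih]

theorem syllableProd_mem_closure (w : List ℕ) : syllableProd a b w ∈ Subgroup.closure {a, b} := by
  refine list_prod_mem fun g hg => ?_
  obtain ⟨i, -, rfl⟩ := List.mem_map.1 hg
  exact mul_mem (pow_mem (Subgroup.subset_closure (by simp)) i) (Subgroup.subset_closure (by simp))

theorem syllableProd_mem_closure_conj (hb : b * b = 1) :
    ∀ {w : List ℕ}, Even w.length → syllableProd a b w ∈ Subgroup.closure {a, b * a * b⁻¹}
  | [], _ => one_mem _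
  | [_], h => by simp at h
  | i :: j :: w, h => by
    have hw : Even w.length := by simpa [Nat.even_add_one] using h
    have hprod : syllableProd a b (i :: j :: w) =
        a ^ i * (b * a * b⁻¹) ^ j * syllableProd a b w := by
      rw [conj_pow, inv_eq_of_mul_eq_one_left hb]
      simp only [syllableProd, List.map_cons, List.prod_cons, mul_assoc]
    rw [hprod]
    exact mul_mem (mul_mem (pow_mem (Subgroup.subset_closure (by simp)) i)
      (pow_mem (Subgroup.subset_closure (by simp)) j)) (syllableProd_mem_closure_conj hb hw)

theorem inv_syllableProd {n : ℕ} (ha : a ^ n = 1) (hb : b * b = 1) :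
    ∀ {w : List ℕ}, (∀ i ∈ w, i ≤ n) →
      (syllableProd a b w)⁻¹ = b * syllableProd a b (w.reverse.map (n - ·)) * b
  | [], _ => by simpa [syllableProd] using hb.symm
  | i :: w, hw => by
    have hai : (a ^ i)⁻¹ = a ^ (n - i) :=
      inv_eq_of_mul_eq_one_left (by rw [← pow_add, Nat.sub_add_cancel (hw i (by simp)), ha])
    have ih := inv_syllableProd ha hb fun j hj => hw j (List.mem_cons_of_mem i hj)
    calc (syllableProd a b (i :: w))⁻¹ = (syllableProd a b w)⁻¹ * b⁻¹ * (a ^ i)⁻¹ := by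
          simp [syllableProd, mul_assoc]
      _ = b * syllableProd a b (w.reverse.map (n - ·)) * a ^ (n - i) * (b * b) := by
          rw [ih, hai, hb]; group
      _ = b * syllableProd a b ((i :: w).reverse.map (n - ·)) * b := by
          simp [syllableProd, mul_assoc]

/-- The word of the conjugate of `b` by `syllableProd a b w`, up to a final factor `b`, when
`a ^ n = 1` and `b * b = 1`. -/
def conjWord (n : ℕ) (w : List ℕ) : List ℕ :=
  w ++ w.reverse.map (n - ·)

theorem syllableProd_conj_eq {n : ℕ} (ha : a ^ n = 1) (hb : b * b = 1) {w : List ℕ}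
    (hw : ∀ i ∈ w, i ≤ n) :
    syllableProd a b w * b * (syllableProd a b w)⁻¹ = syllableProd a b (conjWord n w) * b := by
  rw [inv_syllableProd ha hb hw, ← mul_assoc, ← mul_assoc, mul_assoc _ b b, hb, mul_one]
  simp [syllableProd, conjWord]

theorem closure_conj_le_closure :
    Subgroup.closure {a, b * a * b⁻¹} ≤ Subgroup.closure {a, b} := by
  have ha : a ∈ Subgroup.closure {a, b} := Subgroup.subset_closure (by simp)
  have hb : b ∈ Subgroup.closure {a, b} := Subgroup.subset_closure (by simp)
  simpa [Subgroup.closure_le, Set.insert_subset_iff] using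
    ⟨ha, mul_mem (mul_mem hb ha) (inv_mem hb)⟩

theorem closure_conj_normal (hb : b * b = 1) :
    ((Subgroup.closure {a, b * a * b⁻¹}).subgroupOf (Subgroup.closure {a, b})).Normal := by
  have hbinv : b⁻¹ = b := inv_eq_of_mul_eq_one_left hb
  have hpair : b ∈ Subgroup.normalizer ({a, b * a * b⁻¹} : Set Γ) := by
    have hba : b * (b * a * b) * b = a := by
      rw [← mul_assoc, ← mul_assoc, hb, one_mul, mul_assoc, hb, mul_one]
    rw [Subgroup.mem_normalizer_iff_conj_image_eq, Set.image_pair, Set.pair_comm]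
    simp [hbinv, hba]
  rw [Subgroup.normal_subgroupOf_iff_le_normalizer closure_conj_le_closure, Subgroup.closure_le,
    Set.insert_subset_iff, Set.singleton_subset_iff]
  exact ⟨Subgroup.le_normalizer (Subgroup.subset_closure (by simp)),
    Subgroup.normalizer_le_normalizer_closure _ hpair⟩

theorem isSimpleGroup_closure_conj [MulAction Γ α] [FaithfulSMul Γ α]
    [MulAction.IsPreprimitive (Subgroup.closure {a, b * a * b⁻¹}) α] {p : ℕ} (hp : p.Prime)
    (hα : p ∣ Nat.card α) (hΓ : ¬ p ^ 2 ∣ Nat.card (Subgroup.closure {a, b * a * b⁻¹}))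
    (ha : a ^ p = 1) (ha_ne : a ≠ 1) : IsSimpleGroup (Subgroup.closure {a, b * a * b⁻¹}) := by
  have : Nontrivial (Subgroup.closure {a, b * a * b⁻¹}) :=
    ⟨⟨a, Subgroup.subset_closure (by simp)⟩, 1, fun h => ha_ne (congrArg Subtype.val h)⟩
  refine isSimpleGroup_of_closure_eq_top hp hα hΓ Subgroup.closure_closure_coe_preimage ?_
  rintro g (hg | hg)
  · exact Subtype.ext (by rw [SubmonoidClass.coe_pow, hg, ha, OneMemClass.coe_one])
  · exact Subtype.ext (by rw [SubmonoidClass.coe_pow, hg, conj_pow, ha]; simp)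

/-- A nontrivial centralizer of `⟨a, b * a * b⁻¹⟩` would be normal in `⟨a, b⟩`, hence would contain
`a`. -/
theorem exists_normal_isSimpleGroup_centralizer_eq_bot [MulAction Γ α] [FaithfulSMul Γ α]
    [MulAction.IsPreprimitive (Subgroup.closure {a, b * a * b⁻¹}) α] {p : ℕ} (hp : p.Prime)
    (hα : p ∣ Nat.card α) (hΓ : ¬ p ^ 2 ∣ Nat.card (Subgroup.closure {a, b})) (ha : a ^ p = 1)
    (hb : b * b = 1) (hab : a * (b * a * b⁻¹) ≠ b * a * b⁻¹ * a) :
    ∃ S : Subgroup (Subgroup.closure {a, b}), S.Normal ∧ IsSimpleGroup S ∧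
      (∃ c d : S, c * d ≠ d * c) ∧
      Subgroup.centralizer (S : Set (Subgroup.closure {a, b})) = ⊥ := by
  have haS : a ∈ Subgroup.closure {a, b * a * b⁻¹} := Subgroup.subset_closure (by simp)
  have hbS : b * a * b⁻¹ ∈ Subgroup.closure {a, b * a * b⁻¹} := Subgroup.subset_closure (by simp)
  have hle := closure_conj_le_closure (a := a) (b := b)
  have hnormal := closure_conj_normal (a := a) hb
  have ha_ne : a ≠ 1 := fun h => hab (by simp [h])
  have hsimple : IsSimpleGroup (Subgroup.closure {a, b * a * b⁻¹}) :=
    isSimpleGroup_closure_conj hp hα (fun h => hΓ (h.trans (Subgroup.card_dvd_of_le hle))) ha ha_ne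
  refine ⟨(Subgroup.closure {a, b * a * b⁻¹}).subgroupOf (Subgroup.closure {a, b}), hnormal,
    (Subgroup.subgroupOfEquivOfLe hle).isSimpleGroup, ⟨⟨⟨a, hle haS⟩, haS⟩,
      ⟨⟨b * a * b⁻¹, hle hbS⟩, hbS⟩, fun h => hab ?_⟩, ?_⟩
  · simpa [Subtype.ext_iff] using h
  · have : MulAction.IsPreprimitive (Subgroup.closure {a, b}) α := isPreprimitive_of_le hle
    by_contra hcentralizer
    have hmem : (⟨a, hle haS⟩ : Subgroup.closure {a, b}) ∈ Subgroup.centralizer _ :=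
      mem_of_normal_of_pow_prime_eq_one hp hα hΓ hcentralizer (Subtype.ext ha)
    have hcomm := Subgroup.mem_centralizer_iff.1 hmem ⟨b * a * b⁻¹, hle hbS⟩ hbS
    exact hab (congrArg Subtype.val hcomm).symm

end TwoGenerators

section Conjugation

variable {Γ : Type*} [Group Γ] {H : Subgroup Γ}

theorem pow_conj_eq_zpow_pow {g h : Γ} {m : ℤ} (hconj : h * g * h⁻¹ = g ^ m) (j : ℕ) :
    h ^ j * g * (h ^ j)⁻¹ = g ^ (m ^ j) := by
  induction j with
  | zero => simp
  | succ j ih =>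
    calc h ^ (j + 1) * g * (h ^ (j + 1))⁻¹ = h * (h ^ j * g * (h ^ j)⁻¹) * h⁻¹ := by group
      _ = g ^ m ^ (j + 1) := by rw [ih, ← conj_zpow, hconj, ← zpow_mul, pow_succ']

theorem exists_mem_conj_eq_zpow {g h : Γ} (hh : h ∈ H) {m : ℤ} (hconj : h * g * h⁻¹ = g ^ m)
    {n : ℕ} (hg : orderOf g = n) (hm : ∀ u : (ZMod n)ˣ, ∃ j < n, (u : ZMod n) = m ^ j) {k : ℤ}
    (hk : Int.gcd k (orderOf g) = 1) : ∃ h ∈ H, h * g * h⁻¹ = g ^ k := by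
  subst hg
  obtain ⟨j, -, hj⟩ := hm (ZMod.unitOfIsCoprime k (Int.isCoprime_iff_gcd_eq_one.2 hk))
  refine ⟨h ^ j, pow_mem hh j, ?_⟩
  rw [pow_conj_eq_zpow_pow hconj, zpow_eq_zpow_iff_modEq, ← ZMod.intCast_eq_intCast_iff]
  simpa using hj.symm

/-- The triple can be conjugated so that `a' = a`; then `b'` is one of the `r`. -/
theorem rigid_of_forall_conj {a b c : Γ}
    (h : ∀ r, (∃ g ∈ H, g * b * g⁻¹ = r) → (∃ g ∈ H, g * c * g⁻¹ = (a * r)⁻¹) →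
      ∃ t ∈ H, t * a * t⁻¹ = a ∧ t * b * t⁻¹ = r)
    (habc : a * b * c = 1) {a' b' c' : Γ} (habc' : a' * b' * c' = 1)
    (ha : ∃ g ∈ H, g * a * g⁻¹ = a') (hb : ∃ g ∈ H, g * b * g⁻¹ = b')
    (hc : ∃ g ∈ H, g * c * g⁻¹ = c') :
    ∃ g ∈ H, g * a * g⁻¹ = a' ∧ g * b * g⁻¹ = b' ∧ g * c * g⁻¹ = c' := by
  obtain ⟨u, hu, rfl⟩ := ha
  obtain ⟨v, hv, rfl⟩ := hb
  obtain ⟨w, hw, rfl⟩ := hc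
  have hc' : (a * (u⁻¹ * v * b * (u⁻¹ * v)⁻¹))⁻¹ = u⁻¹ * w * c * (u⁻¹ * w)⁻¹ := by
    rw [inv_eq_iff_mul_eq_one]
    calc _ = u⁻¹ * (u * a * u⁻¹ * (v * b * v⁻¹) * (w * c * w⁻¹)) * u := by group
      _ = 1 := by rw [habc']; group
  obtain ⟨t, ht, hta, htb⟩ := h _ ⟨u⁻¹ * v, mul_mem (inv_mem hu) hv, rfl⟩
    ⟨u⁻¹ * w, mul_mem (inv_mem hu) hw, hc'.symm⟩
  have hconj : ∀ g : Γ, u * t * g * (u * t)⁻¹ = u * (t * g * t⁻¹) * u⁻¹ := fun g => by group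
  have hc : c = (a * b)⁻¹ := (inv_eq_of_mul_eq_one_right habc).symm
  have htc : t * c * t⁻¹ = u⁻¹ * w * c * (u⁻¹ * w)⁻¹ := by
    calc t * c * t⁻¹ = (t * a * t⁻¹ * (t * b * t⁻¹))⁻¹ := by rw [hc]; group
      _ = u⁻¹ * w * c * (u⁻¹ * w)⁻¹ := by rw [hta, htb, hc']
  refine ⟨u * t, mul_mem hu ht, ?_, ?_, ?_⟩
  · rw [hconj, hta]
  · rw [hconj, htb]; group
  · rw [hconj, htc]; group

/-- Conjugation by each generator permutes the finite set `L`. -/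
theorem conj_mem_of_mem_closure {T L : Set Γ} [Finite L] (hL : ∀ t ∈ T, ∀ r ∈ L, t * r * t⁻¹ ∈ L)
    {g r : Γ} (hg : g ∈ Subgroup.closure T) (hr : r ∈ L) : g * r * g⁻¹ ∈ L := by
  have hle : Subgroup.closure T ≤ Subgroup.normalizer L :=
    (Subgroup.closure_le _).2 fun t ht => Subgroup.mem_normalizer_fintype (hL t ht)
  exact (Subgroup.mem_set_normalizer_iff.1 (hle hg) r).1 hr

end Conjugation

section Images

/-- The values `x 0, …, x 76`. The point labelled `77` is `0 : Fin 77`. -/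
def xImages : List ℕ := [
  57, 14, 50, 53, 36, 49, 55, 56, 41, 72, 65, 23, 7, 66, 3, 11, 22, 13,
  73, 63, 26, 45, 54, 33, 69, 2, 74, 71, 25, 12, 47, 27, 21, 5, 37, 34,
  38, 18, 44, 9, 8, 60, 67, 39, 17, 64, 29, 16, 0, 68, 46, 58, 40, 31,
  35, 42, 19, 6, 59, 70, 20, 1, 10, 28, 48, 61, 43, 32, 51, 52, 15, 62,
  4, 75, 76, 30, 24]

/-- The values `y 0, …, y 76`. -/
def yImages : List ℕ := [
  49, 54, 59, 48, 20, 5, 32, 29, 8, 9, 10, 38, 12, 43, 51, 19, 16, 17,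
  37, 15, 4, 57, 46, 23, 73, 25, 26, 27, 28, 7, 44, 40, 6, 45, 52, 71,
  64, 18, 11, 75, 31, 41, 42, 13, 30, 33, 22, 56, 3, 0, 58, 14, 34, 60,
  1, 55, 47, 21, 50, 2, 53, 61, 65, 70, 36, 62, 66, 67, 68, 69, 63, 35,
  76, 24, 74, 39, 72]

/-- The permutation `x`, computed by reading a base 77 digit of one large number. The kernel
evaluates this much faster than `x` itself or a traversal of `xImages`. -/
def xMap (k : Fin 77) : Fin 77 :=
  Fin.ofNat 77 (Nat.ofDigits 77 xImages / 77 ^ (k : ℕ))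

/-- The permutation `y`, computed in the same way as `xMap`. -/
def yMap (k : Fin 77) : Fin 77 :=
  Fin.ofNat 77 (Nat.ofDigits 77 yImages / 77 ^ (k : ℕ))

theorem x_apply (k : Fin 77) : x k = xMap k := by
  decide +kernel +revert

theorem y_apply (k : Fin 77) : y k = yMap k := by
  decide +kernel +revert

theorem syllableProd_x_y_apply (w : List ℕ) (k : Fin 77) :
    syllableProd x y w k = syllableMap xMap yMap w k := by
  rw [syllableProd_apply, funext x_apply, funext y_apply]

theorem y_mul_self : y * y = 1 :=
  Equiv.ext fun k => by
    rw [Equiv.Perm.mul_apply, y_apply, y_apply]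
    decide +kernel +revert

end Images

section Order

/-- The 77 hexads of the Steiner system `S(3, 6, 22)` preserved by `⟨x, y⟩`, as 6-element subsets
of `{0, …, 21}` encoded in binary. The `k`-th one belongs to the point `k`. -/
def hexads : List ℕ := [
  329809, 524871, 27393, 2097437, 2474240, 573489, 1319236, 852012, 336514, 618560,
  67400, 71942, 426006, 3706884, 1049742, 2132099, 102552, 1853442, 2362884, 3408048,
  2688018, 282757, 205104, 143884, 1069352, 2110848, 1181733, 8425, 1055424, 213003,
  2121766, 5236, 142402, 287768, 1638785, 820416, 756224, 3277570, 1512448, 309280,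
  168257, 673028, 1084688, 2250768, 3022849, 565514, 107525, 51276, 2262056, 1146978,
  54786, 395656, 85152, 2618, 410208, 2638472, 1704024, 659618, 791312, 1582624,
  1344009, 263459, 33700, 2623840, 1131028, 132753, 3221512, 2167329, 2293956, 2138704,
  3163201, 16850, 1237120, 531465, 2363466, 1060883, 534676]

/-- The relation between two hexads: `0` if they are equal, `1` if they are disjoint, and `2` if
they meet in two points. -/
def hexadRelation (a b : Fin 77) : ℕ :=
  bif a == b then 0 else bif hexads.getD a 0 &&& hexads.getD b 0 == 0 then 1 else 2

theorem hexadRelation_x (a b : Fin 77) : hexadRelation (x a) (x b) = hexadRelation a b := by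
  rw [x_apply, x_apply]
  decide +kernel +revert

theorem hexadRelation_y (a b : Fin 77) : hexadRelation (y a) (y b) = hexadRelation a b := by
  rw [y_apply, y_apply]
  decide +kernel +revert

theorem hexadRelation_smul (g : Subgroup.closure {x, y}) (a b : Fin 77) :
    hexadRelation (g • a) (g • b) = hexadRelation a b := by
  obtain ⟨g, hg⟩ := g
  change hexadRelation (g a) (g b) = hexadRelation a b
  induction hg using Subgroup.closure_induction generalizing a b with
  | mem g hg =>
    obtain rfl | rfl := hg
    exacts [hexadRelation_x a b, hexadRelation_y a b]
  | one => rfl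
  | mul g h _ _ ihg ihh => exact (ihg _ _).trans (ihh a b)
  | inv g _ ih => simpa using (ih (g⁻¹ a) (g⁻¹ b)).symm

/-- Words of even length that carry `0` to every point. -/
def transversalZero : List (List ℕ) :=
  (List.range 11).flatMap fun i =>
    [[0], [1], [2], [3], [7], [1, 2, 1], [1, 2, 9]].map (i :: ·)

/-- Words of even length that fix `0` and carry `62` to every hexad disjoint from that of `0`. -/
def transversalSixtyTwo : List (List ℕ) := [
    [8, 3, 3, 8], [5, 3, 1, 2], [0, 7, 10, 3], [6, 2, 6, 9], [8, 9, 8, 9], [3, 10, 2, 8],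
    [5, 8, 8, 9], [10, 7, 10, 1], [3, 4, 8, 4], [5, 6, 4, 9], [10, 7, 3, 8], [4, 4, 8, 1],
    [0, 6, 8, 4], [1, 6, 8, 2], [], [10, 1, 5, 9]]

/-- The base points `0, 62, 57, …`, each with words that fix the earlier base points and carry it to
its whole orbit. -/
def baseLevels : List (Fin 77 × List (List ℕ)) := [
  (0, transversalZero),
  (62, transversalSixtyTwo),
  (57, [
    [], [0, 1, 10], [1, 1, 2], [0, 1, 9, 1], [8, 2, 10, 9], [9, 2, 7, 9], [1, 3, 9, 2],
    [4, 3, 10, 7], [8, 3, 10, 1], [10, 3, 7, 9], [3, 6, 5, 6], [9, 9, 8, 1], [3, 5, 1, 2, 5],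
    [8, 2, 3, 7, 9], [3, 7, 3, 6, 2]]),
  (33, [[], [4, 9, 5, 10, 7], [1, 3, 9, 1, 1]]),
  (66, [[], [9, 9, 9]]),
  (40, [[], [8, 3, 0]]),
  (30, [[], [10, 7, 5, 6, 3], [10, 10, 8, 2, 10], [10, 7, 3, 2, 6, 3]])]

/-- The base points, last one first. Only the identity of `⟨x, y⟩` fixes all of them. -/
def basePoints : List (Fin 77) :=
  (baseLevels.map Prod.fst).reverse

/-- Further points, fixed by whatever fixes the earlier ones. Together with the base points they
distinguish all hexads by `hexadRelation`. -/
def separatingLevels : List (Fin 77 × List (List ℕ)) :=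
  [70, 11, 60, 17, 35, 37, 31].map (·, [[]])

theorem isStabilizerChain_baseLevels : IsStabilizerChain hexadRelation (syllableMap xMap yMap) []
    (baseLevels ++ separatingLevels) := by
  decide +kernel

theorem exists_smul_eq_syllableMap (w : List ℕ) :
    ∃ g : Subgroup.closure {x, y}, ∀ k : Fin 77, g • k = syllableMap xMap yMap w k :=
  ⟨⟨syllableProd x y w, syllableProd_mem_closure w⟩, syllableProd_x_y_apply w⟩

theorem card_closure : Nat.card (Subgroup.closure {x, y}) = 887040 := by
  have hcard := isStabilizerChain_baseLevels.card_fixingSubgroup hexadRelation_smul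
    exists_smul_eq_syllableMap
  have hempty : {c : Fin 77 | c ∈ ([] : List (Fin 77))} = ∅ := by simp
  rw [hempty, fixingSubgroup_empty, Subgroup.card_top] at hcard
  rw [hcard]
  decide +kernel

theorem eq_of_eq_on_basePoints {g h : Equiv.Perm (Fin 77)} (hg : g ∈ Subgroup.closure {x, y})
    (hh : h ∈ Subgroup.closure {x, y}) (hgh : ∀ p ∈ basePoints, g p = h p) : g = h := by
  have hcard : Nat.card (fixingSubgroup (Subgroup.closure {x, y}) {p | p ∈ basePoints}) = 1 :=
    (isStabilizerChain_baseLevels.of_append.card_fixingSubgroup hexadRelation_smul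
      exists_smul_eq_syllableMap).trans (by decide +kernel)
  have hmem : (⟨h⁻¹ * g, mul_mem (inv_mem hh) hg⟩ : Subgroup.closure {x, y}) ∈
      fixingSubgroup (Subgroup.closure {x, y}) {p | p ∈ basePoints} := by
    refine (mem_fixingSubgroup_iff _).2 fun p hp => ?_
    change h⁻¹ (g p) = p
    exact Equiv.Perm.inv_eq_iff_eq.2 (hgh p hp)
  rw [Subgroup.card_eq_one.1 hcard, Subgroup.mem_bot] at hmem
  exact (inv_mul_eq_one.1 (congrArg Subtype.val hmem)).symm

end Order

section Orders

theorem cycleType_x : x.cycleType = Multiset.replicate 7 11 := by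
  rw [x, cycleType_permOfCycles (by decide +kernel) (by decide +kernel)]
  rfl

theorem cycleType_y : y.cycleType = Multiset.replicate 28 2 := by
  rw [y, cycleType_permOfCycles (by decide +kernel) (by decide +kernel)]
  rfl

theorem mul_inv_eq_permOfCycles : (x * y)⁻¹ = permOfCycles [
    [0, 3, 51, 68], [1, 61, 62, 35], [2, 25, 28, 70], [4, 76, 74, 26], [5, 45, 57, 49],
    [8, 31, 60, 41], [9, 75, 24, 72], [11, 19, 47, 44], [13, 17, 30, 39], [14, 54, 46, 58],
    [16, 56, 29, 22], [20, 53, 48, 36], [23, 38, 64, 33], [27, 40, 34, 71], [32, 67, 42, 55],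
    [37, 52, 69, 73], [6, 21], [7, 12], [10, 65], [15, 63], [43, 66], [50, 59]] := by
  refine inv_eq_of_mul_eq_one_left (Equiv.ext fun k => ?_)
  rw [Equiv.Perm.mul_apply, Equiv.Perm.mul_apply, x_apply, y_apply]
  decide +kernel +revert

theorem cycleType_mul_inv :
    (x * y)⁻¹.cycleType = Multiset.replicate 16 4 + Multiset.replicate 6 2 := by
  rw [mul_inv_eq_permOfCycles, cycleType_permOfCycles (by decide +kernel) (by decide +kernel)]
  rfl

theorem orderOf_x : orderOf x = 11 := by
  rw [← Equiv.Perm.lcm_cycleType, cycleType_x]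
  decide

theorem orderOf_y : orderOf y = 2 := by
  rw [← Equiv.Perm.lcm_cycleType, cycleType_y]
  decide

theorem orderOf_mul_inv : orderOf (x * y)⁻¹ = 4 := by
  rw [← Equiv.Perm.lcm_cycleType, cycleType_mul_inv]
  decide

theorem x_pow_eleven : x ^ 11 = 1 :=
  orderOf_x ▸ pow_orderOf_eq_one x

theorem permInd_add_permInd_add_permInd :
    permInd x + permInd y + permInd (x * y)⁻¹ = 2 * (77 - 1) := by
  rw [permInd, permInd, permInd, cycleType_x, cycleType_y, cycleType_mul_inv]
  simp

end Orders

section Primitivity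

theorem isPretransitive_closure_conj :
    IsPretransitive (Subgroup.closure {x, y * x * y⁻¹}) (Fin 77) := by
  refine IsPretransitive.of_orbit (x₀ := 0) fun k => ?_
  obtain ⟨w, -, hlength, hw⟩ :
      ∃ w ∈ transversalZero, Even w.length ∧ syllableMap xMap yMap w 0 = k := by
    decide +kernel +revert
  exact ⟨⟨_, syllableProd_mem_closure_conj y_mul_self hlength⟩,
    (syllableProd_x_y_apply w 0).trans hw⟩

theorem isPreprimitive_closure_conj :
    MulAction.IsPreprimitive (Subgroup.closure {x, y * x * y⁻¹}) (Fin 77) := by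
  have := isPretransitive_closure_conj
  refine isPreprimitive_of_le_ncard_orbit_stabilizer 0 fun b hb => ?_
  have heven : ∀ w ∈ transversalSixtyTwo, Even w.length ∧ syllableMap xMap yMap w 0 = 0 := by
    decide +kernel
  have hsub : ((transversalSixtyTwo.map (syllableMap xMap yMap · b)).toFinset : Set (Fin 77)) ⊆
      orbit (stabilizer (Subgroup.closure {x, y * x * y⁻¹}) (0 : Fin 77)) b := by
    intro k hk
    obtain ⟨w, hw, rfl⟩ := List.mem_map.1 (List.mem_toFinset.1 hk)
    obtain ⟨hlength, hzero⟩ := heven w hw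
    exact ⟨⟨⟨_, syllableProd_mem_closure_conj y_mul_self hlength⟩,
      (syllableProd_x_y_apply w 0).trans hzero⟩, syllableProd_x_y_apply w b⟩
  have hcard : ∀ b : Fin 77, b ≠ 0 →
      11 ≤ (transversalSixtyTwo.map (syllableMap xMap yMap · b)).toFinset.card := by
    decide +kernel
  have hdiv : Nat.card (Fin 77) / (Nat.card (Fin 77)).minFac = 11 := by norm_num
  rw [hdiv]
  exact (hcard b hb).trans ((Set.ncard_coe_finset _).ge.trans (Set.ncard_le_ncard hsub))

theorem x_mul_conj_ne : x * (y * x * y⁻¹) ≠ y * x * y⁻¹ * x := by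
  intro h
  rw [inv_eq_of_mul_eq_one_left y_mul_self] at h
  have happly (k : Fin 77) : xMap (yMap (xMap (yMap k))) = yMap (xMap (yMap (xMap k))) := by
    -- `simp` would use `mul_apply` by `rfl`, and the kernel would then unfold `x` and `y`.
    have hk := Equiv.congr_fun h k
    rwa [Equiv.Perm.mul_apply, Equiv.Perm.mul_apply, Equiv.Perm.mul_apply, Equiv.Perm.mul_apply,
      Equiv.Perm.mul_apply, Equiv.Perm.mul_apply, funext x_apply, funext y_apply] at hk
  exact absurd (happly 0) (by decide +kernel)

theorem exists_normal_isSimpleGroup :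
    ∃ S : Subgroup (Subgroup.closure {x, y}), S.Normal ∧ IsSimpleGroup S ∧
      (∃ a b : S, a * b ≠ b * a) ∧
      Subgroup.centralizer (S : Set (Subgroup.closure {x, y})) = ⊥ := by
  have := isPreprimitive_closure_conj
  refine exists_normal_isSimpleGroup_centralizer_eq_bot (α := Fin 77) (p := 11) (by norm_num)
    (by norm_num) ?_ x_pow_eleven y_mul_self x_mul_conj_ne
  rw [card_closure]
  norm_num

theorem isPreprimitive_closure : _root_.IsPreprimitive (Subgroup.closure {x, y}) (Fin 77) := by
  have := isPreprimitive_closure_conj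
  have hprim : MulAction.IsPreprimitive (Subgroup.closure {x, y}) (Fin 77) :=
    isPreprimitive_of_le closure_conj_le_closure
  exact ⟨hprim.toIsPretransitive, fun _ hB => hprim.isTrivialBlock_of_isBlock hB⟩

theorem closure_ne_top : Subgroup.closure {x, y} ≠ ⊤ := by
  intro h
  have hcard := card_closure
  rw [h, Subgroup.card_top, Nat.card_perm, Nat.card_fin] at hcard
  exact absurd hcard (by decide +kernel)

theorem closure_ne_alternatingGroup : Subgroup.closure {x, y} ≠ alternatingGroup (Fin 77) := by
  intro h
  have hcard := two_mul_nat_card_alternatingGroup (α := Fin 77)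
  rw [← h, card_closure, Nat.card_perm, Nat.card_fin] at hcard
  exact absurd hcard (by decide +kernel)

end Primitivity

section Rationality

theorem x_mem_closure : x ∈ Subgroup.closure {x, y} :=
  Subgroup.subset_closure (by simp)

theorem y_mem_closure : y ∈ Subgroup.closure {x, y} :=
  Subgroup.subset_closure (by simp)

theorem syllableProd_conj_x_eq_sq {w : List ℕ}
    (hw : ∀ p ∈ basePoints,
      syllableMap xMap yMap w (xMap p) = xMap (xMap (syllableMap xMap yMap w p))) :
    syllableProd x y w * x * (syllableProd x y w)⁻¹ = x ^ 2 := by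
  have hmem := syllableProd_mem_closure (a := x) (b := y) w
  refine mul_inv_eq_iff_eq_mul.2 (eq_of_eq_on_basePoints (mul_mem hmem x_mem_closure)
    (mul_mem (pow_mem x_mem_closure 2) hmem) fun p hp => ?_)
  rw [sq, Equiv.Perm.mul_apply, Equiv.Perm.mul_apply, Equiv.Perm.mul_apply, syllableProd_x_y_apply,
    syllableProd_x_y_apply, funext x_apply, hw p hp]

theorem syllableProd_conj_mul_inv_eq_mul {w : List ℕ}
    (hw : ∀ p ∈ basePoints,
      xMap (yMap (syllableMap xMap yMap w (xMap (yMap p)))) = syllableMap xMap yMap w p) :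
    syllableProd x y w * (x * y)⁻¹ * (syllableProd x y w)⁻¹ = x * y := by
  have hmem := syllableProd_mem_closure (a := x) (b := y) w
  have hxy := mul_mem x_mem_closure y_mem_closure
  have hinv : x * y * (syllableProd x y w * (x * y)) = syllableProd x y w := by
    refine eq_of_eq_on_basePoints (mul_mem hxy (mul_mem hmem hxy)) hmem fun p hp => ?_
    rw [Equiv.Perm.mul_apply, Equiv.Perm.mul_apply, Equiv.Perm.mul_apply, Equiv.Perm.mul_apply,
      syllableProd_x_y_apply, syllableProd_x_y_apply, funext x_apply, funext y_apply, hw p hp]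
  rw [mul_inv_eq_iff_eq_mul, mul_inv_eq_iff_eq_mul, mul_assoc, hinv]

/-- `2` generates `(ZMod 11)ˣ`, so it suffices to conjugate `x` to its square. -/
theorem exists_conj_x_eq_zpow {k : ℤ} (hk : Int.gcd k (orderOf x) = 1) :
    ∃ h ∈ Subgroup.closure {x, y}, h * x * h⁻¹ = x ^ k :=
  exists_mem_conj_eq_zpow (syllableProd_mem_closure [0, 10, 8, 7, 5, 3, 2]) (m := 2)
    (syllableProd_conj_x_eq_sq (by decide +kernel)) orderOf_x (by decide +kernel) hk

theorem exists_conj_y_eq_zpow {k : ℤ} (hk : Int.gcd k (orderOf y) = 1) :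
    ∃ h ∈ Subgroup.closure {x, y}, h * y * h⁻¹ = y ^ k :=
  exists_mem_conj_eq_zpow (one_mem _) (m := 1) (by simp) orderOf_y (by decide +kernel) hk

theorem exists_conj_mul_inv_eq_zpow {k : ℤ} (hk : Int.gcd k (orderOf (x * y)⁻¹) = 1) :
    ∃ h ∈ Subgroup.closure {x, y}, h * (x * y)⁻¹ * h⁻¹ = (x * y)⁻¹ ^ k := by
  refine exists_mem_conj_eq_zpow (syllableProd_mem_closure [2, 8, 8, 3, 5, 2]) (m := -1) ?_
    orderOf_mul_inv (by decide +kernel) hk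
  rw [syllableProd_conj_mul_inv_eq_mul (by decide +kernel), zpow_neg_one, inv_inv]

end Rationality

section Rigidity

/-- Words `l` such that the elements `x ^ i * y * syllableProd x y l` with `i < 11` conjugate `y` to
all its 330 conjugates in `⟨x, y⟩`. The conjugates for a fixed `l` form an orbit of `⟨x⟩`. -/
def conjugators : List (List ℕ) := [
  [], [1], [2], [3], [4], [5], [6], [9], [10], [1, 3], [1, 4], [1, 6], [1, 8], [1, 9], [2, 2],
  [2, 4], [2, 5], [2, 6], [3, 2], [3, 3], [3, 5], [3, 9], [3, 10], [4, 1], [5, 2], [5, 10],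
  [6, 9], [9, 5], [1, 3, 2], [1, 4, 5]]

/-- The conjugate of `y` by the element with word `w`. -/
def conjY (w : List ℕ) : Equiv.Perm (Fin 77) :=
  syllableProd x y w * y * (syllableProd x y w)⁻¹

theorem conjY_apply {w : List ℕ} (hw : ∀ i ∈ w, i ≤ 11) (k : Fin 77) :
    conjY w k = syllableMap xMap yMap (conjWord 11 w) (yMap k) := by
  rw [conjY, syllableProd_conj_eq x_pow_eleven y_mul_self hw, Equiv.Perm.mul_apply,
    syllableProd_x_y_apply, y_apply]

theorem conjY_mem_closure (w : List ℕ) : conjY w ∈ Subgroup.closure {x, y} :=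
  mul_mem (mul_mem (syllableProd_mem_closure w) y_mem_closure)
    (inv_mem (syllableProd_mem_closure w))

theorem conjY_eq_of_basePoints {w w' : List ℕ} (hw : ∀ i ∈ w, i ≤ 11) (hw' : ∀ i ∈ w', i ≤ 11)
    (h : ∀ p ∈ basePoints, syllableMap xMap yMap (conjWord 11 w) (yMap p) =
      syllableMap xMap yMap (conjWord 11 w') (yMap p)) : conjY w = conjY w' :=
  eq_of_eq_on_basePoints (conjY_mem_closure w) (conjY_mem_closure w') fun p hp => by
    rw [conjY_apply hw, conjY_apply hw', h p hp]

theorem conjY_cons (i : ℕ) (l : List ℕ) :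
    conjY (i :: l) = x ^ i * conjY (0 :: l) * (x ^ i)⁻¹ := by
  simp [conjY, syllableProd, mul_assoc]

theorem conjY_zero : conjY [0] = y := by
  simp [conjY, syllableProd]

theorem x_conj_conjY_cons (i : ℕ) (l : List ℕ) :
    x * conjY (i :: l) * x⁻¹ = conjY ((i + 1) :: l) := by
  simp [conjY, syllableProd, pow_succ', mul_assoc]

theorem y_conj_conjY_cons (i : ℕ) (l : List ℕ) :
    y * conjY (i :: l) * y⁻¹ = conjY (0 :: i % 11 :: l) := by
  have hmod : x ^ (i % 11) = x ^ i := orderOf_x ▸ pow_mod_orderOf x i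
  simp [conjY, syllableProd, hmod, mul_assoc]

/-- Words for conjugating elements, numbered so that those with the same quotient by 11 belong to
one orbit of `⟨x⟩` on the conjugates of `y`. -/
def conjugator (n : ℕ) : List ℕ :=
  n % 11 :: conjugators.getD (n / 11) []

/-- Conjugation by `y` carries the `n`-th conjugate of `y` to the one whose number is the `n`-th
entry. -/
def yConjImages : List ℕ := [
  0, 11, 22, 33, 44, 55, 66, 50, 41, 77, 88, 1, 98, 97, 181, 253, 151, 224,
  18, 246, 23, 21, 2, 20, 154, 198, 167, 264, 29, 28, 257, 31, 100, 3, 99, 107,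
  209, 37, 216, 147, 144, 8, 132, 111, 4, 110, 165, 47, 173, 133, 7, 51, 76, 56,
  54, 5, 53, 176, 220, 118, 60, 61, 117, 116, 297, 122, 6, 121, 187, 138, 137, 71,
  72, 136, 279, 177, 52, 9, 143, 79, 231, 82, 81, 286, 171, 324, 160, 90, 10, 89,
  87, 242, 92, 275, 103, 235, 183, 13, 12, 34, 32, 256, 269, 94, 284, 210, 106, 35,
  108, 109, 45, 43, 249, 298, 115, 114, 63, 62, 59, 319, 239, 67, 65, 306, 305, 240,
  329, 127, 204, 259, 190, 189, 42, 49, 260, 203, 73, 70, 69, 140, 139, 197, 250, 78,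
  40, 145, 146, 39, 148, 215, 226, 16, 292, 232, 24, 245, 158, 157, 156, 243, 86, 311,
  163, 162, 309, 46, 238, 26, 207, 169, 326, 84, 261, 48, 175, 174, 57, 75, 195, 270,
  255, 14, 182, 96, 233, 291, 300, 68, 188, 131, 130, 273, 192, 271, 194, 178, 278, 141,
  25, 308, 213, 315, 280, 135, 128, 328, 327, 168, 208, 36, 105, 282, 322, 200, 228, 149,
  38, 219, 218, 217, 58, 299, 248, 247, 17, 225, 150, 227, 214, 318, 320, 80, 153, 184,
  234, 95, 268, 265, 166, 120, 125, 287, 91, 159, 244, 155, 19, 223, 222, 112, 142, 277,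
  276, 15, 254, 180, 101, 30, 274, 129, 134, 172, 296, 293, 27, 237, 266, 267, 236, 102,
  179, 193, 272, 191, 258, 93, 252, 251, 196, 74, 202, 313, 211, 283, 104, 285, 83, 241,
  304, 289, 302, 185, 152, 263, 294, 295, 262, 64, 113, 221, 186, 301, 290, 303, 288, 124,
  123, 307, 199, 164, 310, 161, 323, 281, 314, 201, 321, 317, 229, 119, 230, 316, 212, 312,
  85, 325, 170, 206, 205, 126]

theorem le_of_mem_conjugator {n i : ℕ} (hn : n < 330) (hi : i ∈ conjugator n) : i ≤ 11 := by
  have hle : ∀ l ∈ conjugators, ∀ i ∈ l, i ≤ 11 := by decide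
  have hlength : n / 11 < conjugators.length := Nat.div_lt_of_lt_mul hn
  obtain rfl | hi := List.mem_cons.1 hi
  · exact (Nat.mod_lt n (by norm_num)).le
  · rw [List.getD_eq_getElem _ _ hlength] at hi
    exact hle _ (List.getElem_mem hlength) i hi

theorem conjY_zero_cons_conjugator {n : ℕ} (hn : n < 330) :
    yConjImages.getD n 0 < 330 ∧
      conjY (0 :: conjugator n) = conjY (conjugator (yConjImages.getD n 0)) := by
  have hcheck : ∀ n < 330, yConjImages.getD n 0 < 330 ∧ ∀ p ∈ basePoints,
      syllableMap xMap yMap (conjWord 11 (0 :: conjugator n)) (yMap p) =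
        syllableMap xMap yMap (conjWord 11 (conjugator (yConjImages.getD n 0))) (yMap p) := by
    decide +kernel
  obtain ⟨hlt, heq⟩ := hcheck n hn
  refine ⟨hlt, conjY_eq_of_basePoints (List.forall_mem_cons.2 ⟨by norm_num, ?_⟩) ?_ heq⟩
  exacts [fun _ => le_of_mem_conjugator hn, fun _ => le_of_mem_conjugator hlt]

theorem exists_conjugator_eq {l : List ℕ} (hl : l ∈ conjugators) (i : ℕ) :
    ∃ n < 330, conjugator n = i % 11 :: l := by
  obtain ⟨a, ha, rfl⟩ := List.mem_iff_getElem.1 hl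
  have hlt : a < 30 := ha
  have hmod : (11 * a + i % 11) % 11 = i % 11 := by lia
  have hdiv : (11 * a + i % 11) / 11 = a := by lia
  refine ⟨11 * a + i % 11, by lia, ?_⟩
  rw [conjugator, hmod, hdiv, List.getD_eq_getElem _ _ ha]

theorem exists_eq_conjY_of_conj {g : Equiv.Perm (Fin 77)} (hg : g ∈ Subgroup.closure {x, y}) :
    ∃ i, ∃ l ∈ conjugators, g * y * g⁻¹ = conjY (i :: l) := by
  refine conj_mem_of_mem_closure (T := {x, y}) (L := {r | ∃ i, ∃ l ∈ conjugators,
    r = conjY (i :: l)}) ?_ hg ⟨0, [], by decide, conjY_zero.symm⟩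
  rintro t (rfl | rfl) _ ⟨i, l, hl, rfl⟩
  · exact ⟨i + 1, l, hl, x_conj_conjY_cons i l⟩
  · obtain ⟨n, hn, hni⟩ := exists_conjugator_eq hl i
    obtain ⟨hlt, heq⟩ := conjY_zero_cons_conjugator hn
    have hlength : yConjImages.getD n 0 / 11 < conjugators.length := Nat.div_lt_of_lt_mul hlt
    refine ⟨_, _, ?_, (y_conj_conjY_cons i l).trans (hni ▸ heq)⟩
    rw [List.getD_eq_getElem _ _ hlength]
    exact List.getElem_mem hlength

theorem eq_nil_of_pow_four_eq_one {l : List ℕ} (hl : l ∈ conjugators)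
    (hpow : (x * conjY (0 :: l)) ^ 4 = 1) : l = [] := by
  have hcheck : ∀ l ∈ conjugators, (∀ i ∈ 0 :: l, i ≤ 11) ∧ (l ≠ [] → ∃ k,
      (fun k => xMap (syllableMap xMap yMap (conjWord 11 (0 :: l)) (yMap k)))^[4] k ≠ k) := by
    decide +kernel
  obtain ⟨hle, hmoved⟩ := hcheck l hl
  by_contra hne
  obtain ⟨k, hk⟩ := hmoved hne
  have happly : ⇑(x * conjY (0 :: l)) =
      fun k => xMap (syllableMap xMap yMap (conjWord 11 (0 :: l)) (yMap k)) := by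
    funext k
    rw [Equiv.Perm.mul_apply, conjY_apply hle, x_apply]
  refine hk ?_
  rw [← happly, Equiv.Perm.iterate_eq_pow, hpow, Equiv.Perm.one_apply]

theorem exists_conj_of_pow_four_eq_one {g : Equiv.Perm (Fin 77)}
    (hg : g ∈ Subgroup.closure {x, y}) (hpow : (x * (g * y * g⁻¹)) ^ 4 = 1) :
    ∃ t ∈ Subgroup.closure {x, y}, t * x * t⁻¹ = x ∧ t * y * t⁻¹ = g * y * g⁻¹ := by
  obtain ⟨i, l, hl, hr⟩ := exists_eq_conjY_of_conj hg
  have hconj : x * (g * y * g⁻¹) = x ^ i * (x * conjY (0 :: l)) * (x ^ i)⁻¹ := by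
    rw [hr, conjY_cons, ← mul_assoc, ← mul_assoc, ← mul_assoc, ← pow_succ', pow_succ]
  rw [hconj, conj_pow, conj_eq_one_iff] at hpow
  obtain rfl := eq_nil_of_pow_four_eq_one hl hpow
  refine ⟨x ^ i, pow_mem x_mem_closure i, ?_, ?_⟩
  · rw [← pow_succ, pow_succ', mul_inv_cancel_right]
  · rw [hr, conjY_cons, conjY_zero]

theorem rigid_triple {x' y' z' : Equiv.Perm (Fin 77)} (hxyz' : x' * y' * z' = 1)
    (hx : ∃ g ∈ Subgroup.closure {x, y}, g * x * g⁻¹ = x')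
    (hy : ∃ g ∈ Subgroup.closure {x, y}, g * y * g⁻¹ = y')
    (hz : ∃ g ∈ Subgroup.closure {x, y}, g * (x * y)⁻¹ * g⁻¹ = z') :
    ∃ g ∈ Subgroup.closure {x, y},
      g * x * g⁻¹ = x' ∧ g * y * g⁻¹ = y' ∧ g * (x * y)⁻¹ * g⁻¹ = z' := by
  refine rigid_of_forall_conj ?_ (mul_inv_cancel (x * y)) hxyz' hx hy hz
  rintro _ ⟨g, hg, rfl⟩ ⟨h, -, hz⟩
  refine exists_conj_of_pow_four_eq_one hg ?_
  have hz_pow : (x * y)⁻¹ ^ 4 = 1 := orderOf_mul_inv ▸ pow_orderOf_eq_one (x * y)⁻¹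
  rw [← inv_eq_one, ← inv_pow, ← hz, conj_pow, hz_pow, mul_one, mul_inv_cancel]

end Rigidity

end HexadTriple

open HexadTriple

theorem nice_triple_deg77_stmt7 :
    IsNice x y (x * y)⁻¹ ∧
    x.cycleType = Multiset.replicate 7 11 ∧
    y.cycleType = Multiset.replicate 28 2 ∧
    ((x * y)⁻¹).cycleType = Multiset.replicate 16 4 + Multiset.replicate 6 2 ∧
    Nat.card ↥(Subgroup.closure {x, y} : Subgroup (Equiv.Perm (Fin 77))) = 887040 := by
  have hrational : ∀ g ∈ ({x, y, (x * y)⁻¹} : Set (Equiv.Perm (Fin 77))), ∀ k : ℤ,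
      Int.gcd k (orderOf g) = 1 → ∃ h ∈ Subgroup.closure {x, y}, h * g * h⁻¹ = g ^ k := by
    rintro g (rfl | rfl | rfl) k hk
    exacts [exists_conj_x_eq_zpow hk, exists_conj_y_eq_zpow hk, exists_conj_mul_inv_eq_zpow hk]
  have hnice : IsNice x y (x * y)⁻¹ :=
    ⟨mul_inv_cancel (x * y), ⟨closure_ne_alternatingGroup, closure_ne_top⟩, isPreprimitive_closure,
      exists_normal_isSimpleGroup, permInd_add_permInd_add_permInd,
      fun _ _ _ hxyz' _ hx hy hz => rigid_triple hxyz' hx hy hz, hrational⟩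
  exact ⟨hnice, cycleType_x, cycleType_y, cycleType_mul_inv, card_closure⟩
end

section
/- With p, q ∈ ℚ[X] as in the context (the Belyi map of degree 85 for PSp(4,4):2), the polynomial F = p − t·q ∈ K[X] has degree 85, is irreducible over K = ℚ(t), and its Galois group Polynomial.Gal F (the Galois group of the splitting field of F over K) has cardinality 1958400, the order of PSp(4,4):2. -/
open Polynomial

noncomputable section

def q : Polynomial ℚ :=
    X * (5 * X ^ 3 + 20 * X ^ 2 + 20 * X + 6) ^ 2 * (5 * X ^ 4 + 10 * X ^ 3 - 14 * X - 10) ^ 4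
    * (5 * X ^ 4 + 10 * X ^ 3 - 8 * X - 4) ^ 2 * (5 * X ^ 6 + 30 * X ^ 5 + 60 * X ^ 4 + 8 * X
    ^ 3 - 48 * X ^ 2 - 24 * X - 4) * (625 * X ^ 12 + 3750 * X ^ 11 + 7500 * X ^ 10 + 3500 * X
    ^ 9 - 3750 * X ^ 8 - 1500 * X ^ 7 + 2700 * X ^ 6 + 3000 * X ^ 5 + 2100 * X ^ 4 + 1040 * X
    ^ 3 + 240 * X ^ 2 - 8) ^ 4

def r : Polynomial ℚ :=
    -2 ^ 24 * (5 * X ^ 2 + 5 * X + 2) ^ 5 * (5 * X ^ 4 + 10 * X ^ 3 - 5 * X - 1) ^ 15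

def p : Polynomial ℚ := q + r

/-- `F = p − t·q ∈ K[X]` where `K = ℚ(t)` and `t = RatFunc.X`. -/
def F : Polynomial (RatFunc ℚ) :=
  p.map (algebraMap ℚ (RatFunc ℚ)) - Polynomial.C RatFunc.X * q.map (algebraMap ℚ (RatFunc ℚ))

end

/-!
With `s = 1 - t` the polynomial `F` is `s q + r`, and `r` and `q` are coprime, so `F` is irreducible
by Gauss's lemma.

The cross difference `r(X) q(Y) - q(X) r(Y)` has a factor `G(X, Y)` of degree `20` in `Y`. The
Galois group acts faithfully on the `85` roots and preserves the graph `G(x, y) = 0`. Reducing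
modulo a prime above `2311` at which all roots become rational identifies this graph with the
collinearity graph of the generalized quadrangle of order `(4, 4)`, whose automorphism group has
order `1958400` by a stabilizer chain.

Conversely, irreducibility makes the group transitive, and a Frobenius element at `13` of order
divisible by `15` fixes a root, so `85 * 15 = 1275` divides the order of the group. As a Frobenius
element at `179` is an odd permutation, `1275` also divides the order of the subgroup of even
permutations, of index `2`. Counting Sylow `17`-subgroups, every group of automorphisms of the graph
whose order is divisible by `1275` has order divisible by `979200 = 1958400 / 2`.
-/

namespace BelyiDegree85

section Sylow

variable {G : Type*} [Group G]

theorem mem_normalizer_zpowers [Finite G] {g k : G} (h : k * g * k⁻¹ ∈ Subgroup.zpowers g) :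
    k ∈ Subgroup.normalizer (Subgroup.zpowers g : Set G) := by
  refine Subgroup.mem_normalizer_fintype ?_
  rintro _ ⟨n, rfl⟩
  simpa [conj_zpow] using Subgroup.zpow_mem _ h n

variable {p : ℕ} [Fact p.Prime]

theorem exists_card_normalizer_eq_mul {P : Subgroup G} (hP : Nat.card P = p)
    (hC : Subgroup.centralizer (P : Set G) ≤ P) :
    ∃ d, d ∣ p - 1 ∧ Nat.card (Subgroup.normalizer (P : Set G)) = p * d := by
  have : Finite P := Nat.finite_of_card_ne_zero (hP ▸ (Fact.out : p.Prime).ne_zero)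
  have : IsCyclic P := isCyclic_of_prime_card hP
  have centralizer_eq : Subgroup.centralizer (P : Set G) = P :=
    hC.antisymm (Subgroup.le_centralizer P)
  have card_ker : Nat.card P.normalizerMonoidHom.ker = p := by
    rw [Subgroup.normalizerMonoidHom_ker, centralizer_eq,
      Nat.card_congr (Subgroup.subgroupOfEquivOfLe Subgroup.le_normalizer).toEquiv, hP]
  have card_range : Nat.card P.normalizerMonoidHom.range ∣ p - 1 := by
    have := Subgroup.card_subgroup_dvd_card P.normalizerMonoidHom.range
    rwa [IsCyclic.card_mulAut, hP, Nat.totient_prime Fact.out] at this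
  refine ⟨_, card_range, ?_⟩
  rw [← P.normalizerMonoidHom.ker.card_mul_index, Subgroup.index_ker, card_ker]

theorem centralizer_sylow_le [Finite (Sylow p G)] {P : Sylow p G}
    (hP : Subgroup.centralizer (P : Set G) ≤ P) (Q : Sylow p G) :
    Subgroup.centralizer (Q : Set G) ≤ Q := by
  obtain ⟨c, rfl⟩ := MulAction.exists_smul_eq G P Q
  intro y hy
  have mem_conj {z : G} : z ∈ (c • P : Sylow p G) ↔ c⁻¹ * z * c ∈ P := by
    rw [← SetLike.mem_coe, Sylow.coe_smul, Set.mem_smul_set_iff_inv_smul_mem]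
    simp [← map_inv, MulAut.smul_def, MulAut.conj_apply]
  refine mem_conj.mpr (hP (Subgroup.mem_centralizer_iff.mpr fun x hx => ?_))
  have commute_conj : c * x * c⁻¹ * y = y * (c * x * c⁻¹) :=
    Subgroup.mem_centralizer_iff.mp hy _ (mem_conj.mpr (by simpa [mul_assoc] using hx))
  calc x * (c⁻¹ * y * c) = c⁻¹ * (c * x * c⁻¹ * y) * c := by group
    _ = c⁻¹ * (y * (c * x * c⁻¹)) * c := by rw [commute_conj]
    _ = c⁻¹ * y * c * x := by group

theorem centralizer_le_of_centralizer_map_subtype_le {H : Subgroup G} {P : Subgroup H}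
    (hP : Subgroup.centralizer (P.map H.subtype : Set G) ≤ P.map H.subtype) :
    Subgroup.centralizer (P : Set H) ≤ P := by
  intro y hy
  have mem_map : (y : G) ∈ P.map H.subtype := by
    refine hP (Subgroup.mem_centralizer_iff.mpr ?_)
    rintro _ ⟨x, hx, rfl⟩
    exact congrArg Subtype.val (Subgroup.mem_centralizer_iff.mp hy x hx)
  obtain ⟨x, hx, hxy⟩ := mem_map
  exact Subtype.ext hxy ▸ hx

variable [Finite G]

/-- The Sylow subgroups of `H` are Sylow in `G` when the `p`-parts of the orders agree. -/
def sylowMapSubtype {H : Subgroup G}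
    (hH : (Nat.card H).factorization p = (Nat.card G).factorization p) (P : Sylow p H) :
    Sylow p G :=
  Sylow.ofCard (P.map H.subtype) <| by
    rw [Subgroup.card_map_of_injective H.subtype_injective, P.card_eq_multiplicity, hH]

theorem sylowMapSubtype_injective {H : Subgroup G}
    (hH : (Nat.card H).factorization p = (Nat.card G).factorization p) :
    Function.Injective (sylowMapSubtype hH) := fun _ _ h =>
  Sylow.ext (Subgroup.map_injective H.subtype_injective (congrArg Sylow.toSubgroup h))

theorem isPGroup_le_of_card_sylow_eq {H : Subgroup G}
    (hH : (Nat.card H).factorization p = (Nat.card G).factorization p)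
    (hn : Nat.card (Sylow p H) = Nat.card (Sylow p G)) {P : Subgroup G} (hP : IsPGroup p P) :
    P ≤ H := by
  obtain ⟨Q, hPQ⟩ := hP.exists_le_sylow
  have bijective := (Nat.bijective_iff_injective_and_card _).mpr ⟨sylowMapSubtype_injective hH, hn⟩
  obtain ⟨R, rfl⟩ := bijective.surjective Q
  exact hPQ.trans (Subgroup.map_subtype_le _)

theorem exists_card_eq_mul_card_sylow (hG : (Nat.card G).factorization p = 1) {P : Sylow p G}
    (hC : Subgroup.centralizer (P : Set G) ≤ P) :
    ∃ d, d ∣ p - 1 ∧ Nat.card G = p * d * Nat.card (Sylow p G) := by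
  have hP : Nat.card P = p := by rw [P.card_eq_multiplicity, hG, pow_one]
  obtain ⟨d, hd, hN⟩ := exists_card_normalizer_eq_mul hP hC
  refine ⟨d, hd, ?_⟩
  rw [P.card_eq_index_normalizer, ← hN]
  exact (Subgroup.card_mul_index _).symm

theorem mul_orderOf_mul_card_sylow_dvd_card (hG : p ∣ Nat.card G) {P : Sylow p G} {k : G}
    (hk : k ∈ Subgroup.normalizer (P : Set G)) (hpk : p.Coprime (orderOf k)) :
    p * orderOf k * Nat.card (Sylow p G) ∣ Nat.card G := by
  have index_eq := P.card_eq_index_normalizer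
  rw [← Subgroup.card_mul_index (Subgroup.normalizer (P : Set G)), index_eq]
  refine mul_dvd_mul_right (hpk.mul_dvd_of_dvd_of_dvd ?_ ?_) _
  · exact (P.dvd_card_of_dvd_card hG).trans (Subgroup.card_dvd_of_le Subgroup.le_normalizer)
  · exact Subgroup.orderOf_dvd_natCard _ hk

end Sylow

section Order1958400

theorem factorization_eq_one {p n : ℕ} (hp : p.Prime) (h1 : p ∣ n) (h2 : ¬p ^ 2 ∣ n) :
    n.factorization p = 1 := by
  have hn : n ≠ 0 := by rintro rfl; exact h2 (dvd_zero _)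
  rw [hp.dvd_iff_one_le_factorization hn] at h1
  rw [hp.pow_dvd_iff_le_factorization hn] at h2
  lia

instance : Fact (Nat.Prime 17) := ⟨by norm_num⟩

theorem factorization_seventeen_of_dvd {h : ℕ} (h1 : h ∣ 1958400) (h2 : 17 ∣ h) :
    h.factorization 17 = 1 :=
  factorization_eq_one (by norm_num) h2 fun h3 => absurd (h3.trans h1) (by norm_num)

theorem eq_14400_of_modEq_one {d n : ℕ} (h1 : 17 * d * n ∣ 1958400) (h2 : 1275 ∣ 17 * d * n)
    (hd : d ∣ 16) (hn : n ≡ 1 [MOD 17]) : n = 14400 := by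
  have dvd_n : 75 ∣ n := by
    refine Nat.Coprime.dvd_of_dvd_mul_left (m := 17 * d) ?_ (dvd_trans (by norm_num) h2)
    exact Nat.Coprime.mul_right (by norm_num) (Nat.Coprime.coprime_dvd_right hd (by norm_num))
  obtain ⟨m, rfl⟩ := dvd_n
  have m_dvd : m ∣ 1536 := by
    refine Nat.dvd_of_mul_dvd_mul_left (show 0 < 17 * 75 by norm_num) ?_
    exact dvd_trans ⟨d, by ring⟩ h1
  have unique : ∀ m ∈ Nat.divisors 1536, 75 * m % 17 = 1 → m = 192 := by decide +kernel
  rw [unique m (Nat.mem_divisors.mpr ⟨m_dvd, by norm_num⟩) hn]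

variable {G : Type*} [Group G]

theorem factorization_seventeen_subgroup (hG : Nat.card G = 1958400) {H : Subgroup G}
    (hH : 17 ∣ Nat.card H) :
    (Nat.card H).factorization 17 = (Nat.card G).factorization 17 := by
  rw [factorization_seventeen_of_dvd (hG ▸ Subgroup.card_subgroup_dvd_card H) hH,
    factorization_seventeen_of_dvd hG.dvd (by norm_num [hG])]

variable [Finite G]

theorem card_sylow_seventeen (h1 : Nat.card G ∣ 1958400) (h2 : 1275 ∣ Nat.card G)
    {P : Sylow 17 G} (hC : Subgroup.centralizer (P : Set G) ≤ P) :
    Nat.card (Sylow 17 G) = 14400 := by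
  have hG := factorization_seventeen_of_dvd h1 (dvd_trans (by norm_num) h2)
  obtain ⟨d, hd, hcard⟩ := exists_card_eq_mul_card_sylow hG hC
  rw [hcard] at h1 h2
  exact eq_14400_of_modEq_one h1 h2 hd (card_sylow_modEq_one 17 G)

theorem card_sylow_seventeen_subgroup (hG : Nat.card G = 1958400) {P : Sylow 17 G}
    (hC : Subgroup.centralizer (P : Set G) ≤ P) {H : Subgroup G} (hH : 1275 ∣ Nat.card H) :
    Nat.card (Sylow 17 H) = 14400 := by
  have factorization_eq := factorization_seventeen_subgroup hG (dvd_trans (by norm_num) hH)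
  let Q : Sylow 17 H := default
  have hQ : Subgroup.centralizer (Q : Set H) ≤ Q :=
    centralizer_le_of_centralizer_map_subtype_le
      (centralizer_sylow_le hC (sylowMapSubtype factorization_eq Q))
  exact card_sylow_seventeen (hG ▸ Subgroup.card_subgroup_dvd_card H) hH hQ

theorem mem_of_orderOf_eq_seventeen (hG : Nat.card G = 1958400) {P : Sylow 17 G}
    (hC : Subgroup.centralizer (P : Set G) ≤ P) {H : Subgroup G} (hH : 1275 ∣ Nat.card H)
    {x : G} (hx : orderOf x = 17) : x ∈ H := by
  have factorization_eq := factorization_seventeen_subgroup hG (dvd_trans (by norm_num) hH)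
  have card_sylow_eq : Nat.card (Sylow 17 H) = Nat.card (Sylow 17 G) := by
    rw [card_sylow_seventeen_subgroup hG hC hH, card_sylow_seventeen hG.dvd (by norm_num [hG]) hC]
  have isPGroup : IsPGroup 17 (Subgroup.zpowers x) :=
    IsPGroup.of_card (n := 1) (by rw [Nat.card_zpowers, hx, pow_one])
  exact isPGroup_le_of_card_sylow_eq factorization_eq card_sylow_eq isPGroup
    (Subgroup.mem_zpowers x)

-- The elements of order 17 all lie in `H`, hence so does `k`; as `k` normalizes a Sylow
-- 17-subgroup, the order of `H` is divisible by `17 * 4 * 14400`.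
theorem dvd_card_of_mem_closure (hG : Nat.card G = 1958400) {g k : G} (hg : orderOf g = 17)
    (hC : Subgroup.centralizer {g} ≤ Subgroup.zpowers g)
    (hk : orderOf k = 4) (hkg : k * g * k⁻¹ ∈ Subgroup.zpowers g)
    (hk_mem : k ∈ Subgroup.closure {x : G | orderOf x = 17})
    {H : Subgroup G} (hH : 1275 ∣ Nat.card H) : 979200 ∣ Nat.card H := by
  have hfactor := factorization_seventeen_of_dvd hG.dvd (by norm_num [hG])
  have h17 : 17 ∣ Nat.card H := dvd_trans (by norm_num) hH
  let P : Sylow 17 G :=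
    Sylow.ofCard (Subgroup.zpowers g) (by rw [Nat.card_zpowers, hg, hfactor, pow_one])
  have hP : Subgroup.centralizer (P : Set G) ≤ P := by
    change Subgroup.centralizer (Subgroup.zpowers g : Set G) ≤ Subgroup.zpowers g
    rwa [Subgroup.zpowers_eq_closure, Subgroup.centralizer_closure,
      ← Subgroup.zpowers_eq_closure]
  have mem_H {x : G} (hx : orderOf x = 17) : x ∈ H := mem_of_orderOf_eq_seventeen hG hP hH hx
  have hPH : (P : Subgroup G) ≤ H := Subgroup.zpowers_le.mpr (mem_H hg)
  have hkH : k ∈ H := (Subgroup.closure_le H).mpr (fun _ => mem_H) hk_mem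
  have hkN : (⟨k, hkH⟩ : H) ∈ Subgroup.normalizer (P.subtype hPH : Set H) := by
    have := Subgroup.mem_normalizer_iff.mp (mem_normalizer_zpowers hkg)
    exact Subgroup.mem_normalizer_iff.mpr fun x => this x
  have := mul_orderOf_mul_card_sylow_dvd_card h17 hkN (by norm_num [hk])
  rwa [Subgroup.orderOf_mk, hk, card_sylow_seventeen_subgroup hG hP hH] at this

end Order1958400

section AutomorphismGroup

variable {α β : Type*}

/-- The automorphism group of an edge colouring `c`, a graph being a colouring by `Bool`. -/
def automorphismGroup (c : α → α → β) : Subgroup (Equiv.Perm α) where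
  carrier := {σ | ∀ i j, c (σ i) (σ j) = c i j}
  mul_mem' hσ hτ i j := (hσ _ _).trans (hτ i j)
  one_mem' _ _ := rfl
  inv_mem' {σ} hσ i j := by simpa using (hσ (σ⁻¹ i) (σ⁻¹ j)).symm

variable {c : α → α → β}

/-- A colour-preserving self-map of a finite set is a permutation as soon as no two points have
the same neighbourhoods. -/
noncomputable def automorphismOfMap [Finite α] (hc : Function.Injective c) (f : α → α)
    (hf : ∀ i j, c (f i) (f j) = c i j) : automorphismGroup c :=
  ⟨Equiv.ofBijective f <| Finite.injective_iff_bijective.mp fun i j hij =>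
    hc <| funext fun k => by rw [← hf i k, hij, hf j k], hf⟩

theorem map_color_smul_of_mem_fixingSubgroup {s : List α} {σ : automorphismGroup c}
    (hσ : σ ∈ fixingSubgroup (automorphismGroup c) {x | x ∈ s}) (z : α) :
    s.map (c (σ • z)) = s.map (c z) := by
  refine List.map_congr_left fun x hx => ?_
  conv_lhs => rw [← (mem_fixingSubgroup_iff _).mp hσ x hx]
  exact σ.2 z x

theorem fixingSubgroup_le_of_color_determined {s : List α} {t : Set α}
    (h : ∀ z ∈ t, z ∈ s ∨ ∀ w, s.map (c w) = s.map (c z) → w = z) :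
    fixingSubgroup (automorphismGroup c) {x | x ∈ s} ≤
      fixingSubgroup (automorphismGroup c) t := fun _ hσ =>
  (mem_fixingSubgroup_iff _).mpr fun z hz => (h z hz).elim
    (fun hzs => (mem_fixingSubgroup_iff _).mp hσ z hzs)
    fun determined => determined _ (map_color_smul_of_mem_fixingSubgroup hσ z)

theorem fixingSubgroup_eq_bot_of_color_determined {s : List α}
    (h : ∀ z, z ∈ s ∨ ∀ w, s.map (c w) = s.map (c z) → w = z) :
    fixingSubgroup (automorphismGroup c) {x | x ∈ s} = ⊥ :=
  (Subgroup.eq_bot_iff_forall _).mpr fun _ hσ => Subtype.ext <| Equiv.ext fun z =>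
    (mem_fixingSubgroup_iff _).mp
      (fixingSubgroup_le_of_color_determined (t := Set.univ) (fun z _ => h z) hσ) z (Set.mem_univ z)

end AutomorphismGroup

section StabilizerChain

variable {G α : Type*} [Group G] [MulAction G α]

theorem card_fixingSubgroup_eq_mul [Finite α] (s : Set α) (b : α) :
    Nat.card (fixingSubgroup G s) =
      (MulAction.orbit (fixingSubgroup G s) b).ncard *
        Nat.card (fixingSubgroup G (insert b s)) := by
  let e : MulAction.stabilizer (fixingSubgroup G s) b ≃ fixingSubgroup G (insert b s) :=
    { toFun σ := ⟨σ, SubMulAction.mem_fixingSubgroup_insert_iff.mpr ⟨σ.2, σ.1.2⟩⟩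
      invFun σ := ⟨⟨σ, (SubMulAction.mem_fixingSubgroup_insert_iff.mp σ.2).2⟩,
        (SubMulAction.mem_fixingSubgroup_insert_iff.mp σ.2).1⟩ }
  rw [← Nat.card_congr e, ← MulAction.index_stabilizer, mul_comm, Subgroup.card_mul_index]

/-- Each entry is `b` or the image of a later entry under a member of `gs`, so that the list
enumerates points of the orbit of `b`. -/
def IsOrbitEnumeration (gs : List G) (b : α) : List α → Prop
  | [] => True
  | x :: l => (x = b ∨ ∃ y ∈ l, ∃ g ∈ gs, g • y = x) ∧ IsOrbitEnumeration gs b l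

instance decidableIsOrbitEnumeration [DecidableEq α] (gs : List G) (b : α) :
    DecidablePred (IsOrbitEnumeration gs b)
  | [] => inferInstanceAs (Decidable True)
  | x :: l =>
    haveI := decidableIsOrbitEnumeration gs b l
    inferInstanceAs
      (Decidable ((x = b ∨ ∃ y ∈ l, ∃ g ∈ gs, g • y = x) ∧ IsOrbitEnumeration gs b l))

theorem IsOrbitEnumeration.mem_orbit {H : Subgroup G} {gs : List G} (hgs : ∀ g ∈ gs, g ∈ H) {b : α}
    {O : List α} (hO : IsOrbitEnumeration gs b O) {x : α} (hx : x ∈ O) :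
    x ∈ MulAction.orbit H b := by
  induction O generalizing x with
  | nil => exact absurd hx List.not_mem_nil
  | cons z l ih =>
    rcases List.mem_cons.mp hx with rfl | hx
    · rcases hO.1 with rfl | ⟨y, hy, g, hg, rfl⟩
      · exact MulAction.mem_orbit_self x
      · exact MulAction.mem_orbit_of_mem_orbit (⟨g, hgs g hg⟩ : H) (ih hO.2 hy)
    · exact ih hO.2 hx

theorem card_fixingSubgroup_automorphismGroup {β : Type*} [Finite α] {c : α → α → β} (s : List α)
    (b : α) (gs : List (automorphismGroup c)) (O : List α)
    (hgs : ∀ g ∈ gs, ∀ x ∈ s, g • x = x) (hO : IsOrbitEnumeration gs b O) (hO_nodup : O.Nodup)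
    (hb : b ∈ O) (hsep : ∀ w, w ∈ O ∨ w ∈ s ∨ s.map (c w) ≠ s.map (c b)) :
    Nat.card (fixingSubgroup (automorphismGroup c) {x | x ∈ s}) =
      O.length * Nat.card (fixingSubgroup (automorphismGroup c) {x | x ∈ b :: s}) := by
  classical
  have orbit_eq : MulAction.orbit (fixingSubgroup (automorphismGroup c) {x | x ∈ s}) b =
      O.toFinset := by
    ext w
    rw [List.coe_toFinset]
    refine ⟨?_, hO.mem_orbit fun g hg => (mem_fixingSubgroup_iff _).mpr (hgs g hg)⟩
    rintro ⟨σ, rfl⟩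
    rcases hsep (σ • b) with hw | hw | hne
    · exact hw
    · have : σ • b = b := MulAction.injective σ ((mem_fixingSubgroup_iff _).mp σ.2 _ hw)
      exact (congrArg (· ∈ _) this).mpr hb
    · exact absurd (map_color_smul_of_mem_fixingSubgroup σ.2 b) hne
  have insert_eq : insert b {x | x ∈ s} = {x | x ∈ b :: s} := by
    ext x
    simp only [Set.mem_insert_iff, Set.mem_ofPred_eq, List.mem_cons]
  rw [card_fixingSubgroup_eq_mul _ b, orbit_eq, Set.ncard_coe_finset, insert_eq,
    List.toFinset_card_of_nodup hO_nodup]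

end StabilizerChain

section Graph

/-- The graph has a semiregular automorphism with five orbits of length 17, the blocks
`17 * a, …, 17 * a + 16`; bit `d` of entry `(a, b)` tells whether `17 * a + i` and
`17 * b + (i + d) % 17` are adjacent. -/
def connectionMasks : List (List ℕ) :=
  [[4896, 32768, 2311, 109568, 20642], [4, 49164, 39176, 35348, 9244],
    [98881, 16996, 10320, 4096, 49165], [214, 41284, 32, 66690, 25633],
    [70696, 57488, 49165, 4249, 0]]

/-- The adjacency relation of the collinearity graph of the 85 points of the symplectic
generalized quadrangle `W(3, 4)`. -/
def adj (i j : Fin 85) : Bool :=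
  ((connectionMasks.getD (i.val / 17) []).getD (j.val / 17) 0).testBit
    ((j.val % 17 + 17 - i.val % 17) % 17)

theorem adj_injective : Function.Injective adj := by decide +kernel

/-- The self-map of `Fin n` with the given list of values. -/
def ofImages {n : ℕ} [NeZero n] (l : List ℕ) (i : Fin n) : Fin n := Fin.ofNat n (l.getD i 0)

theorem color_ofImages {n : ℕ} [NeZero n] {β : Type*} {c : Fin n → Fin n → β} {l : List ℕ}
    (hl : l.length = n)
    (h : ∀ a ∈ l.zipIdx, ∀ b ∈ l.zipIdx,
      c (Fin.ofNat n a.1) (Fin.ofNat n b.1) = c (Fin.ofNat n a.2) (Fin.ofNat n b.2))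
    (i j : Fin n) : c (ofImages l i) (ofImages l j) = c i j := by
  have mem_zipIdx (i : Fin n) : (l.getD i 0, i.val) ∈ l.zipIdx := by
    simp [List.mem_zipIdx_iff_getElem?, hl]
  simpa [ofImages] using h _ (mem_zipIdx i) _ (mem_zipIdx j)

/-- Value lists of strong generators for the stabilizer chain with base
`0, 1, 9, 35, 34, 32, 45`: entry `k` fixes the first `6 - k` base points. -/
def chainImages : List (List ℕ) :=
  [[0, 1, 11, 52, 54, 12, 63, 39, 8, 9, 46, 2, 5, 81, 56, 31, 71, 60, 79, 22, 48, 25, 19, 23,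
      72, 21, 38, 41, 49, 30, 29, 15, 32, 65, 34, 35, 36, 74, 26, 7, 68, 27, 73, 43, 58, 82, 10,
      47, 20, 28, 57, 76, 3, 53, 4, 77, 14, 50, 44, 78, 17, 66, 67, 6, 69, 33, 61, 62, 40, 64,
      70, 16, 24, 42, 37, 80, 51, 55, 59, 18, 75, 13, 45, 83, 84],
    [0, 1, 77, 28, 44, 42, 70, 41, 66, 9, 46, 60, 75, 76, 14, 26, 16, 55, 25, 19, 27, 57, 47,
      71, 84, 18, 15, 20, 3, 49, 52, 68, 69, 51, 34, 35, 67, 43, 40, 48, 38, 7, 5, 37, 4, 82,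
      10, 22, 39, 29, 79, 33, 30, 56, 78, 17, 53, 21, 59, 58, 11, 61, 62, 63, 64, 81, 8, 36, 31,
      32, 6, 23, 72, 80, 74, 12, 13, 2, 54, 50, 73, 65, 45, 83, 24],
    [0, 1, 30, 40, 54, 8, 65, 41, 12, 9, 83, 15, 5, 81, 58, 29, 7, 38, 25, 18, 23, 79, 21, 48,
      24, 19, 60, 39, 17, 11, 31, 2, 69, 63, 82, 35, 62, 74, 28, 71, 55, 16, 75, 37, 56, 34, 10,
      50, 20, 26, 57, 33, 77, 4, 53, 3, 78, 47, 59, 14, 49, 80, 67, 51, 32, 76, 42, 36, 52, 64,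
      13, 27, 72, 61, 43, 66, 6, 68, 44, 22, 73, 70, 45, 46, 84],
    [0, 1, 50, 41, 4, 64, 83, 18, 75, 9, 81, 30, 73, 65, 14, 47, 38, 25, 7, 40, 57, 52, 71,
      31, 24, 17, 68, 60, 55, 48, 11, 23, 80, 76, 34, 67, 62, 37, 16, 77, 19, 3, 61, 43, 44, 45,
      51, 15, 29, 79, 2, 46, 21, 53, 54, 28, 56, 20, 58, 59, 27, 42, 36, 70, 5, 13, 69, 35, 26,
      66, 63, 22, 72, 12, 74, 8, 33, 39, 78, 49, 32, 10, 82, 6, 84],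
    [0, 1, 31, 40, 48, 8, 65, 59, 5, 35, 43, 29, 12, 13, 16, 15, 14, 17, 25, 19, 53, 22, 21,
      54, 24, 18, 26, 56, 38, 11, 30, 2, 45, 51, 64, 9, 67, 46, 28, 44, 3, 58, 66, 10, 39, 32,
      37, 57, 4, 60, 50, 33, 52, 20, 23, 55, 27, 47, 41, 7, 49, 61, 62, 63, 34, 6, 42, 36, 77,
      82, 81, 78, 72, 80, 83, 75, 76, 68, 71, 79, 73, 70, 69, 74, 84],
    [0, 59, 11, 77, 18, 75, 27, 84, 64, 73, 58, 55, 67, 21, 39, 30, 54, 16, 40, 79, 44, 25,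
      48, 78, 37, 13, 17, 1, 49, 70, 83, 7, 34, 52, 42, 9, 69, 60, 46, 43, 38, 53, 35, 15, 26,
      8, 72, 6, 24, 50, 28, 47, 2, 63, 20, 65, 29, 57, 19, 51, 68, 5, 66, 76, 45, 33, 61, 12,
      22, 82, 31, 74, 4, 32, 10, 80, 23, 3, 41, 71, 62, 81, 36, 14, 56]]

theorem adj_ofImages_chainImages : ∀ l ∈ chainImages, ∀ i j : Fin 85,
    adj (ofImages l i) (ofImages l j) = adj i j := by
  have length_eq : ∀ l ∈ chainImages, l.length = 85 := by decide +kernel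
  have preserve : ∀ l ∈ chainImages, ∀ a ∈ l.zipIdx, ∀ b ∈ l.zipIdx,
      adj (Fin.ofNat 85 a.1) (Fin.ofNat 85 b.1) = adj (Fin.ofNat 85 a.2) (Fin.ofNat 85 b.2) := by
    decide +kernel
  exact fun l hl => color_ofImages (length_eq l hl) (preserve l hl)

/-- The strong generators with values `chainImages`. -/
noncomputable def chainGen (k : Fin 6) : automorphismGroup adj :=
  automorphismOfMap adj_injective (ofImages chainImages[k])
    (adj_ofImages_chainImages _ (List.getElem_mem _))

theorem adj_rotation : ∀ i j : Fin 85,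
    adj (Fin.ofNat 85 (17 * (i.val / 17) + (i.val % 17 + 1) % 17))
      (Fin.ofNat 85 (17 * (j.val / 17) + (j.val % 17 + 1) % 17)) = adj i j := by
  decide +kernel

/-- The automorphism of order 17 rotating each block. -/
noncomputable def rotation : automorphismGroup adj :=
  automorphismOfMap adj_injective _ adj_rotation

theorem fixingSubgroup_base_eq_bot :
    fixingSubgroup (automorphismGroup adj) {x : Fin 85 | x ∈ [45, 32, 34, 35, 9, 1, 0]} = ⊥ := by
  have determined₁ := fixingSubgroup_le_of_color_determined (c := adj)
    (s := [45, 32, 34, 35, 9, 1, 0]) (t := {x | x ∈ [45, 32, 34, 35, 9, 1, 0, 10, 43, 46, 51, 70]})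
    (by decide +kernel)
  have determined₂ := fixingSubgroup_le_of_color_determined (c := adj)
    (s := [45, 32, 34, 35, 9, 1, 0, 10, 43, 46, 51, 70])
    (t := {x | x ∈ [0, 1, 2, 3, 23, 31, 19, 49, 50, 5, 6, 7, 45, 8, 11, 12]}) (by decide +kernel)
  have determined₃ := fixingSubgroup_eq_bot_of_color_determined (c := adj)
    (s := [0, 1, 2, 3, 23, 31, 19, 49, 50, 5, 6, 7, 45, 8, 11, 12]) (by decide +kernel)
  exact eq_bot_iff.mpr (determined₁.trans (determined₂.trans determined₃.le))

/-- The orbit of `0` at step 0 of the stabilizer chain. -/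
def pointOrbit : List (Fin 85) :=
  [75, 74, 73, 72, 71, 70, 69, 68, 84, 83, 82, 81, 80, 79, 78, 77, 76, 18, 17, 33, 32, 31, 30,
    29, 28, 27, 26, 25, 24, 23, 22, 21, 20, 19, 59, 58, 57, 56, 55, 54, 53, 52, 51, 67, 66, 65,
    64, 63, 62, 61, 60, 37, 36, 35, 34, 50, 49, 48, 47, 46, 45, 44, 43, 42, 41, 40, 39, 38, 16,
    15, 14, 13, 12, 11, 10, 9, 8, 7, 6, 5, 4, 3, 2, 1, 0]

/-- The orbit of `1` at step 1 of the stabilizer chain. -/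
def nonneighborOrbit : List (Fin 85) :=
  [31, 83, 81, 37, 2, 74, 24, 70, 11, 30, 49, 55, 25, 21, 28, 84, 17, 68, 60, 38, 57, 15, 50,
    72, 10, 52, 63, 65, 23, 6, 13, 43, 77, 71, 48, 29, 79, 40, 18, 22, 3, 16, 7, 27, 26, 20, 53,
    4, 47, 46, 33, 76, 39, 56, 19, 41, 44, 54, 51, 14, 58, 78, 59, 1]

theorem card_automorphismGroup_adj : Nat.card (automorphismGroup adj) = 1958400 := by
  have card_0 := card_fixingSubgroup_automorphismGroup (c := adj) [] 0
    [chainGen 1, chainGen 3, chainGen 5, rotation] pointOrbit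
    (by decide +kernel) (by decide +kernel) (by decide +kernel) (by decide +kernel)
    (by decide +kernel)
  have card_1 := card_fixingSubgroup_automorphismGroup (c := adj) [0] 1
    [chainGen 0, chainGen 1, chainGen 2, chainGen 3, chainGen 5] nonneighborOrbit
    (by decide +kernel) (by decide +kernel) (by decide +kernel) (by decide +kernel)
    (by decide +kernel)
  have card_2 := card_fixingSubgroup_automorphismGroup (c := adj) [1, 0] 9
    [chainGen 0, chainGen 3, chainGen 4] [36, 62, 67, 35, 9]
    (by decide +kernel) (by decide +kernel) (by decide +kernel) (by decide +kernel)
    (by decide +kernel)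
  have card_3 := card_fixingSubgroup_automorphismGroup (c := adj) [9, 1, 0] 35
    [chainGen 0, chainGen 1, chainGen 3] [36, 62, 67, 35]
    (by decide +kernel) (by decide +kernel) (by decide +kernel) (by decide +kernel)
    (by decide +kernel)
  have card_4 := card_fixingSubgroup_automorphismGroup (c := adj) [35, 9, 1, 0] 34
    [chainGen 2] [45, 82, 34]
    (by decide +kernel) (by decide +kernel) (by decide +kernel) (by decide +kernel)
    (by decide +kernel)
  have card_5 := card_fixingSubgroup_automorphismGroup (c := adj) [34, 35, 9, 1, 0] 32
    [chainGen 0, chainGen 1] [64, 69, 32]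
    (by decide +kernel) (by decide +kernel) (by decide +kernel) (by decide +kernel)
    (by decide +kernel)
  have card_6 := card_fixingSubgroup_automorphismGroup (c := adj) [32, 34, 35, 9, 1, 0] 45
    [chainGen 0] [82, 45]
    (by decide +kernel) (by decide +kernel) (by decide +kernel) (by decide +kernel)
    (by decide +kernel)
  have card_nil :
      Nat.card (fixingSubgroup (automorphismGroup adj) {x | x ∈ ([] : List (Fin 85))}) =
        Nat.card (automorphismGroup adj) := by simp
  rw [← card_nil, card_0, card_1, card_2, card_3, card_4, card_5, card_6,
    fixingSubgroup_base_eq_bot, Subgroup.card_bot]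
  decide +kernel

theorem orderOf_rotation : orderOf rotation = 17 :=
  orderOf_eq_prime (by decide +kernel) (by decide +kernel)

theorem rotation_pow_apply : ∀ a : Fin 5, ∀ i : Fin 17,
    rotation ^ i.val • Fin.ofNat 85 (17 * a) = Fin.ofNat 85 (17 * a + i) := by
  decide +kernel

theorem block_not_isometric : ∀ a : Fin 5, a ≠ 0 → ∃ i : Fin 17,
    adj (Fin.ofNat 85 (17 * a)) (Fin.ofNat 85 (17 * a + i)) ≠ adj 0 (Fin.ofNat 85 i) := by
  decide +kernel

theorem eq_one_of_commute_rotation {σ : automorphismGroup adj} (hσ : Commute σ rotation)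
    {a : Fin 5} (ha : σ • (0 : Fin 85) = Fin.ofNat 85 (17 * a)) : σ = 1 := by
  have smul_eq (i : Fin 17) : σ • Fin.ofNat 85 i = Fin.ofNat 85 (17 * a + i) := by
    have h := rotation_pow_apply 0 i
    rw [Fin.val_zero, mul_zero, zero_add] at h
    rw [← h, ← mul_smul, (hσ.pow_right i).eq, mul_smul, ← rotation_pow_apply a i, ← ha]
    rfl
  obtain rfl : a = 0 := by
    by_contra h
    obtain ⟨i, hi⟩ := block_not_isometric a h
    exact hi (by rw [← ha, ← smul_eq]; exact σ.2 _ _)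
  have mem_fixing : σ ∈ fixingSubgroup (automorphismGroup adj)
      {x : Fin 85 | x ∈ (List.range 17).map (Fin.ofNat 85)} := by
    refine (mem_fixingSubgroup_iff _).mpr fun x hx => ?_
    obtain ⟨i, hi, rfl⟩ := List.mem_map.mp hx
    simpa using smul_eq ⟨i, List.mem_range.mp hi⟩
  rwa [fixingSubgroup_eq_bot_of_color_determined (by decide +kernel), Subgroup.mem_bot]
    at mem_fixing

theorem centralizer_rotation_le :
    Subgroup.centralizer {rotation} ≤ Subgroup.zpowers rotation := by
  intro σ hσ
  have commute : Commute σ rotation := Subgroup.mem_centralizer_singleton_iff.mp hσ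
  let x : Fin 85 := σ • 0
  have smul_eq : rotation ^ (x.val % 17) • Fin.ofNat 85 (17 * (x.val / 17)) = x :=
    (rotation_pow_apply ⟨x / 17, by omega⟩ ⟨x % 17, by omega⟩).trans <|
      Fin.ext (by simp [Nat.div_add_mod])
  have eq_one : (rotation ^ (x.val % 17))⁻¹ * σ = 1 :=
    eq_one_of_commute_rotation (a := ⟨x / 17, by omega⟩)
      (((Commute.refl rotation).pow_left _).inv_left.mul_left commute)
      (by rw [mul_smul, inv_smul_eq_iff]; exact smul_eq.symm)
  exact inv_mul_eq_one.mp eq_one ▸ Subgroup.npow_mem_zpowers _ _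

/-- An element of order 4 normalizing `rotation`, and a product of two elements of order 17. -/
noncomputable def rotationNormalizer : automorphismGroup adj :=
  (chainGen 0 * rotation * chainGen 0) * ((chainGen 3 * rotation ^ 16 * chainGen 2) *
    rotation ^ 13 * (chainGen 2 * chainGen 2 * rotation * chainGen 3))

theorem orderOf_rotationNormalizer : orderOf rotationNormalizer = 4 :=
  orderOf_eq_prime_pow (p := 2) (n := 1) (by decide +kernel) (by decide +kernel)

theorem rotationNormalizer_conj_rotation :
    rotationNormalizer * rotation * rotationNormalizer⁻¹ ∈ Subgroup.zpowers rotation := by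
  have h : rotationNormalizer * rotation = rotation ^ 13 * rotationNormalizer := by
    decide +kernel
  rw [h, mul_inv_cancel_right]
  exact Subgroup.npow_mem_zpowers _ _

theorem rotationNormalizer_mem_closure :
    rotationNormalizer ∈ Subgroup.closure {x | orderOf x = 17} := by
  have inv_eq : (chainGen 0)⁻¹ = chainGen 0 := inv_eq_of_mul_eq_one_right (by decide +kernel)
  have inv_eq' : (chainGen 3 * rotation ^ 16 * chainGen 2)⁻¹ =
      chainGen 2 * chainGen 2 * rotation * chainGen 3 :=
    inv_eq_of_mul_eq_one_right (by decide +kernel)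
  have orderOf_conj (σ : automorphismGroup adj) {n : ℕ} (hn : Nat.Coprime 17 n) :
      orderOf (σ * rotation ^ n * σ⁻¹) = 17 := by
    rw [← SemiconjBy.orderOf_eq σ (SemiconjBy.conj_mk σ _)]
    rw [← orderOf_rotation] at hn ⊢
    exact hn.orderOf_pow
  rw [rotationNormalizer, ← inv_eq']
  nth_rewrite 2 [← inv_eq]
  nth_rewrite 1 [← pow_one rotation]
  exact mul_mem (Subgroup.subset_closure (orderOf_conj _ (by norm_num)))
    (Subgroup.subset_closure (orderOf_conj _ (by norm_num)))

theorem two_mul_card_ker_sign {α : Type*} [Fintype α] [DecidableEq α] {H : Subgroup (Equiv.Perm α)}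
    (hodd : ∃ σ ∈ H, Equiv.Perm.sign σ = -1) :
    Nat.card (Equiv.Perm.sign.comp H.subtype).ker * 2 = Nat.card H := by
  obtain ⟨σ, hσ, sign_σ⟩ := hodd
  have surjective : Function.Surjective (Equiv.Perm.sign.comp H.subtype) := fun u =>
    (Int.units_eq_one_or u).elim (fun hu => ⟨1, by rw [hu, map_one]⟩)
      fun hu => ⟨⟨σ, hσ⟩, sign_σ.trans hu.symm⟩
  have index_eq : (Equiv.Perm.sign.comp H.subtype).ker.index = 2 := by
    rw [Subgroup.index_ker, MonoidHom.range_eq_top.mpr surjective, Subgroup.card_top,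
      Nat.card_eq_fintype_card, Fintype.card_units_int]
  rw [← index_eq, Subgroup.card_mul_index]

theorem card_eq_of_le_automorphismGroup_adj {H : Subgroup (Equiv.Perm (Fin 85))}
    (hle : H ≤ automorphismGroup adj) (hdvd : 1275 ∣ Nat.card H)
    (hodd : ∃ σ ∈ H, Equiv.Perm.sign σ = -1) : Nat.card H = 1958400 := by
  have card_ker := two_mul_card_ker_sign hodd
  set N := (Equiv.Perm.sign.comp H.subtype).ker
  have card_map : Nat.card (N.map (Subgroup.inclusion hle)) = Nat.card N :=
    Subgroup.card_map_of_injective (Subgroup.inclusion_injective hle)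
  have dvd_ker : 1275 ∣ Nat.card N :=
    Nat.Coprime.dvd_of_dvd_mul_right (by norm_num) (card_ker ▸ hdvd)
  have dvd_ker' : 979200 ∣ Nat.card N :=
    card_map ▸ dvd_card_of_mem_closure card_automorphismGroup_adj orderOf_rotation
      centralizer_rotation_le orderOf_rotationNormalizer rotationNormalizer_conj_rotation
      rotationNormalizer_mem_closure (card_map ▸ dvd_ker)
  exact Nat.dvd_antisymm (card_automorphismGroup_adj ▸ Subgroup.card_dvd_of_le hle)
    (card_ker ▸ mul_dvd_mul dvd_ker' dvd_rfl)

end Graph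

/-- Strict application: when `force a f` is evaluated by the kernel, `a` is brought to normal form
before it is passed to `f`, so that it is not recomputed at each of its occurrences. -/
class Force (α : Type*) where
  /-- Evaluate the argument, then apply the function. -/
  force {β : Type} : α → (α → β) → β
  force_eq {β : Type} (a : α) (f : α → β) : force a f = f a

open Force (force force_eq)

instance : Force ℕ where
  force
    | 0, f => f 0
    | n + 1, f => f (n + 1)
  force_eq n f := by cases n <;> rfl

instance : Force ℤ where
  force
    | .ofNat n, f => force n fun n => f (.ofNat n)
    | .negSucc n, f => force n fun n => f (.negSucc n)
  force_eq z f := by cases z <;> simp only [force_eq]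

/-- Strict application to a list, entry by entry. -/
def forceList {α : Type*} [Force α] {β : Type} : List α → (List α → β) → β
  | [], f => f []
  | a :: l, f => force a fun a => forceList l fun l => f (a :: l)

instance {α : Type*} [Force α] : Force (List α) where
  force := forceList
  force_eq l f := by
    induction l generalizing f with
    | nil => rfl
    | cons a l ih => simp only [forceList, force_eq, ih]

section CoefficientLists

/-- The polynomial with the given list of coefficients, constant term first. -/
noncomputable def ofCoeffs {R : Type*} [Semiring R] : List R → R[X]
  | [] => 0
  | a :: l => C a + X * ofCoeffs l

theorem map_ofCoeffs {R S : Type*} [Semiring R] [Semiring S] (f : R →+* S) (l : List R) :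
    (ofCoeffs l).map f = ofCoeffs (l.map f) := by
  induction l with
  | nil => simp [ofCoeffs]
  | cons a l ih => simp [ofCoeffs, ih]

theorem coeff_ofCoeffs {R : Type*} [Semiring R] (l : List R) (n : ℕ) :
    (ofCoeffs l).coeff n = l.getD n 0 := by
  induction l generalizing n with
  | nil => simp [ofCoeffs]
  | cons a l ih => cases n <;> simp [ofCoeffs, coeff_C_succ, ih]

theorem natDegree_ofCoeffs_le {R : Type*} [Semiring R] {l : List R} {n : ℕ}
    (hl : l.length ≤ n + 1) : (ofCoeffs l).natDegree ≤ n := by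
  refine natDegree_le_iff_coeff_eq_zero.mpr fun k hk => ?_
  rw [coeff_ofCoeffs, List.getD_eq_default _ _ (by lia)]

/-- The polynomial over `R` whose coefficients are the images of the given integers. -/
noncomputable def intPoly (R : Type*) [Ring R] (l : List ℤ) : R[X] :=
  ofCoeffs (l.map (Int.castRingHom R))

theorem map_intPoly {R S : Type*} [Ring R] [Ring S] (f : R →+* S) (l : List ℤ) :
    (intPoly R l).map f = intPoly S l := by
  simp only [intPoly, map_ofCoeffs, List.map_map, ← RingHom.coe_comp, Subsingleton.elim
    (f.comp (Int.castRingHom R)) (Int.castRingHom S)]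

/-- Sum of coefficient lists. -/
def addCoeffs : List ℤ → List ℤ → List ℤ
  | [], b => b
  | a, [] => a
  | x :: a, y :: b => (x + y) :: addCoeffs a b

/-- Multiple of a coefficient list by a constant. -/
def smulCoeffs (c : ℤ) (l : List ℤ) : List ℤ := l.map (c * ·)

/-- Product of coefficient lists. -/
def mulCoeffs (a b : List ℤ) : List ℤ :=
  force a fun a => force b fun b =>
    a.foldr (fun x c => force c fun c => addCoeffs (smulCoeffs x b) (0 :: c)) []

/-- Power of a coefficient list. -/
def powCoeffs (l : List ℤ) : ℕ → List ℤ
  | 0 => [1]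
  | n + 1 => mulCoeffs l (powCoeffs l n)

/-- Coefficient list of the derivative. -/
def derivCoeffs : List ℤ → List ℤ
  | [] => []
  | _ :: l => addCoeffs l (0 :: derivCoeffs l)

/-- Equality of coefficient lists up to trailing zeros. -/
def eqCoeffs (a b : List ℤ) : Bool := (addCoeffs a (smulCoeffs (-1) b)).all (· == 0)

section

variable {R : Type*} [CommRing R]

theorem intPoly_cons (x : ℤ) (l : List ℤ) : intPoly R (x :: l) = C (x : R) + X * intPoly R l := by
  simp [intPoly, ofCoeffs]

@[simp]
theorem intPoly_nil : intPoly R [] = 0 := rfl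

theorem intPoly_addCoeffs (a b : List ℤ) :
    intPoly R (addCoeffs a b) = intPoly R a + intPoly R b := by
  induction a, b using addCoeffs.induct with
  | case1 b => simp [addCoeffs]
  | case2 a h => cases a <;> simp [addCoeffs]
  | case3 x a y b ih =>
    simp only [addCoeffs, intPoly_cons, ih, Int.cast_add, C_add]
    ring

theorem intPoly_smulCoeffs (c : ℤ) (l : List ℤ) :
    intPoly R (smulCoeffs c l) = C (c : R) * intPoly R l := by
  induction l with
  | nil => simp [smulCoeffs]
  | cons x l ih =>
    rw [smulCoeffs, List.map_cons, ← smulCoeffs, intPoly_cons, ih, intPoly_cons]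
    simp only [Int.cast_mul, C_mul]
    ring

theorem intPoly_mulCoeffs (a b : List ℤ) :
    intPoly R (mulCoeffs a b) = intPoly R a * intPoly R b := by
  simp only [mulCoeffs, force_eq]
  induction a with
  | nil => simp
  | cons x a ih =>
    rw [List.foldr_cons, intPoly_addCoeffs, intPoly_smulCoeffs, intPoly_cons 0, ih, intPoly_cons]
    simp only [Int.cast_zero, C_0]
    ring

theorem intPoly_powCoeffs (l : List ℤ) (n : ℕ) :
    intPoly R (powCoeffs l n) = intPoly R l ^ n := by
  induction n with
  | zero => simp [powCoeffs, intPoly_cons]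
  | succ n ih => rw [powCoeffs, intPoly_mulCoeffs, ih, pow_succ']

theorem intPoly_derivCoeffs (l : List ℤ) :
    intPoly R (derivCoeffs l) = derivative (intPoly R l) := by
  induction l with
  | nil => simp [derivCoeffs]
  | cons x l ih => simp [derivCoeffs, intPoly_addCoeffs, intPoly_cons, ih]

theorem coeff_intPoly (l : List ℤ) (n : ℕ) : (intPoly R l).coeff n = (l.getD n 0 : ℤ) := by
  rw [intPoly, coeff_ofCoeffs, ← map_zero (Int.castRingHom R), List.getD_map]
  rfl

theorem intPoly_eq_of_eqCoeffs {a b : List ℤ} (h : eqCoeffs a b = true) :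
    intPoly R a = intPoly R b := by
  suffices ∀ l : List ℤ, l.all (· == 0) → intPoly R l = 0 by
    have key := this _ h
    rw [intPoly_addCoeffs, intPoly_smulCoeffs, Int.cast_neg, Int.cast_one, C_neg, C_1] at key
    linear_combination key
  intro l hl
  induction l with
  | nil => rfl
  | cons x l ih =>
    simp only [List.all_cons, Bool.and_eq_true, beq_iff_eq] at hl
    simp [intPoly_cons, hl.1, ih hl.2]

theorem isCoprime_intPoly_of_bezout {k : Type*} [Field k] {a b : List ℤ} (u v : List ℤ) {c : ℤ}
    (hc : (c : k) ≠ 0) (h : eqCoeffs (addCoeffs (mulCoeffs u a) (mulCoeffs v b)) [c] = true) :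
    IsCoprime (intPoly k a) (intPoly k b) := by
  have key := intPoly_eq_of_eqCoeffs (R := k) h
  rw [intPoly_addCoeffs, intPoly_mulCoeffs, intPoly_mulCoeffs, intPoly_cons, intPoly_nil, mul_zero,
    add_zero] at key
  refine ⟨C (c : k)⁻¹ * intPoly k u, C (c : k)⁻¹ * intPoly k v, ?_⟩
  rw [mul_assoc, mul_assoc, ← mul_add, key, ← C_mul, inv_mul_cancel₀ hc, C_1]

end

end CoefficientLists

section Kronecker

section l1Seminorm

variable {R : Type*} [CommRing R]

/-- The `ℓ¹`-extension of a seminorm to polynomials: the sum of the seminorms of the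
coefficients. -/
noncomputable def l1AddGroupSeminorm (ν : AddGroupSeminorm R) : AddGroupSeminorm R[X] where
  toFun P := P.sum fun _ a => ν a
  map_zero' := sum_zero_index _
  neg' P := by simp [sum_def]
  add_le' P Q := by
    have sum_eq (T : R[X]) (hT : T.support ⊆ P.support ∪ Q.support) :
        (T.sum fun _ a => ν a) = ∑ i ∈ P.support ∪ Q.support, ν (T.coeff i) :=
      sum_eq_of_subset _ (fun _ => map_zero ν) hT
    rw [sum_eq (P + Q) support_add, sum_eq P Finset.subset_union_left,
      sum_eq Q Finset.subset_union_right, ← Finset.sum_add_distrib]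
    exact Finset.sum_le_sum fun i _ => by simpa using map_add_le_add ν _ _

theorem l1AddGroupSeminorm_monomial (ν : AddGroupSeminorm R) (n : ℕ) (a : R) :
    l1AddGroupSeminorm ν (monomial n a) = ν a :=
  sum_monomial_index _ _ (map_zero ν)

/-- The `ℓ¹`-extension of a ring seminorm to polynomials, as a ring seminorm. -/
noncomputable def l1Seminorm (ν : RingSeminorm R) : RingSeminorm R[X] where
  __ := l1AddGroupSeminorm ν.toAddGroupSeminorm
  mul_le' P Q := by
    change l1AddGroupSeminorm ν.toAddGroupSeminorm (P * Q) ≤ _ * _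
    set μ := l1AddGroupSeminorm ν.toAddGroupSeminorm
    have sum_le {s : Finset ℕ} (g : ℕ → R[X]) : μ (∑ i ∈ s, g i) ≤ ∑ i ∈ s, μ (g i) :=
      Finset.le_sum_of_subadditive μ (map_zero μ).le (map_add_le_add μ) s g
    calc μ (P * Q)
        ≤ ∑ i ∈ P.support, ∑ j ∈ Q.support, μ (monomial (i + j) (P.coeff i * Q.coeff j)) := by
          rw [mul_eq_sum_sum]
          exact (sum_le _).trans (Finset.sum_le_sum fun i _ => sum_le _)
      _ ≤ ∑ i ∈ P.support, ∑ j ∈ Q.support, ν (P.coeff i) * ν (Q.coeff j) :=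
          Finset.sum_le_sum fun i _ => Finset.sum_le_sum fun j _ =>
            (l1AddGroupSeminorm_monomial _ _ _).trans_le (map_mul_le_mul ν _ _)
      _ = μ P * μ Q := (Finset.sum_mul_sum _ _ _ _).symm

variable (ν : RingSeminorm R)

theorem l1Seminorm_monomial (n : ℕ) (a : R) : l1Seminorm ν (monomial n a) = ν a :=
  l1AddGroupSeminorm_monomial _ n a

theorem le_l1Seminorm (P : R[X]) (n : ℕ) : ν (P.coeff n) ≤ l1Seminorm ν P := by
  by_cases hn : n ∈ P.support
  · exact Finset.single_le_sum (f := fun i => ν (P.coeff i)) (fun i _ => apply_nonneg ν _) hn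
  · rw [notMem_support_iff.mp hn, map_zero]
    exact apply_nonneg _ _

theorem l1Seminorm_ofCoeffs (l : List R) : l1Seminorm ν (ofCoeffs l) = (l.map ν).sum := by
  have support_subset : (ofCoeffs l).support ⊆ Finset.range l.length := fun i hi => by
    by_contra hlt
    rw [Finset.mem_range, not_lt] at hlt
    exact mem_support_iff.mp hi ((coeff_ofCoeffs l i).trans (List.getD_eq_default _ _ hlt))
  refine (sum_eq_of_subset (fun _ a => ν a) (fun _ => map_zero ν) support_subset).trans ?_
  clear support_subset
  simp only [coeff_ofCoeffs]
  induction l with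
  | nil => rfl
  | cons a l ih => simpa [Finset.sum_range_succ', add_comm] using ih

end l1Seminorm

theorem eq_zero_of_eval_eq_zero_of_abs_coeff_lt {P : ℤ[X]} {N : ℤ} (h0 : P.eval N = 0)
    (hP : ∀ n, |P.coeff n| < N) : P = 0 := by
  have hN : 0 < N := (abs_nonneg _).trans_lt (hP 0)
  induction P using recOnHorner with
  | M0 => rfl
  | MC P a hP0 ha =>
    have dvd_a : N ∣ a := by
      rw [eval_add, eval_C] at h0
      obtain ⟨Q, rfl⟩ := X_dvd_iff.mpr hP0
      exact ⟨-Q.eval N, by rw [eval_mul, eval_X] at h0; linear_combination h0⟩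
    refine absurd (Int.eq_zero_of_abs_lt_dvd dvd_a ?_) ha
    simpa [hP0] using hP 0
  | MX P hP0 ih =>
    refine absurd (ih ?_ fun n => ?_) hP0
    · simpa [hN.ne'] using h0
    · simpa using hP (n + 1)

theorem eq_zero_of_map_eval_eq_zero {P : ℤ[X][X]} {N : ℤ} (h0 : P.map (evalRingHom N) = 0)
    (hP : l1Seminorm (l1Seminorm (normRingSeminorm ℤ)) P < N) : P = 0 := by
  ext n : 1
  refine eq_zero_of_eval_eq_zero_of_abs_coeff_lt (N := N) ?_ fun k => ?_
  · simpa using congr_arg (fun Q => Q.coeff n) h0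
  · have h := ((le_l1Seminorm (normRingSeminorm ℤ) (P.coeff n) k).trans
      (le_l1Seminorm _ P n)).trans_lt hP
    rwa [← Int.cast_lt (R := ℝ), Int.cast_abs, ← Int.norm_eq_abs]

/-- Value at an integer of the polynomial with the given coefficients. -/
def evalCoeffs (x : ℤ) (l : List ℤ) : ℤ := l.foldr (fun a y => force y fun y => a + x * y) 0

theorem eval_intPoly (R : Type*) [CommRing R] (x : ℤ) (l : List ℤ) :
    (intPoly R l).eval (x : R) = (evalCoeffs x l : R) := by
  induction l with
  | nil => simp [evalCoeffs]
  | cons a l ih =>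
    rw [evalCoeffs, List.foldr_cons, force_eq, ← evalCoeffs]
    simp [intPoly_cons, ih]

/-- The polynomial in `Y` over `R[X]` whose `i`-th coefficient has the integer coefficients listed
in row `i`. -/
noncomputable def intPoly₂ (R : Type*) [Ring R] (L : List (List ℤ)) : R[X][X] :=
  ofCoeffs (L.map (intPoly R))

theorem map_intPoly₂ {R S : Type*} [Ring R] [Ring S] (f : R →+* S) (L : List (List ℤ)) :
    (intPoly₂ R L).map (mapRingHom f) = intPoly₂ S L := by
  simp [intPoly₂, map_ofCoeffs, Function.comp_def, map_intPoly]

theorem natDegree_intPoly₂_le {R : Type*} [Ring R] {L : List (List ℤ)} {n : ℕ}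
    (hL : L.length ≤ n + 1) : (intPoly₂ R L).natDegree ≤ n :=
  natDegree_ofCoeffs_le (by simpa using hL)

theorem map_eval_intPoly₂ {R : Type*} [CommRing R] (x : ℤ) (L : List (List ℤ)) :
    (intPoly₂ R L).map (evalRingHom (x : R)) = intPoly R (L.map (evalCoeffs x)) := by
  simp [intPoly₂, intPoly, map_ofCoeffs, Function.comp_def, ← eval_intPoly]

/-- Sum of the absolute values of a list of integers. -/
def absSum (l : List ℤ) : ℕ := (l.map Int.natAbs).sum

theorem l1Seminorm_intPoly (l : List ℤ) :
    l1Seminorm (normRingSeminorm ℤ) (intPoly ℤ l) = absSum l := by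
  have norm_cast_eq (a : ℤ) : normRingSeminorm ℤ (Int.castRingHom ℤ a) = a.natAbs := by
    rw [Nat.cast_natAbs, Int.cast_abs, ← Int.norm_eq_abs]
    rfl
  rw [intPoly, l1Seminorm_ofCoeffs, List.map_map, absSum, Nat.cast_list_sum, List.map_map]
  exact congr_arg List.sum (List.map_congr_left fun a _ => norm_cast_eq a)

theorem l1Seminorm_intPoly_polynomial (l : List ℤ) :
    l1Seminorm (l1Seminorm (normRingSeminorm ℤ)) (intPoly ℤ[X] l) = absSum l := by
  have l1Seminorm_cast (a : ℤ) :
      l1Seminorm (normRingSeminorm ℤ) (Int.castRingHom ℤ[X] a) = a.natAbs := by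
    simpa [intPoly_cons, absSum] using l1Seminorm_intPoly [a]
  rw [intPoly, l1Seminorm_ofCoeffs, List.map_map, absSum, Nat.cast_list_sum, List.map_map]
  exact congr_arg List.sum (List.map_congr_left fun a _ => l1Seminorm_cast a)

theorem l1Seminorm_intPoly₂ (L : List (List ℤ)) :
    l1Seminorm (l1Seminorm (normRingSeminorm ℤ)) (intPoly₂ ℤ L) = (L.map absSum).sum := by
  rw [intPoly₂, l1Seminorm_ofCoeffs, List.map_map, Nat.cast_list_sum, List.map_map]
  exact congr_arg List.sum (List.map_congr_left fun l _ => l1Seminorm_intPoly l)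

/-- The polynomial `b(X) a(Y) - a(X) b(Y)`, which vanishes where `a / b` takes the same value at
`X` and at `Y`. -/
noncomputable def crossDifference (R : Type*) [CommRing R] (a b : List ℤ) : R[X][X] :=
  C (intPoly R b) * intPoly R[X] a - C (intPoly R a) * intPoly R[X] b

theorem map_crossDifference {R S : Type*} [CommRing R] [CommRing S] (f : R →+* S) (a b : List ℤ) :
    (crossDifference R a b).map (mapRingHom f) = crossDifference S a b := by
  simp [crossDifference, map_intPoly]

/-- Coefficients of the specialization of `crossDifference` at `X = N`. -/
def crossDifferenceCoeffs (N : ℤ) (a b : List ℤ) : List ℤ :=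
  addCoeffs (smulCoeffs (evalCoeffs N b) a) (smulCoeffs (-evalCoeffs N a) b)

theorem map_eval_crossDifference (N : ℤ) (a b : List ℤ) :
    (crossDifference ℤ a b).map (evalRingHom N) = intPoly ℤ (crossDifferenceCoeffs N a b) := by
  have eval_intPoly_int (l : List ℤ) : (intPoly ℤ l).eval N = evalCoeffs N l := by
    simpa using eval_intPoly ℤ N l
  simp [crossDifference, crossDifferenceCoeffs, intPoly_addCoeffs, intPoly_smulCoeffs,
    map_intPoly, eval_intPoly_int, sub_eq_add_neg]

theorem l1Seminorm_crossDifference_le (a b : List ℤ) :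
    l1Seminorm (l1Seminorm (normRingSeminorm ℤ)) (crossDifference ℤ a b) ≤
      2 * (absSum a * absSum b) := by
  set μ := l1Seminorm (l1Seminorm (normRingSeminorm ℤ))
  have outer_le (a b : List ℤ) :
      μ (C (intPoly ℤ a) * intPoly ℤ[X] b) ≤ absSum a * absSum b := by
    refine (map_mul_le_mul μ _ _).trans_eq ?_
    rw [← monomial_zero_left, l1Seminorm_monomial, l1Seminorm_intPoly,
      l1Seminorm_intPoly_polynomial]
  calc μ (crossDifference ℤ a b) ≤ _ := map_sub_le_add μ _ _
    _ ≤ absSum b * absSum a + absSum a * absSum b := add_le_add (outer_le b a) (outer_le a b)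
    _ = 2 * (absSum a * absSum b) := by ring

theorem crossDifference_eq_mul {N : ℕ} {a b : List ℤ} {G H : List (List ℤ)}
    (hval : eqCoeffs (crossDifferenceCoeffs N a b)
      (mulCoeffs (G.map (evalCoeffs N)) (H.map (evalCoeffs N))) = true)
    (hnorm : 2 * (absSum a * absSum b) + (G.map absSum).sum * (H.map absSum).sum < N) :
    crossDifference ℤ a b = intPoly₂ ℤ G * intPoly₂ ℤ H := by
  rw [← sub_eq_zero]
  refine eq_zero_of_map_eval_eq_zero (N := N) ?_ ?_
  · rw [Polynomial.map_sub, Polynomial.map_mul, map_eval_crossDifference, sub_eq_zero,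
      intPoly_eq_of_eqCoeffs hval, intPoly_mulCoeffs]
    congr 1 <;> exact (map_eval_intPoly₂ (R := ℤ) N _).symm
  · refine (map_sub_le_add _ _ _).trans_lt ((add_le_add (l1Seminorm_crossDifference_le a b)
      (map_mul_le_mul _ _ _)).trans_lt ?_)
    rw [l1Seminorm_intPoly₂, l1Seminorm_intPoly₂, Int.cast_natCast]
    exact_mod_cast hnorm

/-- The first `n` coefficients of the power series quotient of `d` by `c + X * g`. -/
def divCoeffs (c : ℤ) (g : List ℤ) : ℕ → List ℤ → List ℤ
  | 0, _ => []
  | _ + 1, [] => []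
  | n + 1, x :: d =>
    force (x / c) fun z => force (addCoeffs d (smulCoeffs (-z) g)) fun d => z :: divCoeffs c g n d

/-- The first `n` digits of an integer in base `b`, chosen in `[-b / 2, b / 2)`. -/
def balancedDigits (b : ℕ) : ℕ → ℤ → List ℤ
  | 0, _ => []
  | n + 1, z => force (z.bmod b) fun c => force ((z - c) / b) fun z => c :: balancedDigits b n z

end Kronecker

section ModularCoefficients

/-- The polynomial over `R` whose coefficients are the images of the given natural numbers. -/
noncomputable def natPoly (R : Type*) [Semiring R] (l : List ℕ) : R[X] :=
  ofCoeffs (l.map (Nat.castRingHom R))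

/-- Representatives in `ℕ` of the residues modulo `m` of a list of integers. -/
def reduceCoeffs (m : ℕ) (l : List ℤ) : List ℕ := l.map fun a => (a % (m : ℤ)).toNat

/-- Horner evaluation modulo `m`. -/
def evalModCoeffs (m : ℕ) (l : List ℕ) (x : ℕ) : ℕ := l.foldr (fun a y => (a + x * y) % m) 0

/-- Prepend a coefficient, leaving out trailing zeros. -/
def consTrim : ℕ → List ℕ → List ℕ
  | 0, [] => []
  | n, l => n :: l

/-- Coefficient list of `a + t * b` modulo `m`. -/
def addMulModCoeffs (m t : ℕ) : List ℕ → List ℕ → List ℕ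
  | a, [] => a
  | [], y :: b => force (t * y % m) fun z => consTrim z (addMulModCoeffs m t [] b)
  | x :: a, y :: b => force ((x + t * y) % m) fun z => consTrim z (addMulModCoeffs m t a b)

/-- Remainder of `a * b` in the division by a monic polynomial `h`, with coefficients modulo `m`. -/
def mulModCoeffs (m : ℕ) (h a b : List ℕ) : List ℕ :=
  a.foldr (fun x c => force (addMulModCoeffs m x (0 :: c) b) fun c =>
    addMulModCoeffs m (m - c.getD (h.length - 1) 0) c h) []

/-- Remainder of `X ^ n` in the division by a monic polynomial `h`, with coefficients modulo `m`. -/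
def powModCoeffs (m : ℕ) (h : List ℕ) (n : ℕ) : List ℕ :=
  (Nat.digits 2 n).foldr (fun d c => force c fun c =>
    mulModCoeffs m h (List.replicate d 0 ++ c) c) [1]

variable {R : Type*} [CommRing R]

@[simp]
theorem natPoly_nil : natPoly R [] = 0 := rfl

theorem natPoly_cons (x : ℕ) (l : List ℕ) : natPoly R (x :: l) = C (x : R) + X * natPoly R l := by
  simp [natPoly, ofCoeffs]

theorem natPoly_replicate_zero_append (n : ℕ) (l : List ℕ) :
    natPoly R (List.replicate n 0 ++ l) = X ^ n * natPoly R l := by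
  induction n with
  | zero => simp
  | succ n ih =>
    rw [List.replicate_succ, List.cons_append, natPoly_cons, ih, Nat.cast_zero, C_0, zero_add,
      pow_succ', mul_assoc]

theorem natPoly_consTrim (x : ℕ) (l : List ℕ) : natPoly R (consTrim x l) = natPoly R (x :: l) := by
  rcases x with _ | x
  · cases l <;> simp [consTrim, natPoly_cons]
  · rfl

variable {m : ℕ} [CharP R m]

theorem natPoly_reduceCoeffs [NeZero m] (l : List ℤ) :
    natPoly R (reduceCoeffs m l) = intPoly R l := by
  have natCast_toNat_emod (a : ℤ) : ((a % (m : ℤ)).toNat : R) = a := by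
    rw [← Int.cast_natCast, Int.toNat_of_nonneg (Int.emod_nonneg a (NeZero.natCast_ne m ℤ)),
      ← CharP.intCast_eq_intCast_mod R m]
  simp [natPoly, intPoly, reduceCoeffs, Function.comp_def, natCast_toNat_emod]

theorem natCast_evalModCoeffs (l : List ℕ) (x : ℕ) :
    (evalModCoeffs m l x : R) = (natPoly R l).eval (x : R) := by
  induction l with
  | nil => simp [evalModCoeffs]
  | cons a l ih =>
    rw [evalModCoeffs, List.foldr_cons, ← evalModCoeffs, ← CharP.cast_eq_mod R m]
    simp [natPoly_cons, ← ih]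

theorem natCast_evalModCoeffs_reduceCoeffs [NeZero m] (l : List ℤ) (x : ℕ) :
    (evalModCoeffs m (reduceCoeffs m l) x : R) = (intPoly R l).eval (x : R) := by
  rw [natCast_evalModCoeffs, natPoly_reduceCoeffs]

theorem natPoly_addMulModCoeffs (t : ℕ) (a b : List ℕ) :
    natPoly R (addMulModCoeffs m t a b) = natPoly R a + C (t : R) * natPoly R b := by
  induction a, b using addMulModCoeffs.induct with
  | case1 a => simp [addMulModCoeffs]
  | case2 y b ih =>
    rw [addMulModCoeffs, force_eq, natPoly_consTrim, natPoly_cons, ih, ← CharP.cast_eq_mod R m,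
      natPoly_cons, Nat.cast_mul, C_mul, natPoly_nil]
    ring
  | case3 x a y b ih =>
    rw [addMulModCoeffs, force_eq, natPoly_consTrim, natPoly_cons, ih, ← CharP.cast_eq_mod R m,
      natPoly_cons, natPoly_cons, Nat.cast_add, Nat.cast_mul, C_add, C_mul]
    ring

variable (m) in
theorem natPoly_dvd_sub_mulModCoeffs (h a b : List ℕ) :
    natPoly R h ∣ natPoly R a * natPoly R b - natPoly R (mulModCoeffs m h a b) := by
  induction a with
  | nil => simp [mulModCoeffs]
  | cons x a ih =>
    obtain ⟨d, hd⟩ := ih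
    rw [mulModCoeffs, List.foldr_cons, ← mulModCoeffs, force_eq]
    generalize m - _ = t
    rw [natPoly_addMulModCoeffs, natPoly_addMulModCoeffs, natPoly_cons, natPoly_cons,
      Nat.cast_zero, C_0, zero_add]
    exact ⟨X * d - C (t : R), by linear_combination X * hd⟩

theorem natPoly_dvd_of_mulModCoeffs_eq_nil {h a : List ℕ} (hrem : mulModCoeffs m h a [1] = []) :
    natPoly R h ∣ natPoly R a := by
  simpa [hrem, natPoly_cons] using natPoly_dvd_sub_mulModCoeffs (R := R) m h a [1]

variable (m) in
theorem natPoly_dvd_sub_powModCoeffs (h : List ℕ) (n : ℕ) :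
    natPoly R h ∣ X ^ n - natPoly R (powModCoeffs m h n) := by
  suffices ∀ digits : List ℕ, natPoly R h ∣ X ^ Nat.ofDigits 2 digits -
      natPoly R (digits.foldr (fun d c => force c fun c =>
        mulModCoeffs m h (List.replicate d 0 ++ c) c) [1]) by
    simpa only [powModCoeffs, Nat.ofDigits_digits] using this (Nat.digits 2 n)
  intro digits
  induction digits with
  | nil => simp [natPoly_cons]
  | cons d digits ih =>
    rw [List.foldr_cons, force_eq, Nat.ofDigits_cons]
    generalize List.foldr _ _ digits = c at ih ⊢
    have dvd := natPoly_dvd_sub_mulModCoeffs (R := R) m h (List.replicate d 0 ++ c) c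
    rw [natPoly_replicate_zero_append] at dvd
    refine (dvd_add dvd (ih.mul_left (X ^ d * (X ^ Nat.ofDigits 2 digits + natPoly R c)))).trans ?_
    exact dvd_of_eq (by ring)

theorem natPoly_dvd_X_pow_sub_X {h : List ℕ} {n : ℕ} (hn : powModCoeffs m h (m ^ n) = [0, 1]) :
    natPoly R h ∣ X ^ m ^ n - X := by
  simpa [hn, natPoly_cons] using natPoly_dvd_sub_powModCoeffs (R := R) m h (m ^ n)

end ModularCoefficients

section FrobeniusPlaces

universe u

/-- A prime of `L` above the kernel of `φ : A →+* ZMod l`, given by a residue map on an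
`A`-subalgebra of `L`, together with a Frobenius element of the Galois group of `L / K`. -/
structure FrobeniusPlace {A : Type*} [CommRing A] (K : Type*) (L : Type u) [Field K] [Field L]
    [Algebra K L] [Algebra A L] {l : ℕ} (φ : A →+* ZMod l) where
  /-- The subalgebra on which the residue map is defined. -/
  ring : Subalgebra A L
  /-- The target of the residue map. -/
  residueField : Type u
  [field : Field residueField]
  [algebra : Algebra (ZMod l) residueField]
  /-- The residue map. -/
  reduce : ring →+* residueField
  reduce_algebraMap (a : A) : reduce (algebraMap A ring a) = algebraMap (ZMod l) residueField (φ a)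
  /-- An automorphism which acts on residues as the `l`-th power map. -/
  frobenius : L ≃ₐ[K] L
  reduce_frobenius {x y : ring} : (y : L) = frobenius x → reduce y = reduce x ^ l

attribute [instance] FrobeniusPlace.field FrobeniusPlace.algebra

/-- Restriction of a place to a subring of the base. -/
def FrobeniusPlace.comap {A A' K : Type*} {L : Type u} [CommRing A] [CommRing A']
    [Field K] [Field L] [Algebra K L] [Algebra A L] [Algebra A A'] [Algebra A' L]
    [IsScalarTower A A' L] {l : ℕ} {φ : A' →+* ZMod l} (v : FrobeniusPlace K L φ) :
    FrobeniusPlace K L (φ.comp (algebraMap A A')) where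
  ring := v.ring.restrictScalars A
  residueField := v.residueField
  reduce := v.reduce
  reduce_algebraMap a := by
    rw [RingHom.comp_apply, ← v.reduce_algebraMap]
    exact congrArg v.reduce (Subtype.ext (IsScalarTower.algebraMap_apply A A' L a))
  frobenius := v.frobenius
  reduce_frobenius := v.reduce_frobenius

variable {A : Type*} [CommRing A] [IsDomain A] [IsIntegrallyClosed A] {K : Type*} {L : Type u}
  [Field K] [Algebra A K] [IsFractionRing A K] [Field L] [Algebra K L] [Algebra A L]
  [IsScalarTower A K L] [FiniteDimensional K L] [IsGalois K L] {l : ℕ} [Fact l.Prime]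

attribute [local instance] Ideal.Quotient.field in
theorem exists_isMaximal_isArithFrobAt (P : Ideal A) [P.IsMaximal] [Finite (A ⧸ P)] :
    ∃ (Q : Ideal (integralClosure A L)) (_ : Q.IsMaximal) (_ : Q.LiesOver P) (σ : L ≃ₐ[K] L),
      ∀ x y : integralClosure A L, (y : L) = σ x →
        Ideal.Quotient.mk Q y = Ideal.Quotient.mk Q x ^ Nat.card (A ⧸ P) := by
  have : FaithfulSMul A L := (faithfulSMul_iff_algebraMap_injective A L).mpr <| by
    rw [IsScalarTower.algebraMap_eq A K L]
    exact (algebraMap K L).injective.comp (IsFractionRing.injective A K)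
  have : IsFractionRing (integralClosure A L) L :=
    integralClosure.isFractionRing_of_finite_extension K L
  let := IsIntegralClosure.MulSemiringAction A K L (integralClosure A L)
  have := Algebra.isInvariant_of_isGalois A K L (integralClosure A L)
  have : SMulCommClass (L ≃ₐ[K] L) A (integralClosure A L) :=
    ⟨fun σ => map_smul (galRestrict A K L (integralClosure A L) σ)⟩
  obtain ⟨Q, hQ, hQP⟩ :=
    Ideal.exists_maximal_ideal_liesOver_of_isIntegral (S := integralClosure A L) P
  have : Module.Finite (A ⧸ P) (integralClosure A L ⧸ Q) :=
    Ideal.Quotient.finite_of_isInvariant (L ≃ₐ[K] L) P Q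
  have : Finite (integralClosure A L ⧸ Q) := Module.finite_of_finite (A ⧸ P)
  obtain ⟨σ, hσ⟩ := IsArithFrobAt.exists_of_isInvariant A (L ≃ₐ[K] L) Q
  refine ⟨Q, hQ, hQP, σ, fun x y hy => ?_⟩
  have hyx : y = σ • x := Subtype.ext (hy.trans (algebraMap_galRestrict_apply A σ x).symm)
  rw [hyx, hQP.over]
  exact AlgHom.IsArithFrobAt.mk_apply hσ x

attribute [local instance] Ideal.Quotient.field in
theorem exists_frobeniusPlace_ring_eq_integralClosure (φ : A →+* ZMod l) :
    ∃ v : FrobeniusPlace K L φ, v.ring = integralClosure A L := by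
  have hφ : Function.Surjective φ := ZMod.ringHom_surjective φ
  have : (RingHom.ker φ).IsMaximal := RingHom.ker_isMaximal_of_surjective φ hφ
  let e : A ⧸ RingHom.ker φ ≃+* ZMod l := RingHom.quotientKerEquivOfSurjective hφ
  have : Finite (A ⧸ RingHom.ker φ) := Finite.of_equiv _ e.symm.toEquiv
  have hcard : Nat.card (A ⧸ RingHom.ker φ) = l := by
    rw [Nat.card_congr e.toEquiv, Nat.card_zmod]
  obtain ⟨Q, hQ, hQP, σ, hσ⟩ :=
    exists_isMaximal_isArithFrobAt (K := K) (L := L) (RingHom.ker φ)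
  let := ((algebraMap (A ⧸ RingHom.ker φ) (integralClosure A L ⧸ Q)).comp
    e.symm.toRingHom).toAlgebra
  refine ⟨{ ring := integralClosure A L
            residueField := integralClosure A L ⧸ Q
            reduce := Ideal.Quotient.mk Q
            reduce_algebraMap := fun a => ?_
            frobenius := σ
            reduce_frobenius := fun {x y} h => hcard ▸ hσ x y h }, rfl⟩
  have he : e.symm (φ a) = Ideal.Quotient.mk (RingHom.ker φ) a := e.symm_apply_eq.mpr rfl
  simp only [RingHom.algebraMap_toAlgebra, RingHom.comp_apply, RingEquiv.toRingHom_eq_coe,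
    RingHom.coe_coe, he]
  rfl

/-- The base is localized at the kernel of `φ` to make the leading coefficient of `f` a unit. -/
theorem exists_frobeniusPlace_forall_mem_ring (φ : A →+* ZMod l) {f : A[X]}
    (hf : φ f.leadingCoeff ≠ 0) :
    ∃ v : FrobeniusPlace K L φ, ∀ x : L, aeval x f = 0 → x ∈ v.ring := by
  have : (RingHom.ker φ).IsPrime := RingHom.ker_isPrime φ
  let A' := Localization.AtPrime (RingHom.ker φ)
  have hle := (RingHom.ker φ).primeCompl_le_nonZeroDivisors
  have : IsIntegrallyClosed A' := isIntegrallyClosed_of_isLocalization A' _ hle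
  let : Algebra A' K := IsLocalization.localizationAlgebraOfSubmonoidLe A' K _ _ hle
  have : IsScalarTower A A' K :=
    IsLocalization.localization_isScalarTower_of_submonoid_le A' K _ _ hle
  have : IsFractionRing A' K :=
    IsFractionRing.isFractionRing_of_isDomain_of_isLocalization (RingHom.ker φ).primeCompl A' K
  let : Algebra A' L := ((algebraMap K L).comp (algebraMap A' K)).toAlgebra
  have : IsScalarTower A' K L := .of_algebraMap_eq fun _ => rfl
  have : IsScalarTower A A' L := .of_algebraMap_eq fun a => by
    rw [IsScalarTower.algebraMap_apply A' K L, ← IsScalarTower.algebraMap_apply A A' K,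
      ← IsScalarTower.algebraMap_apply A K L]
  let φ' : A' →+* ZMod l := IsLocalization.lift (M := (RingHom.ker φ).primeCompl) (g := φ)
    fun a => IsUnit.mk0 _ a.2
  have hφ' : φ'.comp (algebraMap A A') = φ := IsLocalization.lift_comp _
  obtain ⟨v, hv⟩ := exists_frobeniusPlace_ring_eq_integralClosure (K := K) (L := L) φ'
  rw [← hφ']
  refine ⟨v.comap, fun x hx => ?_⟩
  change x ∈ v.ring
  rw [hv, mem_integralClosure_iff]
  obtain ⟨c, hc⟩ := IsLocalization.map_units A' (⟨_, hf⟩ : (RingHom.ker φ).primeCompl)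
  have hint : IsIntegral A' (f.leadingCoeff • x) := (isIntegral_leadingCoeff_smul f x hx).tower_top
  rw [← algebraMap_smul A', ← hc] at hint
  simpa only [smul_smul, Units.inv_mul, one_smul] using hint.smul (c⁻¹ : A'ˣ).val

end FrobeniusPlaces

section RootFamilies

/-- The elements `ρ i` are the roots of `g`, each listed as often as its multiplicity. -/
def IsRootFamily {k κ ι : Type*} [CommRing k] [CommRing κ] [Algebra k κ] [Fintype ι] (g : k[X])
    (ρ : ι → κ) : Prop :=
  g.map (algebraMap k κ) = C (algebraMap k κ g.leadingCoeff) * ∏ i, (X - C (ρ i))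

theorem isRootFamily_rootSet {K L : Type*} [Field K] [Field L] [Algebra K L] {F : K[X]}
    (hsep : F.Separable) (hsplits : (F.map (algebraMap K L)).Splits) :
    IsRootFamily F ((↑) : F.rootSet L → L) := by
  have hnodup : (F.map (algebraMap K L)).roots.Nodup := nodup_roots hsep.map
  have hprod : ((F.map (algebraMap K L)).roots.map fun a => X - C a).prod =
      ∏ x : F.rootSet L, (X - C (x : L)) :=
    Finset.prod_subtype (⟨_, hnodup⟩ : Finset L) (fun x => by
      rw [Finset.mem_mk, mem_roots', mem_rootSet', IsRoot.def, eval_map_algebraMap]) _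
  rw [IsRootFamily, ← hprod, ← leadingCoeff_map]
  exact hsplits.eq_prod_roots

namespace IsRootFamily

theorem of_map {A K L ι : Type*} [CommRing A] [Field K] [CommRing L] [Algebra A K]
    [FaithfulSMul A K] [Algebra K L] [Algebra A L] [IsScalarTower A K L] [Fintype ι] {f : A[X]}
    {ρ : ι → L} (h : IsRootFamily (f.map (algebraMap A K)) ρ) : IsRootFamily f ρ := by
  rwa [IsRootFamily, map_map, leadingCoeff_map_of_injective (FaithfulSMul.algebraMap_injective A K),
    ← IsScalarTower.algebraMap_eq, ← IsScalarTower.algebraMap_apply] at h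

theorem map_of_leadingCoeff_ne_zero {A k κ ι : Type*} [CommRing A] [CommRing k] [CommRing κ]
    [Algebra k κ] [Fintype ι] {B : Type*} [CommRing B] [Algebra A B] {f : A[X]} {ρ : ι → B}
    (h : IsRootFamily f ρ) {φ : A →+* k} {π : B →+* κ}
    (hπ : ∀ a, π (algebraMap A B a) = algebraMap k κ (φ a)) (hf : φ f.leadingCoeff ≠ 0) :
    IsRootFamily (f.map φ) (π ∘ ρ) := by
  have hcomp : π.comp (algebraMap A B) = (algebraMap k κ).comp φ := RingHom.ext hπ
  have key := congrArg (Polynomial.map π) h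
  simpa only [IsRootFamily, map_map, hcomp, Polynomial.map_mul, map_C, hπ, Polynomial.map_prod,
    Polynomial.map_sub, map_X, Function.comp_apply,
    leadingCoeff_map_of_leadingCoeff_ne_zero φ hf] using key

theorem of_subalgebra {A L ι : Type*} [CommRing A] [CommRing L] [Algebra A L] [Fintype ι]
    {B : Subalgebra A L} {f : A[X]} {ρ : ι → B} (h : IsRootFamily f fun i => (ρ i : L)) :
    IsRootFamily f ρ := by
  apply map_injective (algebraMap B L) Subtype.val_injective
  rw [map_map, ← IsScalarTower.algebraMap_eq, h]
  simp [Polynomial.map_prod, ← IsScalarTower.algebraMap_apply]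

variable {k κ ι : Type*} [Field k] [Field κ] [Algebra k κ] [Fintype ι] {g : k[X]} {ρ : ι → κ}

theorem aeval_eq_zero_iff (h : IsRootFamily g ρ) (hg : g ≠ 0) {z : κ} :
    aeval z g = 0 ↔ ∃ i, ρ i = z := by
  rw [← eval_map_algebraMap, h, eval_mul, eval_C, mul_eq_zero, eval_prod, Finset.prod_eq_zero_iff,
    or_iff_right (by simpa using hg)]
  simp [sub_eq_zero, eq_comm]

theorem exists_aeval_eq_zero_of_dvd (h : IsRootFamily g ρ) (hg : g ≠ 0) {f : k[X]} (hfg : f ∣ g)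
    (hf : f.natDegree ≠ 0) : ∃ i, aeval (ρ i) f = 0 := by
  have hsplits : (f.map (algebraMap k κ)).Splits := by
    refine Splits.of_dvd ?_ (Polynomial.map_ne_zero hg) (Polynomial.map_dvd _ hfg)
    rw [h]
    exact (Splits.C _).mul (.prod fun i _ => .X_sub_C _)
  obtain ⟨z, hz⟩ := hsplits.exists_eval_eq_zero (by
    rw [degree_map]; exact fun h => hf (natDegree_eq_of_degree_eq_some h))
  rw [eval_map_algebraMap] at hz
  obtain ⟨i, rfl⟩ := (h.aeval_eq_zero_iff hg).mp
    (zero_dvd_iff.mp (hz ▸ _root_.map_dvd (aeval z) hfg))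
  exact ⟨i, hz⟩

theorem aeval_derivative_eq_zero (h : IsRootFamily g ρ) {i j : ι} (hij : i ≠ j)
    (hρ : ρ i = ρ j) : aeval (ρ i) (derivative g) = 0 := by
  classical
  have hdvd : (X - C (ρ i)) * (X - C (ρ i)) ∣ g.map (algebraMap k κ) := by
    have hj : j ∈ Finset.univ.erase i := Finset.mem_erase.mpr ⟨hij.symm, Finset.mem_univ j⟩
    rw [h, ← Finset.mul_prod_erase _ _ (Finset.mem_univ i), ← Finset.mul_prod_erase _ _ hj, ← hρ,
      ← mul_assoc (X - C (ρ i))]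
    exact (dvd_mul_right _ _).mul_left _
  obtain ⟨f, hf⟩ := hdvd
  rw [← eval_map_algebraMap, ← derivative_map, hf]
  simp

theorem injective (h : IsRootFamily g ρ) (hsep : g.Separable) : Function.Injective ρ := by
  intro i j hij
  by_contra hne
  have hroot := (h.aeval_eq_zero_iff hsep.ne_zero).mpr ⟨i, rfl⟩
  obtain ⟨u, v, huv⟩ := hsep
  have := congrArg (aeval (ρ i)) huv
  simp [hroot, h.aeval_derivative_eq_zero hne hij] at this

end IsRootFamily

end RootFamilies

section Residues

universe u

variable {A K : Type*} {L : Type u} [CommRing A] [Field K] [Field L] [Algebra K L] [Algebra A L]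
  {l : ℕ} {φ : A →+* ZMod l} (v : FrobeniusPlace K L φ) {F : K[X]}

/-- The residues of the roots of `F` at a place where they are integral. -/
def FrobeniusPlace.residue (hF : F.rootSet L ⊆ v.ring) (x : F.rootSet L) : v.residueField :=
  v.reduce ⟨x, hF x.2⟩

theorem map_evalEval_map_intCast {R S : Type*} [CommRing R] [CommRing S] (π : R →+* S)
    (P : ℤ[X][X]) (x y : R) :
    π ((P.map (mapRingHom (Int.castRingHom R))).evalEval x y) =
      (P.map (mapRingHom (Int.castRingHom S))).evalEval (π x) (π y) := by
  rw [← map_mapRingHom_evalEval, map_map, mapRingHom_comp,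
    Subsingleton.elim (π.comp _) (Int.castRingHom S)]

namespace FrobeniusPlace

theorem isRootFamily_residue [Algebra A K] [FaithfulSMul A K] [IsScalarTower A K L] {f : A[X]}
    (hF : (f.map (algebraMap A K)).rootSet L ⊆ v.ring) (hsep : (f.map (algebraMap A K)).Separable)
    (hsplits : ((f.map (algebraMap A K)).map (algebraMap K L)).Splits)
    (hf : φ f.leadingCoeff ≠ 0) : IsRootFamily (f.map φ) (v.residue hF) := by
  have hroots := (isRootFamily_rootSet hsep hsplits).of_map
  let ρ (x : (f.map (algebraMap A K)).rootSet L) : v.ring := ⟨x, hF x.2⟩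
  have hring : IsRootFamily f ρ := IsRootFamily.of_subalgebra hroots
  exact hring.map_of_leadingCoeff_ne_zero v.reduce_algebraMap hf

theorem evalEval_residue_eq_zero (hF : F.rootSet L ⊆ v.ring) (P : ℤ[X][X]) {x y : F.rootSet L}
    (h : (P.map (mapRingHom (Int.castRingHom L))).evalEval (x : L) y = 0) :
    (P.map (mapRingHom (Int.castRingHom v.residueField))).evalEval (v.residue hF x)
      (v.residue hF y) = 0 := by
  have hring : (P.map (mapRingHom (Int.castRingHom v.ring))).evalEval
      (⟨x, hF x.2⟩ : v.ring) ⟨y, hF y.2⟩ = 0 :=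
    Subtype.val_injective ((map_evalEval_map_intCast v.ring.val.toRingHom P _ _).trans h)
  rw [residue, residue, ← map_evalEval_map_intCast, hring, map_zero]

open Gal in
theorem residue_galActionHom (hF : F.rootSet L ⊆ v.ring)
    [Fact ((F.map (algebraMap K L)).Splits)] (x : F.rootSet L) :
    v.residue hF (galActionHom F L (restrict F L v.frobenius) x) = v.residue hF x ^ l :=
  v.reduce_frobenius (galActionHom_restrict F L v.frobenius x)

end FrobeniusPlace

theorem exists_frobenius_residue [IsDomain A] [IsIntegrallyClosed A] [Algebra A K]
    [IsFractionRing A K] [IsScalarTower A K L] [FiniteDimensional K L] [IsGalois K L]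
    [Fact l.Prime] (φ : A →+* ZMod l) [Fact ((F.map (algebraMap K L)).Splits)] (hsep : F.Separable)
    {f : A[X]} (hmap : f.map (algebraMap A K) = F) (hlead : φ f.leadingCoeff ≠ 0) :
    ∃ (κ : Type u) (_ : Field κ) (_ : Algebra (ZMod l) κ) (ρ : F.rootSet L → κ) (σ : F.Gal),
      IsRootFamily (f.map φ) ρ ∧ (∀ x, ρ (Gal.galActionHom F L σ x) = ρ x ^ l) ∧
      ∀ (P : ℤ[X][X]) (x y : F.rootSet L),
        (P.map (mapRingHom (Int.castRingHom L))).evalEval (x : L) y = 0 →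
          (P.map (mapRingHom (Int.castRingHom κ))).evalEval (ρ x) (ρ y) = 0 := by
  subst hmap
  obtain ⟨v, hv⟩ := exists_frobeniusPlace_forall_mem_ring (K := K) (L := L) φ hlead
  have hroots : (f.map (algebraMap A K)).rootSet L ⊆ v.ring := fun x hx => hv x <| by
    rw [← aeval_map_algebraMap K]
    exact aeval_eq_zero_of_mem_rootSet hx
  exact ⟨v.residueField, v.field, v.algebra, v.residue hroots, Gal.restrict _ L v.frobenius,
    v.isRootFamily_residue hroots hsep Fact.out hlead, v.residue_galActionHom hroots,
    fun P x y => v.evalEval_residue_eq_zero hroots P⟩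

end Residues

section FrobeniusPermutations

variable {l : ℕ} {κ ι : Type*} [Field κ] {σ : Equiv.Perm ι} {ρ : ι → κ}

theorem residue_pow_apply (hσ : ∀ i, ρ (σ i) = ρ i ^ l) (n : ℕ) (i : ι) :
    ρ ((σ ^ n) i) = ρ i ^ l ^ n := by
  induction n with
  | zero => simp
  | succ n ih => rw [pow_succ', Equiv.Perm.mul_apply, hσ, ih, ← pow_mul, ← pow_succ]

theorem prime_dvd_orderOf_of_residue_pow_eq (hσ : ∀ i, ρ (σ i) = ρ i ^ l) {i : ι} {n : ℕ}
    (hn : n.Prime) (hper : ρ i ^ l ^ n = ρ i) (hne : ρ i ^ l ≠ ρ i) : n ∣ orderOf σ := by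
  by_contra hdvd
  have hiter (m : ℕ) : (· ^ l)^[m] (ρ i) = ρ i ^ l ^ m := by
    rw [pow_iterate]
  have hm : Function.IsPeriodicPt (· ^ l) (orderOf σ) (ρ i) := by
    rw [Function.IsPeriodicPt, Function.IsFixedPt, hiter, ← residue_pow_apply hσ,
      pow_orderOf_eq_one, Equiv.Perm.one_apply]
  have hgcd := Function.IsPeriodicPt.gcd ((hiter n).trans hper) hm
  rw [(hn.coprime_iff_not_dvd.mpr hdvd).gcd_eq_one] at hgcd
  exact hne hgcd

variable [Fact l.Prime] [Algebra (ZMod l) κ]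

theorem pow_eq_self_iff_mem_range_algebraMap {z : κ} :
    z ^ l = z ↔ ∃ a : ZMod l, algebraMap (ZMod l) κ a = z := by
  have : CharP κ l := charP_of_injective_algebraMap (algebraMap (ZMod l) κ).injective l
  rw [← Subfield.mem_bot_iff_pow_eq_self, ← ZMod.fieldRange_castHom_eq_bot l,
    RingHom.mem_fieldRange, Subsingleton.elim (algebraMap (ZMod l) κ) (ZMod.castHom (dvd_refl l) κ)]

variable [Fintype ι] {g : (ZMod l)[X]}

theorem apply_eq_self_of_residue_eq (h : IsRootFamily g ρ) (hσ : ∀ i, ρ (σ i) = ρ i ^ l) {i : ι}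
    {a : ZMod l} (hi : ρ i = algebraMap (ZMod l) κ a) (ha : (derivative g).eval a ≠ 0) :
    σ i = i := by
  by_contra hne
  have := h.aeval_derivative_eq_zero (Ne.symm hne)
    ((hσ i).trans (pow_eq_self_iff_mem_range_algebraMap.mpr ⟨a, hi.symm⟩)).symm
  rw [hi, aeval_algebraMap_apply, map_eq_zero] at this
  exact ha this

theorem prime_dvd_orderOf_of_dvd_X_pow_sub_X (h : IsRootFamily g ρ) (hg : g ≠ 0)
    (hσ : ∀ i, ρ (σ i) = ρ i ^ l) {f : (ZMod l)[X]} (hfg : f ∣ g) (hdeg : f.natDegree ≠ 0)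
    (hroot : ∀ a, f.eval a ≠ 0) {n : ℕ} (hn : n.Prime) (hf : f ∣ X ^ l ^ n - X) :
    n ∣ orderOf σ := by
  obtain ⟨i, hi⟩ := h.exists_aeval_eq_zero_of_dvd hg hfg hdeg
  refine prime_dvd_orderOf_of_residue_pow_eq (i := i) hσ hn ?_ fun hfix => ?_
  · simpa [sub_eq_zero] using aeval_eq_zero_of_dvd_aeval_eq_zero hf hi
  · obtain ⟨a, ha⟩ := pow_eq_self_iff_mem_range_algebraMap.mp hfix
    rw [← ha, aeval_algebraMap_apply, map_eq_zero, coe_aeval_eq_eval] at hi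
    exact hroot a hi

theorem pow_eq_one_of_dvd_X_pow_sub_X (h : IsRootFamily g ρ) (hsep : g.Separable)
    (hσ : ∀ i, ρ (σ i) = ρ i ^ l) {n : ℕ} (hdvd : g ∣ X ^ l ^ n - X) : σ ^ n = 1 := by
  refine Equiv.ext fun i => h.injective hsep ?_
  have hroot := (h.aeval_eq_zero_iff hsep.ne_zero).mpr ⟨i, rfl⟩
  rw [residue_pow_apply hσ, Equiv.Perm.one_apply]
  simpa [sub_eq_zero] using aeval_eq_zero_of_dvd_aeval_eq_zero hdvd hroot

theorem card_fixedPoints_eq_card_roots [DecidableEq ι] (h : IsRootFamily g ρ) (hsep : g.Separable)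
    (hσ : ∀ i, ρ (σ i) = ρ i ^ l) :
    Fintype.card (Function.fixedPoints σ) = Fintype.card {a : ZMod l // g.eval a = 0} := by
  have hinj := h.injective hsep
  have hexists (a : {a : ZMod l // g.eval a = 0}) : ∃ i, ρ i = algebraMap (ZMod l) κ a :=
    (h.aeval_eq_zero_iff hsep.ne_zero).mp
      (by rw [aeval_algebraMap_apply, coe_aeval_eq_eval, a.2, map_zero])
  choose i hi using hexists
  have hfixed (a) : σ (i a) = i a :=
    hinj (by rw [hσ, pow_eq_self_iff_mem_range_algebraMap]; exact ⟨a, (hi a).symm⟩)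
  symm
  refine Fintype.card_of_bijective (f := fun a => ⟨i a, hfixed a⟩) ⟨fun a b hab => ?_, ?_⟩
  · have : i a = i b := congrArg Subtype.val hab
    exact Subtype.ext ((algebraMap (ZMod l) κ).injective (by rw [← hi, ← hi, this]))
  · rintro ⟨j, hj : σ j = j⟩
    obtain ⟨a, ha⟩ := pow_eq_self_iff_mem_range_algebraMap.mp ((hσ j).symm.trans (congrArg ρ hj))
    have hroot : g.eval a = 0 := by
      have := (h.aeval_eq_zero_iff hsep.ne_zero).mpr ⟨j, ha.symm⟩
      rwa [aeval_algebraMap_apply, coe_aeval_eq_eval, map_eq_zero] at this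
    exact ⟨⟨a, hroot⟩, Subtype.ext (hinj ((hi _).trans ha))⟩

end FrobeniusPermutations

section FiberPolynomial

/-- Coefficients of `q`. -/
@[irreducible]
def qCoeffs : List ℤ :=
  0 :: mulCoeffs (powCoeffs [6, 20, 20, 5] 2) (mulCoeffs (powCoeffs [-10, -14, 0, 10, 5] 4)
    (mulCoeffs (powCoeffs [-4, -8, 0, 10, 5] 2) (mulCoeffs [-4, -24, -48, 8, 60, 30, 5]
      (powCoeffs [-8, 0, 240, 1040, 2100, 3000, 2700, -1500, -3750, 3500, 7500, 3750, 625] 4))))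

/-- Coefficients of `r`. -/
@[irreducible]
def rCoeffs : List ℤ :=
  smulCoeffs (-2 ^ 24) (mulCoeffs (powCoeffs [2, 5, 5] 5) (powCoeffs [-1, -5, 0, 10, 5] 15))

/-- A symmetric factor `G(X, Y)` of `r(X) q(Y) - q(X) r(Y)` of degree `20` in each variable. Two
distinct roots `x`, `y` of `F` are collinear points of the quadrangle when `G(x, y) = 0`. -/
@[irreducible]
def collinearityCoeffs : List (List ℤ) :=
  [[4608, 76800, 573440, 2457600, 6370560, 8990976, 1257600, -21141120, -41080800, -29160000,
      15820800, 52935200, 46632000, 10386000, -17364000, -20910000, -11940000, -4155000, -900000,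
      -112500, -6250],
    [76800, 1253120, 9229440, 39484000, 104152400, 157402400, 62207840, -267112320, -612156000,
      -536773200, 55222800, 648848800, 696380000, 271969000, -132011000, -241079000, -156345000,
      -59332500, -13837500, -1850000, -109375],
    [573440, 9229440, 67066720, 284467600, 752080000, 1173359680, 634062480, -1491566160,
      -3909691800, -3862253600, -511543600, 3277348800, 4146239000, 2124809000, -180638500,
      -1046748000, -781522500, -321495000, -80175000, -11421875, -718750],
    [2457600, 39484000, 284467600, 1193424000, 3127437600, 4895160000, 2945412000, -5051179800,
      -14255667000, -14794957800, -3852971000, 8974324000, 12913473000, 7874391000, 1332345000,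
      -1680322500, -1605172500, -724781250, -193790625, -29562500, -2000000],
    [6370560, 104152400, 752080000, 3127437600, 8056196400, 12304424400, 7113295800, -12217314600,
      -32990608800, -33274480200, -9983764000, 14915569000, 22441372500, 15602847000, 6899812500,
      2173140000, 518231250, 76246875, -5250000, -5031250, -687500],
    [8990976, 157402400, 1173359680, 4895160000, 12304424400, 17527710600, 6976326000,
      -23454717600, -50381364000, -43630998000, -8835412000, 18489422500, 22432372500, 17775345000,
      16364418750, 14583817500, 9301153125, 3858487500, 992718750, 144265625, 9062500],
    [1257600, 62207840, 634062480, 2945412000, 7113295800, 6976326000, -8452001400, -36824095200,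
      -50860684500, -28064277000, 11812953500, 30697969500, 25692075000, 21862923750, 26370611250,
      26313590625, 17316806250, 7317656250, 1932421875, 292343750, 19453125],
    [-21141120, -267112320, -1491566160, -5051179800, -12217314600, -23454717600, -36824095200,
      -44443684500, -33901083000, -439821000, 42845157000, 72901035000, 75875883750, 56836721250,
      31885528125, 13596656250, 4525518750, 1241296875, 286218750, 48046875, 3984375],
    [-41080800, -612156000, -3909691800, -14255667000, -32990608800, -50381364000, -50860684500,
      -33901083000, -14906230500, 9237049500, 64984110000, 140865101250, 167652202500,
      108528609375, 18164100000, -31328175000, -31050984375, -14438625000, -3865078125, -573515625,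
      -36796875],
    [-29160000, -536773200, -3862253600, -14794957800, -33274480200, -43630998000, -28064277000,
      -439821000, 9237049500, 20556956250, 85557296250, 176769955000, 188111615625, 88427990625,
      -27343846875, -70945593750, -51637921875, -21361968750, -5372578125, -771093750, -48828125],
    [15820800, 55222800, -511543600, -3852971000, -9983764000, -8835412000, 11812953500,
      42845157000, 64984110000, 85557296250, 113571835000, 112535203125, 50350971875, -31517440625,
      -67829328125, -52402109375, -23668078125, -6709921875, -1181953125, -119921875, -5468750],
    [52935200, 648848800, 3277348800, 8974324000, 14915569000, 18489422500, 30697969500,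
      72901035000, 140865101250, 176769955000, 112535203125, -32263028125, -138151403125,
      -122625578125, -36832843750, 22563328125, 29088750000, 14372109375, 3935156250, 589062500,
      37890625],
    [46632000, 696380000, 4146239000, 12913473000, 22441372500, 22432372500, 25692075000,
      75875883750, 167652202500, 188111615625, 50350971875, -138151403125, -185139609375,
      -69789843750, 56315062500, 88808906250, 56041875000, 20808281250, 4744921875, 620703125,
      35937500],
    [10386000, 271969000, 2124809000, 7874391000, 15602847000, 17775345000, 21862923750,
      56836721250, 108528609375, 88427990625, -31517440625, -122625578125, -69789843750,
      57428203125, 121384218750, 95968828125, 44872031250, 13380468750, 2521875000, 276953125,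
      13671875],
    [-17364000, -132011000, -180638500, 1332345000, 6899812500, 16364418750, 26370611250,
      31885528125, 18164100000, -27343846875, -67829328125, -36832843750, 56315062500,
      121384218750, 110059453125, 60197812500, 21338671875, 4917187500, 705468750, 56640625,
      1953125],
    [-20910000, -241079000, -1046748000, -1680322500, 2173140000, 14583817500, 26313590625,
      13596656250, -31328175000, -70945593750, -52402109375, 22563328125, 88808906250, 95968828125,
      60197812500, 24258984375, 6369140625, 1055859375, 99609375, 3906250],
    [-11940000, -156345000, -781522500, -1605172500, 518231250, 9301153125, 17316806250,
      4525518750, -31050984375, -51637921875, -23668078125, 29088750000, 56041875000, 44872031250,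
      21338671875, 6369140625, 1171875000, 123046875, 5859375],
    [-4155000, -59332500, -321495000, -724781250, 76246875, 3858487500, 7317656250, 1241296875,
      -14438625000, -21361968750, -6709921875, 14372109375, 20808281250, 13380468750, 4917187500,
      1055859375, 123046875, 5859375],
    [-900000, -13837500, -80175000, -193790625, -5250000, 992718750, 1932421875, 286218750,
      -3865078125, -5372578125, -1181953125, 3935156250, 4744921875, 2521875000, 705468750,
      99609375, 5859375],
    [-112500, -1850000, -11421875, -29562500, -5031250, 144265625, 292343750, 48046875, -573515625,
      -771093750, -119921875, 589062500, 620703125, 276953125, 56640625, 3906250],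
    [-6250, -109375, -718750, -2000000, -687500, 9062500, 19453125, 3984375, -36796875, -48828125,
      -5468750, 37890625, 35937500, 13671875, 1953125]]

/-- The cofactor of `G(X, Y)` in `r(X) q(Y) - q(X) r(Y)`, obtained by exact division after the
substitution `X = 2 ^ 256` and read back from the base `2 ^ 256` digits of the quotient. -/
def cofactorCoeffs : List (List ℤ) :=
  force (collinearityCoeffs.map (evalCoeffs (2 ^ 256))) fun g =>
    force (crossDifferenceCoeffs (2 ^ 256) qCoeffs rCoeffs) fun d =>
      (divCoeffs (g.getD 0 0) g.tail 66 d).map (balancedDigits (2 ^ 256) 66)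

/-- The numerical verification that `cofactorCoeffs` is the cofactor. -/
def cofactorCheck : Bool :=
  force cofactorCoeffs fun H => force qCoeffs fun q => force rCoeffs fun r =>
    H.length ≤ 66 &&
    2 * (absSum q * absSum r) + (collinearityCoeffs.map absSum).sum * (H.map absSum).sum <
      2 ^ 256 &&
    eqCoeffs (crossDifferenceCoeffs (2 ^ 256) q r)
      (mulCoeffs (collinearityCoeffs.map (evalCoeffs (2 ^ 256))) (H.map (evalCoeffs (2 ^ 256))))

set_option maxRecDepth 100000 in
theorem cofactorCheck_eq_true : cofactorCheck = true := by decide +kernel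

theorem q_eq_intPoly : q = intPoly ℚ qCoeffs := by
  simp only [q, qCoeffs, intPoly_cons, intPoly_mulCoeffs, intPoly_powCoeffs, intPoly_nil]
  simp only [Int.cast_neg, Int.cast_ofNat, Int.cast_zero, C_neg, C_0, map_ofNat]
  ring

theorem r_eq_intPoly : r = intPoly ℚ rCoeffs := by
  simp only [r, rCoeffs, intPoly_smulCoeffs, intPoly_cons, intPoly_mulCoeffs, intPoly_powCoeffs,
    intPoly_nil]
  simp only [Int.cast_neg, Int.cast_pow, Int.cast_ofNat, Int.cast_zero, Int.cast_one, C_neg, C_pow,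
    C_0, C_1, map_ofNat]
  ring

/-- The polynomial `s q + r` over a ring containing the parameter `s`. The polynomial `F` is the
case `s = 1 - t`. -/
noncomputable def fiber {R : Type*} [CommRing R] (s : R) : R[X] :=
  C s * intPoly R qCoeffs + intPoly R rCoeffs

/-- Coefficients of `fiber s` for an integer `s`. -/
def fiberCoeffs (s : ℤ) : List ℤ := addCoeffs (smulCoeffs s qCoeffs) rCoeffs

variable {R : Type*} [CommRing R]

theorem map_fiber {S : Type*} [CommRing S] (f : R →+* S) (s : R) :
    (fiber s).map f = fiber (f s) := by
  simp [fiber, map_intPoly]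

theorem fiber_intCast (s : ℤ) : fiber (s : R) = intPoly R (fiberCoeffs s) := by
  simp [fiber, fiberCoeffs, intPoly_addCoeffs, intPoly_smulCoeffs]

theorem F_eq_fiber : F = fiber (1 - RatFunc.X) := by
  rw [F, p, q_eq_intPoly, r_eq_intPoly, Polynomial.map_add, map_intPoly, map_intPoly, fiber, C_sub,
    C_1]
  ring

theorem natDegree_fiber_le (s : R) : (fiber s).natDegree ≤ 85 := by
  have hq : qCoeffs.length = 86 := by decide +kernel
  have hr : rCoeffs.length = 71 := by decide +kernel
  refine natDegree_add_le_of_degree_le ((natDegree_C_mul_le _ _).trans ?_) ?_ <;>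
    refine natDegree_ofCoeffs_le ?_ <;> simp [hq, hr]

theorem coeff_eightyFive_fiber (s : R) : (fiber s).coeff 85 = s * 5 ^ 25 := by
  have hq : qCoeffs.getD 85 0 = 5 ^ 25 := by decide +kernel
  have hr : rCoeffs.getD 85 0 = 0 := by decide +kernel
  rw [fiber, coeff_add, coeff_C_mul, coeff_intPoly, coeff_intPoly, hq, hr]
  push_cast
  ring

theorem natDegree_fiber {s : R} (hs : s * 5 ^ 25 ≠ 0) : (fiber s).natDegree = 85 :=
  natDegree_eq_of_le_of_coeff_ne_zero (natDegree_fiber_le s) (by rwa [coeff_eightyFive_fiber])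

theorem leadingCoeff_fiber {s : R} (hs : s * 5 ^ 25 ≠ 0) :
    (fiber s).leadingCoeff = s * 5 ^ 25 := by
  rw [leadingCoeff, natDegree_fiber hs, coeff_eightyFive_fiber]

theorem intPoly_fiberCoeffs_ne_zero {s : ℤ} (hs : (s : R) * 5 ^ 25 ≠ 0) :
    intPoly R (fiberCoeffs s) ≠ 0 := by
  rw [← fiber_intCast, ← leadingCoeff_ne_zero, leadingCoeff_fiber hs]
  exact hs

theorem one_sub_X_ne_zero : (1 - RatFunc.X : RatFunc ℚ) ≠ 0 := by
  rw [← RatFunc.algebraMap_X, ← map_one (algebraMap ℚ[X] (RatFunc ℚ)), ← map_sub,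
    Ne, FaithfulSMul.algebraMap_eq_zero_iff, sub_eq_zero]
  exact fun h => by simpa using congr_arg (eval 0) h

theorem natDegree_F : F.natDegree = 85 := by
  rw [F_eq_fiber]
  exact natDegree_fiber (mul_ne_zero one_sub_X_ne_zero (by norm_num))

end FiberPolynomial

section Irreducibility

variable {k : Type*} [Field k]

theorem irreducible_map_C_sub_C_X_mul {a b : k[X]} (hab : IsCoprime a b) (hb : b ≠ 0) :
    Irreducible (a.map C - C X * b.map C : k[X][X]) := by
  have hswap : Bivariate.swap (R := k) (a.map C - C X * b.map C) = C (-b) * X + C a := by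
    rw [map_sub, map_mul, Bivariate.swap_map_C, Bivariate.swap_map_C, Bivariate.swap_X, C_neg]
    ring
  rw [← MulEquiv.irreducible_iff (Bivariate.swap (R := k)), hswap]
  exact irreducible_C_mul_X_add_C (neg_ne_zero.mpr hb) hab.symm.neg_left.isRelPrime

theorem irreducible_map_C_sub_C_ratFuncX_mul {a b : k[X]} (hab : IsCoprime a b) (hb : b ≠ 0)
    (hdeg : (a.map RatFunc.C - C RatFunc.X * b.map RatFunc.C).natDegree ≠ 0) :
    Irreducible (a.map RatFunc.C - C RatFunc.X * b.map RatFunc.C) := by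
  have hmap : (a.map C - C X * b.map C : k[X][X]).map (algebraMap k[X] (RatFunc k)) =
      a.map RatFunc.C - C RatFunc.X * b.map RatFunc.C := by
    have hC : (algebraMap k[X] (RatFunc k)).comp C = RatFunc.C :=
      RingHom.ext RatFunc.algebraMap_C
    simp [map_map, hC]
  have hirr := irreducible_map_C_sub_C_X_mul hab hb
  rw [← hmap] at hdeg ⊢
  refine ((hirr.isPrimitive fun h => hdeg ?_).irreducible_iff_irreducible_map_fraction_map).mp hirr
  exact Nat.le_zero.mp (natDegree_map_le.trans_eq h)

theorem isCoprime_intPoly_rCoeffs {a : List ℤ} (hquadratic : IsCoprime (intPoly ℚ a)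
    (intPoly ℚ [2, 5, 5])) (hquartic : IsCoprime (intPoly ℚ a) (intPoly ℚ [-1, -5, 0, 10, 5])) :
    IsCoprime (intPoly ℚ a) (intPoly ℚ rCoeffs) := by
  rw [rCoeffs, intPoly_smulCoeffs, intPoly_mulCoeffs, intPoly_powCoeffs, intPoly_powCoeffs]
  refine IsCoprime.mul_right ?_ (hquadratic.pow_right.mul_right hquartic.pow_right)
  exact isCoprime_one_right.of_isCoprime_of_dvd_right
    (isUnit_C.mpr (IsUnit.mk0 _ (by norm_num))).dvd

theorem isCoprime_q_r : IsCoprime q r := by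
  have hX : (X : ℚ[X]) = intPoly ℚ [0, 1] := by simp [intPoly_cons]
  rw [q_eq_intPoly, r_eq_intPoly, qCoeffs, intPoly_cons, Int.cast_zero, C_0, zero_add, hX,
    intPoly_mulCoeffs, intPoly_mulCoeffs, intPoly_mulCoeffs, intPoly_mulCoeffs]
  simp only [intPoly_powCoeffs]
  refine IsCoprime.mul_left (isCoprime_intPoly_rCoeffs ?_ ?_) <|
    (isCoprime_intPoly_rCoeffs ?_ ?_).pow_left.mul_left <|
    (isCoprime_intPoly_rCoeffs ?_ ?_).pow_left.mul_left <|
    (isCoprime_intPoly_rCoeffs ?_ ?_).pow_left.mul_left <|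
    (isCoprime_intPoly_rCoeffs ?_ ?_).mul_left
      (isCoprime_intPoly_rCoeffs ?_ ?_).pow_left
  · exact isCoprime_intPoly_of_bezout [-5, -5] [1] (c := 2) (by norm_num) (by decide)
  · exact isCoprime_intPoly_of_bezout [-5, 0, 10, 5] [-1] (c := 1) (by norm_num) (by decide)
  · exact isCoprime_intPoly_of_bezout [-5, -5] [18, 20, 5] (c := 6) (by norm_num) (by decide)
  · exact isCoprime_intPoly_of_bezout [-11, -55, 65, 55] [-75, -175, -55] (c := 9) (by norm_num)
      (by decide)
  · exact isCoprime_intPoly_of_bezout [5, 25] [52, 30, -30, -25] (c := 54) (by norm_num) (by decide)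
  · exact isCoprime_intPoly_of_bezout [0, 5, -5, -5] [-9, -5, 5, 5] (c := 9) (by norm_num)
      (by decide)
  · exact isCoprime_intPoly_of_bezout [15, 25] [36, 20, -40, -25] (c := 12) (by norm_num)
      (by decide)
  · exact isCoprime_intPoly_of_bezout [0, 5, -5, -5] [-3, -5, 5, 5] (c := 3) (by norm_num)
      (by decide)
  · exact isCoprime_intPoly_of_bezout [-75, -125] [12, -1180, -380, 1200, 700, 125] (c := 324)
      (by norm_num) (by decide)
  · exact isCoprime_intPoly_of_bezout [-30, -5, 50, 25] [93, 275, -15, -295, -150, -25] (c := 27)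
      (by norm_num) (by decide)
  · exact isCoprime_intPoly_of_bezout [-175, -125] [2216, -6040, 30560, 44700, 60600, 130500,
      -54000, -153750, 97500, 212500, 100000, 15625] (c := 5832) (by norm_num) (by decide)
  · exact isCoprime_intPoly_of_bezout [-228, -80, 430, 235] [1095, -4835, -33985, -77325, -115050,
      -137175, 34500, 199875, -105375, -322500, -171250, -29375] (c := 729) (by norm_num)
      (by decide)

theorem isCoprime_p_q : IsCoprime p q := by
  simpa [p, add_comm] using isCoprime_q_r.symm.add_mul_left_left 1

theorem q_ne_zero : q ≠ 0 := fun hq => by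
  have hr : IsUnit r := isCoprime_zero_left.mp (hq ▸ isCoprime_q_r)
  have hF : F.natDegree = 0 := by simp [F, p, hq, natDegree_eq_zero_of_isUnit hr]
  exact absurd (natDegree_F.symm.trans hF) (by norm_num)

theorem irreducible_F : Irreducible F := by
  have hF : F = p.map RatFunc.C - C RatFunc.X * q.map RatFunc.C := by
    rw [F, Subsingleton.elim (algebraMap ℚ (RatFunc ℚ)) RatFunc.C]
  have hdeg : F.natDegree ≠ 0 := natDegree_F.trans_ne (by norm_num)
  rw [hF] at hdeg ⊢
  exact irreducible_map_C_sub_C_ratFuncX_mul isCoprime_p_q q_ne_zero hdeg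

end Irreducibility

section FrobeniusData

attribute [local instance] Polynomial.algebra Polynomial.isLocalization

theorem isFractionRing_polynomial_ratFunc (A k : Type*) [CommRing A] [IsDomain A] [Field k]
    [Algebra A k] [IsFractionRing A k] : IsFractionRing A[X] (RatFunc k) := by
  have hinj : Function.Injective (algebraMap A[X] k[X]) :=
    map_injective _ (IsFractionRing.injective A k)
  have hloc := IsLocalization.localization_localization_isLocalization_of_has_all_units
    ((nonZeroDivisors A).map C) (nonZeroDivisors k[X]) (RatFunc k)
    fun x hx => hx.mem_nonZeroDivisors
  have hcomap : (nonZeroDivisors k[X]).comap (algebraMap A[X] k[X]) = nonZeroDivisors A[X] :=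
    le_antisymm (comap_nonZeroDivisors_le_of_injective hinj)
      (nonZeroDivisors_le_comap_nonZeroDivisors_of_injective _ hinj)
  rwa [hcomap] at hloc

instance fact_splits_splittingField :
    Fact ((F.map (algebraMap (RatFunc ℚ) F.SplittingField)).Splits) :=
  ⟨SplittingField.splits F⟩

theorem separable_F : F.Separable := irreducible_F.separable

theorem map_fiber_one_sub_X : (fiber (1 - X : ℤ[X])).map (algebraMap ℤ[X] (RatFunc ℚ)) = F := by
  have hX : algebraMap ℤ[X] (RatFunc ℚ) X = RatFunc.X := by
    rw [IsScalarTower.algebraMap_apply ℤ[X] ℚ[X] (RatFunc ℚ), algebraMap_def, coe_mapRingHom,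
      map_X, RatFunc.algebraMap_X]
  rw [map_fiber, F_eq_fiber, map_sub, map_one, hX]

theorem exists_frobenius_residue_F (l : ℕ) [Fact l.Prime] {s : ℤ}
    (hs : (s : ZMod l) * 5 ^ 25 ≠ 0) :
    ∃ (κ : Type) (_ : Field κ) (_ : Algebra (ZMod l) κ) (ρ : F.rootSet F.SplittingField → κ)
      (σ : F.Gal), IsRootFamily (intPoly (ZMod l) (fiberCoeffs s)) ρ ∧
      (∀ x, ρ (Gal.galActionHom F F.SplittingField σ x) = ρ x ^ l) ∧
      ∀ (P : List (List ℤ)) (x y : F.rootSet F.SplittingField),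
        (intPoly₂ F.SplittingField P).evalEval (x : F.SplittingField) y = 0 →
          (intPoly₂ κ P).evalEval (ρ x) (ρ y) = 0 := by
  have : IsFractionRing ℤ[X] (RatFunc ℚ) := isFractionRing_polynomial_ratFunc ℤ ℚ
  have : IsGalois (RatFunc ℚ) F.SplittingField := IsGalois.of_separable_splitting_field separable_F
  let φ : ℤ[X] →+* ZMod l := eval₂RingHom (Int.castRingHom (ZMod l)) (1 - s)
  have hφ : φ (1 - X) = s := by simp [φ]
  have hlead : φ (fiber (1 - X)).leadingCoeff ≠ 0 := by
    have hX : φ ((1 - X) * 5 ^ 25) = s * 5 ^ 25 := by rw [map_mul, hφ, map_pow, map_ofNat]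
    rw [leadingCoeff_fiber fun h0 => hs (by rw [← hX, h0, map_zero]), hX]
    exact hs
  obtain ⟨κ, _, _, ρ, σ, hρ, hσ, hrel⟩ :=
    exists_frobenius_residue (L := F.SplittingField) φ separable_F map_fiber_one_sub_X hlead
  rw [map_fiber, hφ, fiber_intCast] at hρ
  refine ⟨κ, inferInstance, inferInstance, ρ, σ, hρ, hσ, fun P x y hxy => ?_⟩
  rw [← map_intPoly₂ (Int.castRingHom _)] at hxy ⊢
  exact hrel _ x y hxy

end FrobeniusData

section Collinearity

/-- Two roots are collinear when they annihilate the polynomial `G(X, Y)`. -/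
def IsCollinear {R : Type*} [CommRing R] (x y : R) : Prop :=
  (intPoly₂ R collinearityCoeffs).evalEval x y = 0

theorem ncard_setOf_eval_eq_zero_of_mul {k ι : Type*} [Field k] [Fintype ι] {ρ : ι → k}
    (hρ : Function.Injective ρ) {g h : k[X]} (hgh : g * h ≠ 0) {m n : ℕ} (hg : g.natDegree ≤ m)
    (hh : h.natDegree ≤ n) (hcard : Fintype.card ι = m + n)
    (hroot : ∀ i, (g * h).eval (ρ i) = 0) : {i | g.eval (ρ i) = 0}.ncard = m := by
  classical
  have ncard_le {f : k[X]} (hf : f ≠ 0) : {i | f.eval (ρ i) = 0}.ncard ≤ f.natDegree := by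
    refine (Set.ncard_le_ncard_of_injOn (t := (f.roots.toFinset : Set k)) ρ ?_ hρ.injOn).trans ?_
    · exact fun i hi => by simpa [hf] using hi
    · rw [Set.ncard_coe_finset]
      exact (Multiset.toFinset_card_le _).trans (card_roots' f)
  have hle : m + n ≤ {i | g.eval (ρ i) = 0}.ncard + {i | h.eval (ρ i) = 0}.ncard := by
    rw [← hcard, ← Nat.card_eq_fintype_card, ← Set.ncard_univ]
    refine (Set.ncard_le_ncard fun i _ => ?_).trans (Set.ncard_union_le _ _)
    simpa using hroot i
  have hg' := ncard_le (left_ne_zero_of_mul hgh)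
  have hh' := ncard_le (right_ne_zero_of_mul hgh)
  omega

theorem map_eval_crossDifference_of_eval_fiber_eq_zero {R : Type*} [CommRing R] {s x : R}
    (hx : (fiber s).eval x = 0) :
    (crossDifference R qCoeffs rCoeffs).map (evalRingHom x) =
      C (-(intPoly R qCoeffs).eval x) * fiber s := by
  have hr : (intPoly R rCoeffs).eval x = -(s * (intPoly R qCoeffs).eval x) := by
    rw [fiber, eval_add, eval_mul, eval_C] at hx
    linear_combination hx
  simp only [crossDifference, Polynomial.map_sub, Polynomial.map_mul, map_C, coe_evalRingHom,
    map_intPoly, hr, fiber, C_neg, C_mul]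
  ring

theorem eval_qCoeffs_ne_zero {k : Type*} [Field k] [CharZero k] {s x : k}
    (hx : (fiber s).eval x = 0) : (intPoly k qCoeffs).eval x ≠ 0 := by
  intro hq
  have hr : (intPoly k rCoeffs).eval x = 0 := by simpa [fiber, hq] using hx
  have hcop := isCoprime_q_r.map (mapRingHom (algebraMap ℚ k))
  rw [q_eq_intPoly, r_eq_intPoly, coe_mapRingHom, map_intPoly, map_intPoly] at hcop
  have := hcop.map (evalRingHom x)
  simp [hq, hr] at this

theorem exists_cofactor : ∃ H : List (List ℤ), H.length ≤ 66 ∧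
    crossDifference ℤ qCoeffs rCoeffs = intPoly₂ ℤ collinearityCoeffs * intPoly₂ ℤ H := by
  have hcheck := cofactorCheck_eq_true
  simp only [cofactorCheck, force_eq, Bool.and_eq_true, decide_eq_true_eq] at hcheck
  obtain ⟨⟨hlength, hnorm⟩, hval⟩ := hcheck
  exact ⟨cofactorCoeffs, hlength, crossDifference_eq_mul (N := 2 ^ 256) (by simpa using hval) hnorm⟩

theorem ncard_setOf_isCollinear {k ι : Type*} [Field k] [CharZero k] [Fintype ι] {ρ : ι → k}
    (hρ : Function.Injective ρ) (hcard : Fintype.card ι = 85) {s : k} (hs : s ≠ 0)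
    (hroot : ∀ i, (fiber s).eval (ρ i) = 0) (i : ι) :
    {j | IsCollinear (ρ i) (ρ j)}.ncard = 20 := by
  obtain ⟨H, hH, hmul⟩ := exists_cofactor
  have hfiber : (fiber s).natDegree = 85 := natDegree_fiber (mul_ne_zero hs (by norm_num))
  have hprod : (intPoly₂ k collinearityCoeffs).map (evalRingHom (ρ i)) *
      (intPoly₂ k H).map (evalRingHom (ρ i)) =
        C (-(intPoly k qCoeffs).eval (ρ i)) * fiber s := by
    rw [← map_eval_crossDifference_of_eval_fiber_eq_zero (hroot i),
      ← map_crossDifference (Int.castRingHom k), hmul, Polynomial.map_mul, Polynomial.map_mul,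
      map_intPoly₂, map_intPoly₂]
  have hcoll : collinearityCoeffs.length ≤ 20 + 1 := by decide +kernel
  have hncard := ncard_setOf_eval_eq_zero_of_mul hρ (hprod.trans_ne ?_)
    (natDegree_map_le.trans (natDegree_intPoly₂_le hcoll))
    (natDegree_map_le.trans (natDegree_intPoly₂_le hH)) hcard
    fun j => by rw [hprod, eval_mul, hroot, mul_zero]
  · simpa only [IsCollinear, map_evalRingHom_eval] using hncard
  · refine mul_ne_zero ?_ (ne_zero_of_natDegree_gt (n := 0) (by omega))
    simpa using eval_qCoeffs_ne_zero (hroot i)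

end Collinearity

section Labelling

theorem natCast_evalModCoeffs_map {R : Type*} [CommRing R] {m : ℕ} [CharP R m] [NeZero m]
    (L : List (List ℤ)) (x y : ℕ) :
    (evalModCoeffs m (L.map fun l => evalModCoeffs m (reduceCoeffs m l) x) y : R) =
      (intPoly₂ R L).evalEval (x : R) (y : R) := by
  rw [← map_evalRingHom_eval, natCast_evalModCoeffs, intPoly₂, map_ofCoeffs, natPoly, List.map_map,
    List.map_map]
  simp [Function.comp_def, natCast_evalModCoeffs_reduceCoeffs]

/-- The roots of the fibre `s = 2038` modulo `2311`, ordered so that collinear roots have adjacent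
indices. -/
def rootResidues : List ℕ :=
  [9, 440, 63, 1233, 1139, 465, 1063, 273, 389, 1135, 495, 305, 220, 1337, 1234, 2152, 592, 14,
  284, 1154, 1408, 1466, 1294, 1124, 680, 1687, 1024, 759, 1823, 2209, 2041, 266, 2148, 2093, 102,
  514, 1896, 234, 1002, 1317, 801, 670, 1277, 344, 1178, 838, 261, 1159, 2053, 605, 784, 108, 1954,
  1168, 723, 2115, 1940, 420, 1297, 1977, 565, 1839, 725, 1712, 1041, 567, 1052, 2276, 156, 579,
  992, 442, 1119, 2143, 455, 1837, 2016, 1599, 606, 1311, 1443, 1944, 1957, 607, 341]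

/-- The residue modulo `2311` of the `i`-th root. -/
def rootResidue (i : Fin 85) : ℕ := rootResidues.getD i 0

theorem rootResidue_mem_zipIdx (i : Fin 85) : (rootResidue i, i.val) ∈ rootResidues.zipIdx := by
  have length_eq : rootResidues.length = 85 := rfl
  simp [List.mem_zipIdx_iff_getElem?, rootResidue, length_eq]

theorem rootResidue_injective : Function.Injective rootResidue := by
  have nodup : rootResidues.Nodup := by decide +kernel
  intro i j hij
  rw [rootResidue, rootResidue, List.getD_eq_getElem _ _ i.2, List.getD_eq_getElem _ _ j.2] at hij
  exact Fin.ext (nodup.getElem_inj_iff.mp hij)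

theorem rootResidue_lt (i : Fin 85) : rootResidue i < 2311 := by
  have lt : ∀ a ∈ rootResidues.zipIdx, a.1 < 2311 := by decide +kernel
  exact lt _ (rootResidue_mem_zipIdx i)

section CharP

variable {κ : Type*} [CommRing κ] [CharP κ 2311]

variable (κ) in
theorem natCast_rootResidue_injective : Function.Injective fun i => (rootResidue i : κ) :=
  fun i j hij => rootResidue_injective <|
    Nat.ModEq.eq_of_lt_of_lt ((CharP.natCast_eq_natCast κ 2311).mp hij) (rootResidue_lt i)
      (rootResidue_lt j)

set_option maxRecDepth 100000 in
theorem eval_natCast_rootResidue (i : Fin 85) :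
    (intPoly κ (fiberCoeffs 2038)).eval (rootResidue i : κ) = 0 := by
  have check : force (reduceCoeffs 2311 (fiberCoeffs 2038)) (fun f =>
      rootResidues.zipIdx.all fun a => decide (2311 ∣ evalModCoeffs 2311 f a.1)) = true := by
    decide +kernel
  rw [force_eq] at check
  have dvd := List.all_eq_true.mp check _ (rootResidue_mem_zipIdx i)
  rw [← natCast_evalModCoeffs_reduceCoeffs (m := 2311), CharP.cast_eq_zero_iff κ 2311]
  exact of_decide_eq_true dvd

set_option maxRecDepth 100000 in
theorem adj_of_dvd_evalModCoeffs {i j : Fin 85}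
    (h : 2311 ∣ evalModCoeffs 2311 (collinearityCoeffs.map fun l =>
      evalModCoeffs 2311 (reduceCoeffs 2311 l) (rootResidue i)) (rootResidue j)) :
    adj i j = true := by
  have check : force (collinearityCoeffs.map (reduceCoeffs 2311)) (fun G =>
      rootResidues.zipIdx.all fun a =>
        force (G.map fun g => evalModCoeffs 2311 g a.1) fun row =>
          rootResidues.zipIdx.all fun b =>
            !decide (2311 ∣ evalModCoeffs 2311 row b.1) ||
              adj (Fin.ofNat 85 a.2) (Fin.ofNat 85 b.2)) = true := by
    decide +kernel
  simp only [force_eq, List.map_map, List.all_eq_true] at check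
  simpa [Function.comp_def, h] using
    check _ (rootResidue_mem_zipIdx i) _ (rootResidue_mem_zipIdx j)

theorem adj_of_isCollinear_natCast {i j : Fin 85}
    (h : IsCollinear (rootResidue i : κ) (rootResidue j)) : adj i j = true :=
  adj_of_dvd_evalModCoeffs <| (CharP.cast_eq_zero_iff κ 2311 _).mp <|
    (natCast_evalModCoeffs_map _ _ _).trans h

end CharP

theorem ncard_setOf_adj (i : Fin 85) : {j | adj i j = true}.ncard = 20 := by
  have count : ∀ i : Fin 85, (Finset.univ.filter fun j => adj i j = true).card = 20 := by
    decide +kernel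
  rw [← count i, ← Set.ncard_coe_finset, Finset.coe_filter_univ]

theorem card_rootSet_F : Fintype.card (F.rootSet F.SplittingField) = 85 := by
  rw [card_rootSet_eq_natDegree separable_F (SplittingField.splits F), natDegree_F]

theorem eval_fiber_rootSet (x : F.rootSet F.SplittingField) :
    (fiber (algebraMap (RatFunc ℚ) F.SplittingField (1 - RatFunc.X))).eval
      (x : F.SplittingField) = 0 := by
  rw [← map_fiber, ← F_eq_fiber, eval_map_algebraMap]
  exact aeval_eq_zero_of_mem_rootSet x.2

theorem exists_equiv_rootSet_adj_of_isCollinear : ∃ e : Fin 85 ≃ F.rootSet F.SplittingField,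
    ∀ i j, IsCollinear (e i : F.SplittingField) (e j) → adj i j = true := by
  have leading_ne_zero : ((2038 : ℤ) : ZMod 2311) * 5 ^ 25 ≠ 0 := by decide +kernel
  have : Fact (Nat.Prime 2311) := ⟨by norm_num⟩
  obtain ⟨κ, _, _, ρ, -, hρ, -, specialize⟩ := exists_frobenius_residue_F 2311 leading_ne_zero
  have : CharP κ 2311 := charP_of_injective_algebraMap (algebraMap (ZMod 2311) κ).injective 2311
  have exists_root (i : Fin 85) : ∃ x, ρ x = rootResidue i :=
    (hρ.aeval_eq_zero_iff (intPoly_fiberCoeffs_ne_zero leading_ne_zero)).mp <| by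
      rw [← eval_map_algebraMap, map_intPoly, eval_natCast_rootResidue]
  choose e he using exists_root
  have e_injective : Function.Injective e := fun i j hij =>
    natCast_rootResidue_injective κ (by simp only [← he, hij])
  refine ⟨Equiv.ofBijective e <| (Fintype.bijective_iff_injective_and_card e).mpr
    ⟨e_injective, by rw [card_rootSet_F, Fintype.card_fin]⟩, fun i j hij => ?_⟩
  refine adj_of_isCollinear_natCast (κ := κ) ?_
  rw [← he, ← he]
  exact specialize _ _ _ hij

/-- The inclusion of graphs given by reduction modulo `2311` is an isomorphism, both graphs being
regular of valency 20. -/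
theorem exists_equiv_rootSet_isCollinear_iff : ∃ e : Fin 85 ≃ F.rootSet F.SplittingField,
    ∀ i j, IsCollinear (e i : F.SplittingField) (e j) ↔ adj i j = true := by
  obtain ⟨e, he⟩ := exists_equiv_rootSet_adj_of_isCollinear
  have neighbours_eq (i : Fin 85) :
      {j | IsCollinear (e i : F.SplittingField) (e j)} = {j | adj i j = true} := by
    refine Set.eq_of_subset_of_ncard_le (he i) ?_
    rw [ncard_setOf_adj, ncard_setOf_isCollinear (ρ := fun i => (e i : F.SplittingField))
      (Subtype.val_injective.comp e.injective) (Fintype.card_fin 85)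
      ((_root_.map_ne_zero _).mpr one_sub_X_ne_zero) (fun i => eval_fiber_rootSet (e i))]
  exact ⟨e, fun i => Set.ext_iff.mp (neighbours_eq i)⟩

end Labelling

section FrobeniusElements

theorem card_mul_orderOf_dvd_card {G α : Type*} [Group G] [MulAction G α]
    [MulAction.IsPretransitive G α] {g : G} {x : α} (hx : g • x = x) :
    Nat.card α * orderOf g ∣ Nat.card G := by
  rw [← MulAction.index_stabilizer_of_transitive G x,
    ← (MulAction.stabilizer G x).index_mul_card]
  refine mul_dvd_mul_left _ ?_
  rw [← Subgroup.orderOf_mk g (MulAction.mem_stabilizer_iff.mpr hx)]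
  exact orderOf_dvd_natCard _

theorem natDegree_natPoly_ne_zero {R : Type*} [Semiring R] {l : List ℕ} {n : ℕ} (hn : n ≠ 0)
    (hl : (l.getD n 0 : R) ≠ 0) : (natPoly R l).natDegree ≠ 0 := by
  have coeff_ne_zero : (natPoly R l).coeff n ≠ 0 := by
    rw [natPoly, coeff_ofCoeffs, ← map_zero (Nat.castRingHom R), List.getD_map]
    simpa using hl
  exact (hn.bot_lt.trans_le (le_natDegree_of_ne_zero coeff_ne_zero)).ne'

theorem card_roots_intPoly (l : ℕ) [NeZero l] (a : List ℤ) :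
    Fintype.card {x : ZMod l // (intPoly (ZMod l) a).eval x = 0} =
      Nat.count (fun x => l ∣ evalModCoeffs l (reduceCoeffs l a) x) l := by
  have eval_natCast_eq_zero_iff (n : ℕ) : (intPoly (ZMod l) a).eval (n : ZMod l) = 0 ↔
      l ∣ evalModCoeffs l (reduceCoeffs l a) n := by
    rw [← natCast_evalModCoeffs_reduceCoeffs (m := l), CharP.cast_eq_zero_iff (ZMod l) l]
  rw [Fintype.card_subtype, Nat.count_eq_card_filter_range]
  refine Finset.card_nbij' ZMod.val (↑) (fun x hx => ?_) (fun n hn => ?_)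
    (fun x _ => ZMod.natCast_zmod_val x) fun n hn => ?_
  · simpa [ZMod.val_lt, ← eval_natCast_eq_zero_iff] using hx
  · simpa [eval_natCast_eq_zero_iff] using (Finset.mem_filter.mp hn).2
  · exact ZMod.val_cast_of_lt (Finset.mem_range.mp (Finset.mem_filter.mp hn).1)

section PowerCertificates

variable {l : ℕ} [Fact l.Prime] {n : ℕ}

theorem intPoly_dvd_X_pow_sub_X {c : ℤ} {a : List ℤ}
    (hpow : powModCoeffs l (reduceCoeffs l (smulCoeffs c a)) (l ^ n) = [0, 1]) :
    intPoly (ZMod l) a ∣ X ^ l ^ n - X := by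
  have dvd := natPoly_dvd_X_pow_sub_X (R := ZMod l) hpow
  rw [natPoly_reduceCoeffs, intPoly_smulCoeffs] at dvd
  exact (dvd_mul_left _ _).trans dvd

theorem separable_of_dvd_X_pow_sub_X {g : (ZMod l)[X]} (hn : n ≠ 0) (hdvd : g ∣ X ^ l ^ n - X) :
    g.Separable :=
  (galois_poly_separable l _ (dvd_pow_self l hn)).of_dvd hdvd

variable {κ ι : Type*} [Field κ] [Algebra (ZMod l) κ] [Fintype ι] {σ : Equiv.Perm ι} {ρ : ι → κ}

theorem prime_dvd_orderOf_of_powModCoeffs {g : (ZMod l)[X]} (h : IsRootFamily g ρ) (hg : g ≠ 0)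
    (hσ : ∀ i, ρ (σ i) = ρ i ^ l) {f : List ℕ} (hfg : natPoly (ZMod l) f ∣ g)
    (hdeg : (natPoly (ZMod l) f).natDegree ≠ 0) (hroot : ∀ a, (natPoly (ZMod l) f).eval a ≠ 0)
    (hn : n.Prime) (hpow : powModCoeffs l f (l ^ n) = [0, 1]) : n ∣ orderOf σ :=
  prime_dvd_orderOf_of_dvd_X_pow_sub_X h hg hσ hfg hdeg hroot hn (natPoly_dvd_X_pow_sub_X hpow)

theorem sign_of_powModCoeffs [DecidableEq ι] {c : ℤ} {a : List ℤ}
    (h : IsRootFamily (intPoly (ZMod l) a) ρ) (hσ : ∀ i, ρ (σ i) = ρ i ^ l)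
    (hpow : powModCoeffs l (reduceCoeffs l (smulCoeffs c a)) (l ^ 2) = [0, 1]) :
    Equiv.Perm.sign σ = (-1) ^ ((Fintype.card ι -
      Nat.count (fun x => l ∣ evalModCoeffs l (reduceCoeffs l a) x) l) / 2) := by
  have separable := separable_of_dvd_X_pow_sub_X two_ne_zero (intPoly_dvd_X_pow_sub_X hpow)
  rw [Equiv.Perm.sign_of_pow_two_eq_one
    (pow_eq_one_of_dvd_X_pow_sub_X h separable hσ (intPoly_dvd_X_pow_sub_X hpow)),
    card_fixedPoints_eq_card_roots h separable hσ, card_roots_intPoly]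

end PowerCertificates

/-- A cubic factor of the fibre `s = -1` modulo `13`. -/
def cubicFactor : List ℕ := [5, 1, 3, 1]

/-- A quintic factor of the fibre `s = -1` modulo `13`. -/
def quinticFactor : List ℕ := [6, 12, 10, 0, 3, 1]

set_option maxRecDepth 100000 in
theorem natPoly_cubicFactor_dvd :
    natPoly (ZMod 13) cubicFactor ∣ intPoly (ZMod 13) (fiberCoeffs (-1)) := by
  rw [← natPoly_reduceCoeffs (m := 13)]
  exact natPoly_dvd_of_mulModCoeffs_eq_nil (m := 13) (by decide +kernel)

set_option maxRecDepth 100000 in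
theorem natPoly_quinticFactor_dvd :
    natPoly (ZMod 13) quinticFactor ∣ intPoly (ZMod 13) (fiberCoeffs (-1)) := by
  rw [← natPoly_reduceCoeffs (m := 13)]
  exact natPoly_dvd_of_mulModCoeffs_eq_nil (m := 13) (by decide +kernel)

theorem eval_cubicFactor_ne_zero (a : ZMod 13) : (natPoly (ZMod 13) cubicFactor).eval a ≠ 0 := by
  simp only [cubicFactor, natPoly_cons, natPoly_nil, eval_add, eval_mul, eval_C, eval_X, eval_zero]
  decide +revert

theorem eval_quinticFactor_ne_zero (a : ZMod 13) :
    (natPoly (ZMod 13) quinticFactor).eval a ≠ 0 := by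
  simp only [quinticFactor, natPoly_cons, natPoly_nil, eval_add, eval_mul, eval_C, eval_X,
    eval_zero]
  decide +revert

theorem natDegree_cubicFactor_ne_zero : (natPoly (ZMod 13) cubicFactor).natDegree ≠ 0 :=
  natDegree_natPoly_ne_zero three_ne_zero (by decide)

theorem natDegree_quinticFactor_ne_zero : (natPoly (ZMod 13) quinticFactor).natDegree ≠ 0 :=
  natDegree_natPoly_ne_zero (n := 5) (by decide) (by decide)

set_option maxRecDepth 100000 in
theorem eval_two_derivative_fiber_ne_zero :
    (derivative (intPoly (ZMod 13) (fiberCoeffs (-1)))).eval 2 ≠ 0 := by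
  rw [← intPoly_derivCoeffs, ← Nat.cast_ofNat (n := 2),
    ← natCast_evalModCoeffs_reduceCoeffs (m := 13), Ne, CharP.cast_eq_zero_iff (ZMod 13) 13]
  decide +kernel

set_option maxRecDepth 100000 in
theorem eval_two_fiber_eq_zero : (intPoly (ZMod 13) (fiberCoeffs (-1))).eval 2 = 0 := by
  rw [← Nat.cast_ofNat (n := 2), ← natCast_evalModCoeffs_reduceCoeffs (m := 13),
    CharP.cast_eq_zero_iff (ZMod 13) 13]
  decide +kernel

/-- The Frobenius element at `p = 13`, `s = -1`, where the fibre has factors of degrees `3` and `5`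
and a simple root. -/
theorem exists_smul_eq_self_of_fifteen_dvd_orderOf :
    ∃ (σ : F.Gal) (x : F.rootSet F.SplittingField), σ • x = x ∧ 15 ∣ orderOf σ := by
  have leading_ne_zero : ((-1 : ℤ) : ZMod 13) * 5 ^ 25 ≠ 0 := by decide +kernel
  have : Fact (Nat.Prime 13) := ⟨by norm_num⟩
  have fiber_ne_zero := intPoly_fiberCoeffs_ne_zero leading_ne_zero
  obtain ⟨κ, _, _, ρ, σ, hρ, hσ, -⟩ := exists_frobenius_residue_F 13 leading_ne_zero
  obtain ⟨x, hx⟩ := (hρ.aeval_eq_zero_iff (z := algebraMap (ZMod 13) κ 2) fiber_ne_zero).mp (by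
    rw [aeval_algebraMap_apply, coe_aeval_eq_eval, eval_two_fiber_eq_zero, map_zero])
  refine ⟨σ, x, apply_eq_self_of_residue_eq hρ hσ hx eval_two_derivative_fiber_ne_zero,
    Dvd.dvd.trans ?_ (orderOf_map_dvd (Gal.galActionHom F F.SplittingField) σ)⟩
  refine Nat.Coprime.mul_dvd_of_dvd_of_dvd (by norm_num : Nat.Coprime 3 5) ?_ ?_
  · exact prime_dvd_orderOf_of_powModCoeffs hρ fiber_ne_zero hσ natPoly_cubicFactor_dvd
      natDegree_cubicFactor_ne_zero eval_cubicFactor_ne_zero Nat.prime_three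
      (by decide +kernel)
  · exact prime_dvd_orderOf_of_powModCoeffs hρ fiber_ne_zero hσ natPoly_quinticFactor_dvd
      natDegree_quinticFactor_ne_zero eval_quinticFactor_ne_zero Nat.prime_five
      (by decide +kernel)

theorem dvd_card_gal_F : 1275 ∣ Nat.card F.Gal := by
  obtain ⟨σ, x, hx, hσ⟩ := exists_smul_eq_self_of_fifteen_dvd_orderOf
  have dvd_card := @card_mul_orderOf_dvd_card _ _ _ (Gal.galAction F F.SplittingField)
    (Gal.galAction_isPretransitive F F.SplittingField irreducible_F) σ x hx
  rw [Nat.card_eq_fintype_card, card_rootSet_F] at dvd_card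
  exact (mul_dvd_mul_left 85 hσ).trans dvd_card

set_option maxRecDepth 100000 in
theorem powModCoeffs_fiber :
    powModCoeffs 179 (reduceCoeffs 179 (smulCoeffs 6 (fiberCoeffs 2))) (179 ^ 2) = [0, 1] := by
  have check : force (reduceCoeffs 179 (smulCoeffs 6 (fiberCoeffs 2)))
      (fun h => powModCoeffs 179 h (179 ^ 2)) = [0, 1] := by
    decide +kernel
  rwa [force_eq] at check

set_option maxRecDepth 100000 in
theorem count_roots_fiber :
    Nat.count (fun x => 179 ∣ evalModCoeffs 179 (reduceCoeffs 179 (fiberCoeffs 2)) x) 179 = 15 := by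
  have check : force (reduceCoeffs 179 (fiberCoeffs 2))
      (fun h => Nat.count (fun x => 179 ∣ evalModCoeffs 179 h x) 179) = 15 := by
    decide +kernel
  rwa [force_eq] at check

/-- The Frobenius element at `p = 179`, `s = 2`. -/
theorem exists_sign_galActionHom_eq_neg_one [DecidableEq (F.rootSet F.SplittingField)] :
    ∃ σ : F.Gal, Equiv.Perm.sign (Gal.galActionHom F F.SplittingField σ) = -1 := by
  have leading_ne_zero : ((2 : ℤ) : ZMod 179) * 5 ^ 25 ≠ 0 := by decide +kernel
  have : Fact (Nat.Prime 179) := ⟨by norm_num⟩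
  obtain ⟨κ, _, _, ρ, σ, hρ, hσ, -⟩ := exists_frobenius_residue_F 179 leading_ne_zero
  refine ⟨σ, ?_⟩
  rw [sign_of_powModCoeffs hρ hσ powModCoeffs_fiber, card_rootSet_F, count_roots_fiber]
  rfl

end FrobeniusElements

section GaloisGroup

theorem isCollinear_map_iff {R S : Type*} [CommRing R] [CommRing S] {f : R →+* S}
    (hf : Function.Injective f) {x y : R} : IsCollinear (f x) (f y) ↔ IsCollinear x y := by
  rw [IsCollinear, ← map_intPoly₂ f, map_mapRingHom_evalEval, map_eq_zero_iff f hf, IsCollinear]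

theorem isCollinear_galActionHom_iff (σ : F.Gal) (x y : F.rootSet F.SplittingField) :
    IsCollinear (Gal.galActionHom F F.SplittingField σ x : F.SplittingField)
      (Gal.galActionHom F F.SplittingField σ y) ↔ IsCollinear (x : F.SplittingField) y := by
  obtain ⟨τ, rfl⟩ := Gal.restrict_surjective F F.SplittingField σ
  rw [Gal.galActionHom_restrict, Gal.galActionHom_restrict]
  exact isCollinear_map_iff (f := (τ : F.SplittingField →+* F.SplittingField)) τ.injective

theorem natCard_gal_F : Nat.card F.Gal = 1958400 := by
  classical
  obtain ⟨e, he⟩ := exists_equiv_rootSet_isCollinear_iff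
  let action : F.Gal →* Equiv.Perm (Fin 85) :=
    e.symm.permCongrHom.toMonoidHom.comp (Gal.galActionHom F F.SplittingField)
  have action_injective : Function.Injective action :=
    e.symm.permCongrHom.injective.comp (Gal.galActionHom_injective F F.SplittingField)
  have e_action (σ : F.Gal) (i : Fin 85) :
      e (action σ i) = Gal.galActionHom F F.SplittingField σ (e i) := e.apply_symm_apply _
  have card_range : Nat.card action.range = Nat.card F.Gal :=
    Nat.card_congr (MonoidHom.ofInjective action_injective).symm.toEquiv
  rw [← card_range]
  refine card_eq_of_le_automorphismGroup_adj ?_ (card_range ▸ dvd_card_gal_F) ?_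
  · rintro _ ⟨σ, rfl⟩ i j
    rw [Bool.eq_iff_iff, ← he, ← he, e_action, e_action, isCollinear_galActionHom_iff]
  · obtain ⟨σ, hσ⟩ := exists_sign_galActionHom_eq_neg_one
    exact ⟨action σ, ⟨σ, rfl⟩, (Equiv.Perm.sign_permCongr e.symm _).trans hσ⟩

end GaloisGroup

end BelyiDegree85

theorem belyi_deg85_stmt17 :
    F.natDegree = 85 ∧ Irreducible F ∧ Nat.card F.Gal = 1958400 :=
  ⟨BelyiDegree85.natDegree_F, BelyiDegree85.irreducible_F, BelyiDegree85.natCard_gal_F⟩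
end
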